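/- Let G be a convex triangular grid, B' ⊆ B(G) a set of boundary edges, T a set of little triangles of G, and F = B' ∪ ⋃_{Δ∈T} E(Δ) (where E(Δ) denotes the three edges of the little triangle Δ). Let h₀ : F → ℤ. If the polyhedron C(G,h₀) is nonempty, then it contains an integer point, i.e., there is an integer concave cocirculation h in G with h(e)=h₀(e) for all e ∈ F. -/

import Mathlib

open scoped BigOperators

attribute [local instance] Classical.propDecidable

noncomputable section

/-- Points of the plane. -/
abbrev Pt : Type := ℝ × ℝ

/-- Directed edges: ordered pairs of points. -/
abbrev Ed : Type := Pt × Pt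

/-- The three generating vectors ξ₁ = (1,0), ξ₂ = (−1/2, √3/2), ξ₃ = (−1/2, −√3/2). -/
noncomputable def xiv : Fin 3 → Pt
  | 0 => ((1 : ℝ), (0 : ℝ))
  | 1 => (-(1 / 2 : ℝ), Real.sqrt 3 / 2)
  | 2 => (-(1 / 2 : ℝ), -(Real.sqrt 3 / 2))

/-- A little (lattice) triangle of the triangular grid, given by its base point and
its orientation (`up = true` for an upward triangle). -/
structure GridTriangle : Type where
  base : Pt
  up : Bool

noncomputable def GridTriangle.v0 (T : GridTriangle) : Pt := T.base
noncomputable def GridTriangle.v1 (T : GridTriangle) : Pt := T.base + xiv 0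
noncomputable def GridTriangle.v2 (T : GridTriangle) : Pt :=
  if T.up then T.base + xiv 0 + xiv 1 else T.base + xiv 0 + xiv 2

/-- The three directed edges of the 3-circuit surrounding a little triangle;
each has direction ξ₁, ξ₂ or ξ₃. -/
noncomputable def GridTriangle.e0 (T : GridTriangle) : Ed := (T.v0, T.v1)
noncomputable def GridTriangle.e1 (T : GridTriangle) : Ed := (T.v1, T.v2)
noncomputable def GridTriangle.e2 (T : GridTriangle) : Ed := (T.v2, T.v0)

noncomputable def GridTriangle.edgeFinset (T : GridTriangle) : Finset Ed := {T.e0, T.e1, T.e2}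

/-- The closed region spanned by a little triangle. -/
noncomputable def GridTriangle.region (T : GridTriangle) : Set Pt :=
  convexHull ℝ {T.v0, T.v1, T.v2}

/-- Vectors of the lattice generated by ξ₁ and ξ₂. -/
def IsLatticeVec (p : Pt) : Prop := ∃ m n : ℤ, p = (m : ℝ) • xiv 0 + (n : ℝ) • xiv 1

/-- A convex triangular grid: a finite nonempty set of little triangles of a common
translate of the triangular lattice whose union is a convex polygon.  (Its vertices,
edges, bounded faces and boundary are then those of the planar digraph formed by the
edges of the little triangles.) -/
structure ConvexGrid : Type where
  tris : Finset GridTriangle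
  nonempty : tris.Nonempty
  aligned : ∀ T ∈ tris, ∀ T' ∈ tris, IsLatticeVec (T.base - T'.base)
  convex : Convex ℝ (⋃ T ∈ tris, GridTriangle.region T)

/-- The region R(G) spanned by the grid. -/
noncomputable def ConvexGrid.region (G : ConvexGrid) : Set Pt :=
  ⋃ T ∈ G.tris, GridTriangle.region T

/-- The (directed) edge set E(G) of the grid. -/
noncomputable def ConvexGrid.edges (G : ConvexGrid) : Finset Ed :=
  G.tris.biUnion GridTriangle.edgeFinset

/-- The boundary edges B(G): edges lying in exactly one little triangle. -/
noncomputable def ConvexGrid.boundary (G : ConvexGrid) : Finset Ed :=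
  G.edges.filter fun e => (G.tris.filter fun T => e ∈ T.edgeFinset).card = 1

/-- A cocirculation: `h(e)+h(e')+h(e'')=0` around each little triangle. -/
def IsCocirculation (G : ConvexGrid) (h : Ed → ℝ) : Prop :=
  ∀ T ∈ G.tris, h T.e0 + h T.e1 + h T.e2 = 0

/-- `g` coincides with an affine function on `S`. -/
def AffineOn (g : Pt → ℝ) (S : Set Pt) : Prop :=
  ∃ φ : Pt →ᵃ[ℝ] ℝ, ∀ x ∈ S, g x = φ x

/-- A concave cocirculation: a cocirculation induced by a concave function on R(G)
which is affinely linear within each little triangle. -/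
def IsConcaveCocirculation (G : ConvexGrid) (h : Ed → ℝ) : Prop :=
  IsCocirculation G h ∧
  ∃ g : Pt → ℝ, ConcaveOn ℝ G.region g ∧ (∀ T ∈ G.tris, AffineOn g T.region) ∧
    ∀ e ∈ G.edges, h e = g e.2 - g e.1

/-- The polyhedron C(G,h₀) of concave cocirculations agreeing with h₀ on F. -/
def CC (G : ConvexGrid) (F : Set Ed) (h₀ : Ed → ℝ) : Set (Ed → ℝ) :=
  {h | IsConcaveCocirculation G h ∧ ∀ e ∈ F, h e = h₀ e}

/-- `h` is a vertex (extreme point) of the set `C` of cocirculations, regarded as a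
subset of ℝ^{E(G)} (only the coordinates on the edges of `G` matter). -/
def IsVertexOf (G : ConvexGrid) (C : Set (Ed → ℝ)) (h : Ed → ℝ) : Prop :=
  h ∈ C ∧ ∀ h₁ ∈ C, ∀ h₂ ∈ C,
    (∀ e ∈ G.edges, h e = (h₁ e + h₂ e) / 2) → ∀ e ∈ G.edges, h₁ e = h₂ e

/-!
In homogeneous lattice coordinates a concave cocirculation is the gradient of a function `g` which
is supermodular along unit rhombi.  The functions with the prescribed integral increments, and with
suitable integral bounds on the others, form a compact polytope.  A maximiser in it of a strictly
convex functional which increases with the values is rigid: it can be perturbed neither in a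
nonnegative direction nor back and forth in a reversible one.

Cut the polygon into the tiles on which a rigid `g` is affine, and call a side of a tile fractional
if the increments of `g` along it are not integral.  A function built on each tile from the lengths
of its fractional sides is a nonnegative perturbation of `g`; by rigidity it vanishes, so no tile
with a fractional side has an interior lattice point and all fractional sides have length one.
The shapes of the remaining tiles are so restricted that every fractional side can be continued at
both of its ends: these sides form the edges of a network without dead ends, which carries a nonzero
flow.  A flow which is conserved on the tiles integrates to a function which is affine on each tile,
hence to a reversible perturbation of `g`.  So there are no fractional sides, and all increments are
integral.
-/

/-- Homogeneous integer coordinates on the triangular lattice: two triples represent the same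
lattice point when they differ by a multiple of `(1, 1, 1)`. -/
abbrev TriLattice : Type := Fin 3 → ℤ

namespace TriLattice

/-- The coordinate vectors of `TriLattice`, which represent the three edge directions. -/
def unit (i : Fin 3) : TriLattice := fun l => if l = i then 1 else 0

/-- The multiples of `(1, 1, 1)`, which represent the zero vector of the lattice. -/
def diag (n : ℤ) : TriLattice := fun _ => n

lemma unit_self (i : Fin 3) : unit i i = 1 := by simp [unit]

lemma unit_of_ne {i l : Fin 3} (h : l ≠ i) : unit i l = 0 := by simp [unit, h]

lemma diag_apply (n : ℤ) (l : Fin 3) : diag n l = n := rfl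

lemma diag_zero : diag 0 = 0 := rfl

lemma diag_add (m n : ℤ) : diag (m + n) = diag m + diag n := rfl

section Indices

variable {i j k : Fin 3}

lemma exists_third (hij : i ≠ j) : ∃ k, i ≠ k ∧ j ≠ k := by
  obtain ⟨k, hk⟩ := Finset.exists_mem_notMem_of_card_lt_card
    (s := {i, j}) (t := Finset.univ) (by simp [Finset.card_pair hij])
  exact ⟨k, by aesop⟩

variable (hij : i ≠ j) (hik : i ≠ k) (hjk : j ≠ k)
include hij hik hjk

lemma eq_or_eq_or_eq (l : Fin 3) : l = i ∨ l = j ∨ l = k := by omega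

lemma forall_iff {p : Fin 3 → Prop} : (∀ l, p l) ↔ p i ∧ p j ∧ p k := by
  refine ⟨fun h => ⟨h i, h j, h k⟩, fun ⟨hi, hj, hk⟩ l => ?_⟩
  rcases eq_or_eq_or_eq hij hik hjk l with rfl | rfl | rfl <;> assumption

lemma ext_iff {p q : TriLattice} : p = q ↔ p i = q i ∧ p j = q j ∧ p k = q k := by
  rw [funext_iff, forall_iff hij hik hjk]

lemma sum_eq {M : Type*} [AddCommMonoid M] (x : Fin 3 → M) : ∑ l, x l = x i + x j + x k := by
  have huniv : (Finset.univ : Finset (Fin 3)) = {i, j, k} := by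
    ext l
    simpa using eq_or_eq_or_eq hij hik hjk l
  rw [huniv, Finset.sum_insert (by simp [hij, hik]), Finset.sum_pair hjk, add_assoc]

lemma unit_values :
    unit i i = 1 ∧ unit i j = 0 ∧ unit i k = 0 ∧ unit j i = 0 ∧ unit j j = 1 ∧ unit j k = 0 :=
  ⟨unit_self i, unit_of_ne hij.symm, unit_of_ne hik.symm, unit_of_ne hij, unit_self j,
    unit_of_ne hjk.symm⟩

lemma unit_add_unit_add_unit : unit i + unit j + unit k = diag 1 := by
  simp [ext_iff hij hik hjk, unit, diag, hij, hik, hjk, hij.symm, hik.symm, hjk.symm]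

end Indices

/-- A little triangle of the vertex set `V`, with successive vertices `u`, `u + unit i` and
`u + unit i + unit j`; the third edge closes up because it leads to `u + diag 1`. -/
structure IsTriangle (V : Set TriLattice) (u : TriLattice) (i j : Fin 3) : Prop where
  ne : i ≠ j
  base_mem : u ∈ V
  mid_mem : u + unit i ∈ V
  top_mem : u + unit i + unit j ∈ V

/-- The vertex sets of the full-dimensional lattice-convex polygons of the triangular grid.  For a
set invariant under `diag`, closure under `⊓` and `⊔` says that it is cut out by bounds on the
differences of coordinates (`IsTriRegion.mem_iff`). -/
structure IsTriRegion (V : Set TriLattice) : Prop where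
  add_diag_mem : ∀ p n, p ∈ V → p + diag n ∈ V
  inf_mem : ∀ p q, p ∈ V → q ∈ V → p ⊓ q ∈ V
  sup_mem : ∀ p q, p ∈ V → q ∈ V → p ⊔ q ∈ V
  exists_triangle : ∃ u i j, IsTriangle V u i j
  finite_slice : {p | p ∈ V ∧ p 2 = 0}.Finite

/-- The support numbers of a region: the largest values of the differences of coordinates. -/
def maxDiff (Q : Set TriLattice) (i j : Fin 3) : ℤ := sSup ((fun v : TriLattice => v i - v j) '' Q)

/-- The length of the side of a region on which the `i`-th coordinate minus the `j`-th one is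
maximal; this side is parallel to `unit k`, where `k` is the third index. -/
def sideLength (Q : Set TriLattice) (i j k : Fin 3) : ℤ :=
  maxDiff Q i k + maxDiff Q k j - maxDiff Q i j

/-- The point of smallest `k`-th coordinate on the side of a region on which the `i`-th
coordinate minus the `j`-th one is maximal, normalised to have `j`-th coordinate `0`. -/
def sideStart (Q : Set TriLattice) (i j k : Fin 3) : TriLattice := fun l =>
  if l = i then maxDiff Q i j else if l = j then 0 else maxDiff Q i j - maxDiff Q i k

section SideStart

variable (Q : Set TriLattice) {i j k : Fin 3}

lemma sideStart_fst : sideStart Q i j k i = maxDiff Q i j := by simp [sideStart]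

lemma sideStart_snd (hij : i ≠ j) : sideStart Q i j k j = 0 := by simp [sideStart, hij.symm]

lemma sideStart_thd (hik : i ≠ k) (hjk : j ≠ k) :
    sideStart Q i j k k = maxDiff Q i j - maxDiff Q i k := by
  simp [sideStart, hik.symm, hjk.symm]

end SideStart

namespace IsTriRegion

variable {Q : Set TriLattice} {i j k : Fin 3}

lemma nonempty (hQ : IsTriRegion Q) : Q.Nonempty :=
  let ⟨u, _, _, h⟩ := hQ.exists_triangle
  ⟨u, h.base_mem⟩

lemma bddAbove_image_sub (hQ : IsTriRegion Q) (i j : Fin 3) :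
    BddAbove ((fun v : TriLattice => v i - v j) '' Q) := by
  refine ((hQ.finite_slice.image fun v => v i - v j).bddAbove).mono ?_
  rintro _ ⟨v, hv, rfl⟩
  exact ⟨v + diag (-v 2), ⟨hQ.add_diag_mem _ _ hv, by simp [diag]⟩, by simp [diag]⟩

lemma sub_le_maxDiff (hQ : IsTriRegion Q) {v : TriLattice} (hv : v ∈ Q) (i j : Fin 3) :
    v i - v j ≤ maxDiff Q i j :=
  le_csSup (hQ.bddAbove_image_sub i j) ⟨v, hv, rfl⟩

lemma exists_sub_eq_maxDiff (hQ : IsTriRegion Q) (i j : Fin 3) :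
    ∃ v ∈ Q, v i - v j = maxDiff Q i j :=
  Int.csSup_mem (hQ.nonempty.image _) (hQ.bddAbove_image_sub i j)

lemma maxDiff_self (hQ : IsTriRegion Q) (i : Fin 3) : maxDiff Q i i = 0 := by
  obtain ⟨v, -, hv⟩ := hQ.exists_sub_eq_maxDiff i i
  rw [← hv, sub_self]

lemma maxDiff_le_add (hQ : IsTriRegion Q) (i j k : Fin 3) :
    maxDiff Q i j ≤ maxDiff Q i k + maxDiff Q k j := by
  obtain ⟨v, hv, h⟩ := hQ.exists_sub_eq_maxDiff i j
  linarith [hQ.sub_le_maxDiff hv i k, hQ.sub_le_maxDiff hv k j]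

lemma sideLength_nonneg (hQ : IsTriRegion Q) (i j k : Fin 3) : 0 ≤ sideLength Q i j k :=
  sub_nonneg.2 (hQ.maxDiff_le_add i j k)

lemma one_le_maxDiff_add_maxDiff (hQ : IsTriRegion Q) (hij : i ≠ j) :
    1 ≤ maxDiff Q i j + maxDiff Q j i := by
  obtain ⟨u, a, b, hab, h₀, h₁, h₂⟩ := hQ.exists_triangle
  have bounds := fun v (hv : v ∈ Q) =>
    And.intro (hQ.sub_le_maxDiff hv i j) (hQ.sub_le_maxDiff hv j i)
  have b₀ := bounds _ h₀
  have b₁ := bounds _ h₁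
  have b₂ := bounds _ h₂
  simp only [Pi.add_apply, unit] at b₁ b₂
  have hcases : (a = i ∨ a = j) ∨ (b = i ∨ b = j) := by omega
  grind

theorem mem_iff (hQ : IsTriRegion Q) {z : TriLattice} :
    z ∈ Q ↔ ∀ i j, z i - z j ≤ maxDiff Q i j := by
  refine ⟨hQ.sub_le_maxDiff, fun h => ?_⟩
  have exists_touching : ∀ i j, ∃ p ∈ Q, p i = z i ∧ z j ≤ p j := by
    intro i j
    obtain ⟨v, hv, hvmax⟩ := hQ.exists_sub_eq_maxDiff j i
    refine ⟨v + diag (z i - v i), hQ.add_diag_mem _ _ hv, by simp [diag], ?_⟩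
    have := h j i
    simp only [Pi.add_apply, diag_apply]
    omega
  choose p hp hpi hpj using exists_touching
  have exists_above : ∀ i, ∃ q ∈ Q, q i = z i ∧ z ≤ q := by
    intro i
    refine ⟨p i 0 ⊔ p i 1 ⊔ p i 2, hQ.sup_mem _ _ (hQ.sup_mem _ _ (hp _ _) (hp _ _)) (hp _ _),
      by simp [hpi], Fin.forall_fin_succ.2 ⟨(hpj i 0).trans (by simp), Fin.forall_fin_two.2
        ⟨(hpj i 1).trans (by simp), (hpj i 2).trans (by simp)⟩⟩⟩
  choose q hq hqi hqz using exists_above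
  have hz : z = q 0 ⊓ q 1 ⊓ q 2 := by
    refine le_antisymm (le_inf (le_inf (hqz 0) (hqz 1)) (hqz 2)) (Fin.forall_fin_succ.2 ⟨?_,
      Fin.forall_fin_two.2 ⟨?_, ?_⟩⟩)
    exacts [le_trans (by simp) (hqi 0).le, le_trans (by simp) (hqi 1).le,
      le_trans (by simp) (hqi 2).le]
  rw [hz]
  exact hQ.inf_mem _ _ (hQ.inf_mem _ _ (hq _) (hq _)) (hq _)

lemma mem_iff_of_ne (hQ : IsTriRegion Q) (hij : i ≠ j) (hik : i ≠ k) (hjk : j ≠ k)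
    {z : TriLattice} :
    z ∈ Q ↔ z i - z j ≤ maxDiff Q i j ∧ z j - z i ≤ maxDiff Q j i ∧ z i - z k ≤ maxDiff Q i k ∧
      z k - z i ≤ maxDiff Q k i ∧ z j - z k ≤ maxDiff Q j k ∧ z k - z j ≤ maxDiff Q k j := by
  simp only [hQ.mem_iff, forall_iff hij hik hjk, hQ.maxDiff_self, sub_self, le_refl, true_and,
    and_true]
  tauto

lemma sideStart_add_mem (hQ : IsTriRegion Q) (hij : i ≠ j) (hik : i ≠ k) (hjk : j ≠ k) {t : ℤ}
    (ht : 0 ≤ t) (ht' : t ≤ sideLength Q i j k) : sideStart Q i j k + t • unit k ∈ Q := by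
  rw [hQ.mem_iff_of_ne hij hik hjk]
  simp only [Pi.add_apply, Pi.smul_apply, smul_eq_mul, sideStart_fst, sideStart_snd Q hij,
    sideStart_thd Q hik hjk, unit_self, unit_of_ne hik, unit_of_ne hjk]
  unfold sideLength at ht'
  have := hQ.one_le_maxDiff_add_maxDiff hij
  have := hQ.one_le_maxDiff_add_maxDiff hik
  have := hQ.maxDiff_le_add j k i
  have := hQ.maxDiff_le_add k j i
  have := hQ.maxDiff_le_add i j k
  have := hQ.maxDiff_le_add i k j
  have := hQ.maxDiff_le_add j i k
  omega

lemma sideStart_mem (hQ : IsTriRegion Q) (hij : i ≠ j) (hik : i ≠ k) (hjk : j ≠ k) :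
    sideStart Q i j k ∈ Q := by
  simpa using hQ.sideStart_add_mem hij hik hjk le_rfl (hQ.sideLength_nonneg i j k)

/-- A step in direction `unit m` can only be blocked by a bound on `r m - r l`, and since all widths
are positive not every candidate direction is blocked. -/
theorem exists_add_unit_mem (hQ : IsTriRegion Q) {r p : TriLattice} (hr : r ∈ Q) (hp : p ∈ Q)
    (hrp : r < p) : ∃ m, r m < p m ∧ r + unit m ∈ Q := by
  by_contra! blocked
  obtain ⟨hle, m, hm⟩ := Pi.lt_def.1 hrp
  have b₀ := blocked 0
  have b₁ := blocked 1
  have b₂ := blocked 2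
  simp only [hQ.mem_iff_of_ne (i := 0) (j := 1) (k := 2) (by simp) (by simp) (by simp),
    Pi.add_apply, unit] at hr hp b₀ b₁ b₂
  have := hQ.one_le_maxDiff_add_maxDiff (i := 0) (j := 1) (by simp)
  have := hQ.one_le_maxDiff_add_maxDiff (i := 0) (j := 2) (by simp)
  have := hQ.one_le_maxDiff_add_maxDiff (i := 1) (j := 2) (by simp)
  have := hQ.maxDiff_le_add 0 1 2
  have := hQ.maxDiff_le_add 1 0 2
  have := hle 0
  have := hle 1
  have := hle 2
  simp only [Fin.isValue, Fin.reduceEq, ↓reduceIte, one_ne_zero, zero_ne_one, add_zero,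
    tsub_le_iff_right, Order.add_one_le_iff, not_and, not_le, not_lt] at b₀ b₁ b₂
  fin_cases m <;> simp at hm <;> omega

lemma exists_isTriangle_of_edge (hQ : IsTriRegion Q) {v : TriLattice} (hv : v ∈ Q)
    (hi : v + unit i ∈ Q) : ∃ j, IsTriangle Q v i j := by
  have hlt : v + unit i < v + diag 1 := by
    refine add_lt_add_right (Pi.lt_def.2 ⟨fun l => ?_, i + 1, ?_⟩) v
    · simp only [unit, diag]
      split_ifs <;> simp
    · simp [unit, diag]
  obtain ⟨j, hj, hjQ⟩ := hQ.exists_add_unit_mem hi (hQ.add_diag_mem v 1 hv) hlt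
  refine ⟨j, ?_, hv, hi, hjQ⟩
  rintro rfl
  simp [unit, diag] at hj

lemma exists_isTriangle (hQ : IsTriRegion Q) {v : TriLattice} (hv : v ∈ Q) :
    ∃ i j, IsTriangle Q v i j := by
  have hlt : v < v + diag 1 := lt_add_of_pos_right v (Pi.lt_def.2 ⟨fun _ => by simp [diag], 0, by
    simp [diag]⟩)
  obtain ⟨i, -, hi⟩ := hQ.exists_add_unit_mem hv (hQ.add_diag_mem v 1 hv) hlt
  exact ⟨i, hQ.exists_isTriangle_of_edge hv hi⟩

lemma add_unit_add_unit_mem (hQ : IsTriRegion Q) {p : TriLattice} (hij : i ≠ j)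
    (hi : p + unit i ∈ Q) (hj : p + unit j ∈ Q) : p + unit i + unit j ∈ Q := by
  have h : p + unit i + unit j = (p + unit i) ⊔ (p + unit j) := by
    ext l
    simp only [Pi.add_apply, Pi.sup_apply, unit]
    split_ifs <;> omega
  exact h ▸ hQ.sup_mem _ _ hi hj

end IsTriRegion

/-- The index different from the two distinct indices `i` and `j`. -/
def thirdIndex (i j : Fin 3) : Fin 3 := -(i + j)

lemma thirdIndex_eq {i j k : Fin 3} (hij : i ≠ j) (hik : i ≠ k) (hjk : j ≠ k) :
    thirdIndex i j = k := by
  fin_cases i <;> fin_cases j <;> fin_cases k <;> first | rfl | contradiction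

/-- The sides of the region `Q` through the point `v`; the side on which the `i`-th coordinate minus
the `j`-th one is maximal is labelled `(i, j)`. -/
def touchedSides (Q : Set TriLattice) (v : TriLattice) : Finset (Fin 3 × Fin 3) :=
  Finset.univ.offDiag.filter fun s => v s.1 - v s.2 = maxDiff Q s.1 s.2

/-- The length of the side labelled `s`, multiplied by the weight `ν` of its direction. -/
def sideWeight (Q : Set TriLattice) (ν : Fin 3 → ℤ) (s : Fin 3 × Fin 3) : ℤ :=
  ν (thirdIndex s.1 s.2) * sideLength Q s.1 s.2 (thirdIndex s.1 s.2)

/-- The weighted perimeter of the region `Q`. -/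
def perimeter (Q : Set TriLattice) (ν : Fin 3 → ℤ) : ℤ :=
  ∑ s ∈ Finset.univ.offDiag, sideWeight Q ν s

/-- The function on the tile `Q` added to the tiled function in order to increase it: the weighted
perimeter at interior points, twice the weighted length of the side at interior points of a side,
and zero at the corners. -/
def inflation (Q : Set TriLattice) (ν : Fin 3 → ℤ) (v : TriLattice) : ℤ :=
  if touchedSides Q v = ∅ then perimeter Q ν
  else if (touchedSides Q v).card = 1 then 2 * ∑ s ∈ touchedSides Q v, sideWeight Q ν s
  else 0

section Inflation

variable {Q : Set TriLattice} {ν : Fin 3 → ℤ} {v : TriLattice} {i j k : Fin 3}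

lemma mem_touchedSides :
    (i, j) ∈ touchedSides Q v ↔ i ≠ j ∧ v i - v j = maxDiff Q i j := by
  simp [touchedSides]

lemma IsTriRegion.sub_lt_maxDiff (hQ : IsTriRegion Q) (hv : v ∈ Q) (hij : i ≠ j)
    (h : (i, j) ∉ touchedSides Q v) : v i - v j < maxDiff Q i j :=
  lt_of_le_of_ne (hQ.sub_le_maxDiff hv i j) fun heq => h (mem_touchedSides.2 ⟨hij, heq⟩)

lemma sideWeight_eq (hij : i ≠ j) (hik : i ≠ k) (hjk : j ≠ k) :
    sideWeight Q ν (i, j) = ν k * sideLength Q i j k := by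
  rw [sideWeight, thirdIndex_eq hij hik hjk]

lemma sideWeight_eq_mul_slack (p : TriLattice) (hij : i ≠ j) (hik : i ≠ k) (hjk : j ≠ k) :
    sideWeight Q ν (i, j) = ν k * (maxDiff Q i k - (p i - p k) + (maxDiff Q k j - (p k - p j)) -
      (maxDiff Q i j - (p i - p j))) := by
  rw [sideWeight_eq hij hik hjk, sideLength]
  ring

lemma perimeter_eq (hij : i ≠ j) (hik : i ≠ k) (hjk : j ≠ k) :
    perimeter Q ν = sideWeight Q ν (i, j) + sideWeight Q ν (j, i) + sideWeight Q ν (i, k) +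
      sideWeight Q ν (k, i) + sideWeight Q ν (j, k) + sideWeight Q ν (k, j) := by
  have hpairs : (Finset.univ : Finset (Fin 3)).offDiag =
      {(i, j), (j, i), (i, k), (k, i), (j, k), (k, j)} := by
    ext ⟨a, b⟩
    rcases eq_or_eq_or_eq hij hik hjk a with rfl | rfl | rfl <;>
      rcases eq_or_eq_or_eq hij hik hjk b with rfl | rfl | rfl <;>
      simp [hij, hik, hjk, hij.symm, hik.symm, hjk.symm]
  rw [perimeter, hpairs]
  repeat rw [Finset.sum_insert (by simp; omega)]
  rw [Finset.sum_singleton]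
  ring

lemma inflation_of_touchedSides_eq_empty (h : touchedSides Q v = ∅) :
    inflation Q ν v = perimeter Q ν := by
  rw [inflation, if_pos h]

lemma inflation_of_touchedSides_eq_singleton {s : Fin 3 × Fin 3} (h : touchedSides Q v = {s}) :
    inflation Q ν v = 2 * sideWeight Q ν s := by
  simp [inflation, h]

lemma inflation_of_touchedSides_nontrivial (h : (touchedSides Q v).Nontrivial) :
    inflation Q ν v = 0 := by
  rw [inflation, if_neg h.nonempty.ne_empty, if_neg (Finset.one_lt_card_iff_nontrivial.2 h).ne']

lemma touchedSides_cases (Q : Set TriLattice) (v : TriLattice) :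
    touchedSides Q v = ∅ ∨ (∃ i j, i ≠ j ∧ touchedSides Q v = {(i, j)}) ∨
      (touchedSides Q v).Nontrivial := by
  rcases (touchedSides Q v).eq_empty_or_nonempty with h | h
  · exact Or.inl h
  rcases h.exists_eq_singleton_or_nontrivial with ⟨⟨i, j⟩, h⟩ | h
  · exact Or.inr (Or.inl ⟨i, j, (mem_touchedSides.1 (h ▸ Finset.mem_singleton_self _)).1, h⟩)
  · exact Or.inr (Or.inr h)

lemma sideWeight_nonneg (hQ : IsTriRegion Q) (hν : ∀ l, 0 ≤ ν l) (s : Fin 3 × Fin 3) :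
    0 ≤ sideWeight Q ν s :=
  mul_nonneg (hν _) (hQ.sideLength_nonneg _ _ _)

lemma inflation_nonneg (hQ : IsTriRegion Q) (hν : ∀ l, 0 ≤ ν l) (v : TriLattice) :
    0 ≤ inflation Q ν v := by
  have hsum := fun t : Finset (Fin 3 × Fin 3) =>
    Finset.sum_nonneg fun s (_ : s ∈ t) => sideWeight_nonneg hQ hν s
  rw [inflation]
  split_ifs
  · exact hsum _
  · exact mul_nonneg zero_le_two (hsum _)
  · rfl

lemma inflation_eq_zero_of_touches (hij : i ≠ j) (hik : i ≠ k) (hjk : j ≠ k)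
    (h : v i - v j = maxDiff Q i j) (hk : ν k = 0) : inflation Q ν v = 0 := by
  have hmem : (i, j) ∈ touchedSides Q v := mem_touchedSides.2 ⟨hij, h⟩
  by_cases hsing : touchedSides Q v = {(i, j)}
  · rw [inflation_of_touchedSides_eq_singleton hsing, sideWeight_eq hij hik hjk, hk, zero_mul,
      mul_zero]
  · exact inflation_of_touchedSides_nontrivial
      ((Finset.nontrivial_iff_ne_singleton hmem).2 hsing)

lemma inflation_eq_zero_of_forall (hν : ∀ l, ν l = 0) (v : TriLattice) : inflation Q ν v = 0 := by
  simp [inflation, perimeter, sideWeight, hν]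

end Inflation

/-- The value of the inflation of a tile of weighted perimeter `S` at a point which touches at most
the sides of weights `X`, `Y` and `Z`, where `x`, `y` and `z` are its distances to these sides. -/
def rimValue (S x y z X Y Z : ℤ) : ℤ :=
  if x = 0 then if y = 0 ∨ z = 0 then 0 else 2 * X
  else if y = 0 then if z = 0 then 0 else 2 * Y
  else if z = 0 then 2 * Z
  else S

lemma inflation_eq_rimValue {Q : Set TriLattice} {v : TriLattice} (ν : Fin 3 → ℤ)
    {s t u : Fin 3 × Fin 3} (hst : s ≠ t) (hsu : s ≠ u) (htu : t ≠ u)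
    (hs : s.1 ≠ s.2) (ht : t.1 ≠ t.2) (hu : u.1 ≠ u.2) (h : touchedSides Q v ⊆ {s, t, u}) :
    inflation Q ν v = rimValue (perimeter Q ν)
      (maxDiff Q s.1 s.2 - (v s.1 - v s.2)) (maxDiff Q t.1 t.2 - (v t.1 - v t.2))
      (maxDiff Q u.1 u.2 - (v u.1 - v u.2))
      (sideWeight Q ν s) (sideWeight Q ν t) (sideWeight Q ν u) := by
  have touches_iff : ∀ {r : Fin 3 × Fin 3}, r.1 ≠ r.2 →
      (maxDiff Q r.1 r.2 - (v r.1 - v r.2) = 0 ↔ r ∈ touchedSides Q v) := fun {r} hr => by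
    rw [← Prod.mk.eta (p := r), mem_touchedSides, sub_eq_zero, eq_comm]
    simp [hr]
  have htouched : touchedSides Q v = ({s, t, u} : Finset _).filter (· ∈ touchedSides Q v) := by
    rw [Finset.filter_mem_eq_inter, Finset.inter_eq_right.2 h]
  simp only [rimValue, touches_iff hs, touches_iff ht, touches_iff hu, inflation]
  by_cases hsv : s ∈ touchedSides Q v <;> by_cases htv : t ∈ touchedSides Q v <;>
    by_cases huv : u ∈ touchedSides Q v <;>
    simp only [Finset.filter_insert, Finset.filter_singleton, hsv, htv, huv, if_true, if_false]
      at htouched <;>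
    simp [htouched, hst, hsu, htu, hst.symm, hsu.symm, htu.symm]

/-- Here `a` to `f` are the distances from a point to the six sides, `A` to `F` are the weights of
these sides, and the factors in brackets are their lengths.  The distances to the sides which any
of the four points of a rhombus may touch are the arguments of `rimValue`. -/
lemma rimValue_supermodular {a b c d e f x y z A B C D E F S : ℤ}
    (ha : 1 ≤ a) (hb : 1 ≤ b) (hc : 1 ≤ c) (hd : 0 ≤ d) (he : 1 ≤ e) (hf : 0 ≤ f)
    (hA : A = z * (c + f - a)) (hB : B = z * (e + d - b)) (hC : C = y * (a + e - c))
    (hD : D = y * (f + b - d)) (hE : E = x * (b + c - e)) (hF : F = x * (d + a - f))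
    (hS : S = A + B + C + D + E + F) (hA' : 0 ≤ c + f - a) (hB' : 0 ≤ e + d - b)
    (hC' : 0 ≤ a + e - c) (hD' : 0 ≤ f + b - d) (hE' : 0 ≤ b + c - e) (hF' : 0 ≤ d + a - f)
    (hx : x = 0 ∨ x = 1) (hy : y = 0 ∨ y = 1) (hz : z = 0 ∨ z = 1) (hxyz : x + y + z ≠ 1) :
    rimValue S (a - 1) (c - 1) f A C F + rimValue S (b - 1) (e - 1) d B E D ≤
      rimValue S a d f A D F + rimValue S a (c - 1) (e - 1) A C E := by
  subst hS hA hB hC hD hE hF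
  have ha₀ : a ≠ 0 := by omega
  rcases hx with rfl | rfl <;> rcases hy with rfl | rfl <;> rcases hz with rfl | rfl <;>
    simp only [rimValue, zero_mul, one_mul, sub_eq_zero, ha₀, if_false, mul_zero, add_zero,
      zero_add, ite_self, le_refl, ne_eq, not_true_eq_false] at hxyz ⊢ <;>
    rcases eq_or_ne d 0 with rfl | hd <;> rcases eq_or_ne f 0 with rfl | hf <;>
    rcases eq_or_ne c 1 with rfl | hc <;> rcases eq_or_ne e 1 with rfl | he <;>
    simp only [*, true_or, or_true, if_true, if_false, ite_self, or_self] <;>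
    (try split_ifs) <;> linarith

/-- Supermodularity of `f` along the unit rhombi of `V`, each of which consists of two little
triangles; this is the concavity of the piecewise linear extension of `f`. -/
def RhombusConcave (V : Set TriLattice) (f : TriLattice → ℝ) : Prop :=
  ∀ p i j, i ≠ j → p ∈ V → p + unit i ∈ V → p + unit j ∈ V → p + unit i + unit j ∈ V →
    f (p + unit i) + f (p + unit j) ≤ f p + f (p + unit i + unit j)

lemma touchedSides_subset {Q : Set TriLattice} {v : TriLattice} {r s t : Fin 3 × Fin 3}
    (h : ∀ i j, i ≠ j → (i, j) ≠ r → (i, j) ≠ s → (i, j) ≠ t → v i - v j < maxDiff Q i j) :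
    touchedSides Q v ⊆ {r, s, t} := by
  rintro ⟨i, j⟩ hmem
  obtain ⟨hij, hmax⟩ := mem_touchedSides.1 hmem
  simp only [Finset.mem_insert, Finset.mem_singleton]
  by_contra! hne
  exact (h i j hij hne.1 hne.2.1 hne.2.2).ne hmax

lemma IsTriRegion.touchedSides_subset_of_rhombus {Q : Set TriLattice} (hQ : IsTriRegion Q)
    {p : TriLattice} {i j k : Fin 3} (hij : i ≠ j) (hik : i ≠ k) (hjk : j ≠ k) (h₀ : p ∈ Q)
    (hi : p + unit i ∈ Q) (hj : p + unit j ∈ Q) :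
    touchedSides Q p ⊆ {(i, j), (k, i), (k, j)} ∧
      touchedSides Q (p + unit i) ⊆ {(i, j), (i, k), (k, j)} ∧
      touchedSides Q (p + unit j) ⊆ {(j, i), (j, k), (k, i)} ∧
      touchedSides Q (p + unit i + unit j) ⊆ {(i, j), (i, k), (j, k)} := by
  rw [hQ.mem_iff_of_ne hij hik hjk] at h₀ hi hj
  simp only [Pi.add_apply, unit_values hij hik hjk] at h₀ hi hj
  refine ⟨touchedSides_subset ?_, touchedSides_subset ?_, touchedSides_subset ?_,
    touchedSides_subset ?_⟩ <;>
  · simp only [forall_iff hij hik hjk, Pi.add_apply, unit_values hij hik hjk]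
    simp
    omega

theorem IsTriRegion.rhombusConcave_inflation {Q : Set TriLattice} (hQ : IsTriRegion Q)
    {ν : Fin 3 → ℤ} (hν : ∀ l, ν l = 0 ∨ ν l = 1) (hsum : ∑ l, ν l ≠ 1) :
    RhombusConcave Q fun v => inflation Q ν v := by
  intro p i j hij h₀ hi hj htop
  obtain ⟨k, hik, hjk⟩ := exists_third hij
  obtain ⟨t₀, ti, tj, ttop⟩ := hQ.touchedSides_subset_of_rhombus hij hik hjk h₀ hi hj
  rw [hQ.mem_iff_of_ne hij hik hjk] at h₀ hi hj htop
  simp only [Pi.add_apply, unit_values hij hik hjk] at h₀ hi hj htop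
  rw [sum_eq hij hik hjk] at hsum
  have nonneg := hQ.sideLength_nonneg
  simp only [sideLength] at nonneg
  have key := rimValue_supermodular (a := maxDiff Q i j - (p i - p j))
    (b := maxDiff Q j i - (p j - p i)) (c := maxDiff Q i k - (p i - p k))
    (d := maxDiff Q k i - (p k - p i)) (e := maxDiff Q j k - (p j - p k))
    (f := maxDiff Q k j - (p k - p j)) (by omega) (by omega) (by omega) (by omega) (by omega)
    (by omega)
    (A := sideWeight Q ν (i, j)) (B := sideWeight Q ν (j, i)) (C := sideWeight Q ν (i, k))
    (D := sideWeight Q ν (k, i)) (E := sideWeight Q ν (j, k)) (F := sideWeight Q ν (k, j))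
    (S := perimeter Q ν)
    (sideWeight_eq_mul_slack p hij hik hjk) (sideWeight_eq_mul_slack p hij.symm hjk hik)
    (sideWeight_eq_mul_slack p hik hij hjk.symm) (sideWeight_eq_mul_slack p hik.symm hjk.symm hij)
    (sideWeight_eq_mul_slack p hjk hij.symm hik.symm)
    (sideWeight_eq_mul_slack p hjk.symm hik.symm hij.symm) (perimeter_eq hij hik hjk)
    (by linarith [nonneg i j k]) (by linarith [nonneg j i k]) (by linarith [nonneg i k j])
    (by linarith [nonneg k i j]) (by linarith [nonneg j k i]) (by linarith [nonneg k j i])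
    (hν i) (hν j) (hν k) hsum
  beta_reduce
  rw [inflation_eq_rimValue ν (by simp [*]) (by simp [*]) (by simp [*]) hij hik.symm hjk.symm t₀,
    inflation_eq_rimValue ν (by simp [*]) (by simp [*]) (by simp [*]) hij hik hjk.symm ti,
    inflation_eq_rimValue ν (by simp [*]) (by simp [*]) (by simp [*]) hij.symm hjk hik.symm tj,
    inflation_eq_rimValue ν (by simp [*]) (by simp [*]) (by simp [*]) hij hik hjk ttop]
  simp only [Pi.add_apply, unit_values hij hik hjk]
  norm_cast
  convert key using 3 <;> ring

section RhombusConcave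

variable {V : Set TriLattice} {f : TriLattice → ℝ}

lemma add_unit_le {r p : TriLattice} {m : Fin 3} (hle : r ≤ p) (hm : r m < p m) :
    r + unit m ≤ p := by
  intro l
  rcases eq_or_ne l m with rfl | hl
  · simpa [unit_self] using hm
  · simpa [unit_of_ne hl] using hle l

lemma eq_or_eq_add_unit {a x : TriLattice} {m : Fin 3} (hax : a ≤ x) (hxa : x ≤ a + unit m) :
    x = a ∨ x = a + unit m := by
  rcases (hax m).lt_or_eq with hm | hm
  · exact Or.inr (le_antisymm hxa (add_unit_le hax hm))
  · refine Or.inl (le_antisymm (fun l => ?_) hax)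
    rcases eq_or_ne l m with rfl | hl
    · exact hm.ge
    · simpa [unit_of_ne hl] using hxa l

theorem IsTriRegion.upward_induction (hV : IsTriRegion V) {q : TriLattice} (hq : q ∈ V)
    {p : TriLattice → Prop} (base : p q)
    (step : ∀ r m, r ∈ V → r + unit m ∈ V → r m < q m → r + unit m ≤ q → p (r + unit m) → p r)
    {r : TriLattice} (hr : r ∈ V) (hrq : r ≤ q) : p r := by
  induction hn : (∑ l, (q l - r l)).toNat using Nat.strong_induction_on generalizing r with
  | _ n ih =>
    rcases hrq.eq_or_lt with rfl | hlt
    · exact base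
    obtain ⟨m, hm, hmV⟩ := hV.exists_add_unit_mem hr hq hlt
    have hle := add_unit_le hrq hm
    refine step r m hr hmV hm hle (ih _ ?_ hmV hle rfl)
    have hpos : 0 < ∑ l, (q l - r l) :=
      Finset.sum_pos' (fun l _ => sub_nonneg.2 (hrq l)) ⟨m, Finset.mem_univ m, sub_pos.2 hm⟩
    have hdecr : ∑ l, (q l - (r + unit m) l) = ∑ l, (q l - r l) - 1 := by
      simp only [Pi.add_apply, unit, ← sub_sub, Finset.sum_sub_distrib, Finset.sum_ite_eq',
        Finset.mem_univ, if_true]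
    omega

section Supermodular

variable (hV : IsTriRegion V) (hf : RhombusConcave V f)
include hV hf

lemma RhombusConcave.sub_le_sub {p q : TriLattice} {i : Fin 3} (hp : p ∈ V) (hpi : p + unit i ∈ V)
    (hq : q ∈ V) (hle : p ≤ q) (hi : q i = p i) :
    f (p + unit i) - f p ≤ f (q + unit i) - f q := by
  refine hV.upward_induction hq (p := fun p => p + unit i ∈ V → q i = p i →
    f (p + unit i) - f p ≤ f (q + unit i) - f q) (fun _ _ => le_rfl) ?_ hp hle hpi hi
  intro r m hr hrm hm _ ih hri hi
  have hmi : m ≠ i := by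
    rintro rfl
    exact hm.ne' hi
  have hmid := hV.add_unit_add_unit_mem hmi hrm hri
  have := hf r m i hmi hr hrm hri hmid
  have := ih hmid (by simp [unit_of_ne hmi.symm, hi])
  linarith

theorem RhombusConcave.supermodular {p q : TriLattice} (hp : p ∈ V) (hq : q ∈ V) :
    f p + f q ≤ f (p ⊓ q) + f (p ⊔ q) := by
  refine hV.upward_induction hp (p := fun r => ∀ q ∈ V, r ≤ q → p ⊓ q ≤ r →
    f p + f q ≤ f r + f (p ⊔ q)) (fun q _ hpq _ => by rw [sup_eq_right.2 hpq]) ?_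
    (hV.inf_mem _ _ hp hq) inf_le_left q hq inf_le_right le_rfl
  intro r m hr hrm hm hrmp ih q hq hrq hpq
  have hqm : q m = r m := by
    have := hpq m
    have := hrq m
    simp only [Pi.inf_apply] at *
    omega
  have hsup : q + unit m = q ⊔ (r + unit m) := by
    funext l
    rcases eq_or_ne l m with rfl | hl
    · simp [unit_self, hqm]
    · simpa [unit_of_ne hl] using hrq l
  have hle : p ⊓ (q + unit m) ≤ r + unit m := by
    intro l
    rcases eq_or_ne l m with rfl | hl
    · simp [unit_self, hqm]
    · simpa [unit_of_ne hl] using hpq l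
  have hup : p ⊔ (q + unit m) = p ⊔ q := by
    rw [hsup, ← sup_assoc, sup_eq_left]
    exact hrmp.trans le_sup_left
  have := ih (q + unit m) (hsup ▸ hV.sup_mem _ _ hq hrm) (add_le_add_left hrq _) hle
  have := hf.sub_le_sub hV hr hrm hq hrq hqm
  rw [hup] at *
  linarith

lemma RhombusConcave.le_of_chain {c : ℕ → TriLattice} (hmem : ∀ n, c n ∈ V)
    (hsucc : ∀ n, ∃ m, c (n + 1) = c n + unit m) (hconst : ∀ n, f (c n) = f (c 0)) {N : ℕ}
    {q : TriLattice} (hq : q ∈ V) (h₀ : c 0 ≤ q) (hN : q ≤ c N) : f q ≤ f (c 0) := by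
  have hmono : Monotone c := monotone_nat_of_le_succ fun n l => by
    obtain ⟨m, hm⟩ := hsucc n
    rw [hm, Pi.add_apply, unit]
    split_ifs <;> simp
  induction N generalizing q with
  | zero => rw [le_antisymm hN h₀]
  | succ N ih =>
    obtain ⟨m, hm⟩ := hsucc N
    have hsup : f (q ⊔ c N) = f (c 0) := by
      rcases eq_or_eq_add_unit (le_sup_right : c N ≤ q ⊔ c N)
        (hm ▸ sup_le hN (hmono N.le_succ)) with h | h
      · rw [h, hconst]
      · rw [h, ← hm, hconst]
    have hinf := ih (hV.inf_mem _ _ hq (hmem N)) (le_inf h₀ (hmono N.zero_le)) inf_le_right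
    have := hf.supermodular hV hq (hmem N)
    have := hconst N
    linarith

end Supermodular

/-- Functions on the lattice, expressed in the redundant coordinates of `TriLattice`. -/
def DiagInvariant (f : TriLattice → ℝ) : Prop := ∀ p n, f (p + diag n) = f p

/-- The infinite ascending chain through all representatives of the vertices of a triangle which
lie above `u`. -/
def triangleChain (u : TriLattice) (i j : Fin 3) (n : ℕ) : TriLattice := fun l =>
  u l + (n + (if l = i then 2 else if l = j then 1 else 0)) / 3

section TriangleChain

variable (u : TriLattice) {i j : Fin 3}

lemma triangleChain_cases (hij : i ≠ j) (n : ℕ) :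
    ∃ m, triangleChain u i j n = u + diag m ∨ triangleChain u i j n = u + unit i + diag m ∨
      triangleChain u i j n = u + unit i + unit j + diag m := by
  obtain ⟨k, hik, hjk⟩ := exists_third hij
  refine ⟨n / 3, ?_⟩
  simp only [ext_iff hij hik hjk, triangleChain, Pi.add_apply, diag_apply, unit_values hij hik hjk,
    if_true, if_neg hij.symm, if_neg hik.symm, if_neg hjk.symm]
  omega

lemma triangleChain_succ (hij : i ≠ j) (n : ℕ) :
    ∃ m, triangleChain u i j (n + 1) = triangleChain u i j n + unit m := by
  obtain ⟨k, hik, hjk⟩ := exists_third hij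
  have hmod : n % 3 = 0 ∨ n % 3 = 1 ∨ n % 3 = 2 := by omega
  have key : ∀ m, (m = i ↔ n % 3 = 0) → (m = j ↔ n % 3 = 1) → (m = k ↔ n % 3 = 2) →
      triangleChain u i j (n + 1) = triangleChain u i j n + unit m := by
    intro m hi hj hk
    simp only [ext_iff hij hik hjk, triangleChain, Pi.add_apply, unit, eq_comm (b := m), hi, hj, hk,
      if_true, if_neg hij.symm, if_neg hik.symm, if_neg hjk.symm]
    omega
  rcases hmod with h | h | h
  · exact ⟨i, key i (by simp [h]) (by simp [h, hij]) (by simp [h, hik])⟩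
  · exact ⟨j, key j (by simp [h, hij.symm]) (by simp [h]) (by simp [h, hjk])⟩
  · exact ⟨k, key k (by simp [h, hik.symm]) (by simp [h, hjk.symm]) (by simp [h])⟩

lemma exists_le_triangleChain (q : TriLattice) (i j : Fin 3) :
    ∃ n, q ≤ triangleChain u i j n := by
  refine ⟨3 * ∑ l, (q l - u l).toNat, fun l => ?_⟩
  have : (q l - u l).toNat ≤ ∑ l, (q l - u l).toNat :=
    Finset.single_le_sum (f := fun l => (q l - u l).toNat) (fun _ _ => Nat.zero_le _)
      (Finset.mem_univ l)
  simp only [triangleChain]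
  split_ifs <;> omega

end TriangleChain

lemma exists_add_diag_le (u q : TriLattice) : ∃ n, u + diag n ≤ q := by
  refine ⟨-∑ l, |q l - u l|, fun l => ?_⟩
  have := Finset.single_le_sum (f := fun l => |q l - u l|) (fun _ _ => abs_nonneg _)
    (Finset.mem_univ l)
  have := neg_abs_le (q l - u l)
  simp only [Pi.add_apply, diag_apply]
  omega

theorem RhombusConcave.le_of_flat_triangle (hV : IsTriRegion V) (hf : RhombusConcave V f)
    (hinv : DiagInvariant f) {u : TriLattice} {i j : Fin 3} (h : IsTriangle V u i j)
    (hmid : f (u + unit i) = f u) (htop : f (u + unit i + unit j) = f u) {q : TriLattice}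
    (hq : q ∈ V) : f q ≤ f u := by
  obtain ⟨n, hn⟩ := exists_add_diag_le u q
  have hbase : triangleChain (u + diag n) i j 0 = u + diag n := by
    funext l
    simp only [triangleChain]
    split_ifs <;> simp
  have hchain : ∀ m, triangleChain (u + diag n) i j m ∈ V ∧
      f (triangleChain (u + diag n) i j m) = f u := by
    intro m
    obtain ⟨t, ht | ht | ht⟩ := triangleChain_cases (u + diag n) h.ne m <;>
      simp only [ht, add_right_comm _ (diag n), hinv _ _, hmid, htop, and_true] <;>
      refine hV.add_diag_mem _ _ (hV.add_diag_mem _ _ ?_)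
    exacts [h.base_mem, h.mid_mem, h.top_mem]
  obtain ⟨N, hN⟩ := exists_le_triangleChain (u + diag n) q i j
  have hle := hf.le_of_chain hV (fun m => (hchain m).1) (triangleChain_succ _ h.ne)
    (fun m => (hchain m).2.trans (hchain 0).2.symm) hq (hbase.le.trans hn) hN
  exact hle.trans (hchain 0).2.le

end RhombusConcave

section InflationZero

variable {Q : Set TriLattice} {ν : Fin 3 → ℤ} {v : TriLattice} {i j k : Fin 3}

lemma IsTriRegion.add_unit_mem (hQ : IsTriRegion Q) (hv : v ∈ Q)
    (h : ∀ l, (i, l) ∉ touchedSides Q v) : v + unit i ∈ Q := by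
  refine hQ.mem_iff.2 fun a b => ?_
  rcases eq_or_ne a b with rfl | hab
  · simpa using hQ.sub_le_maxDiff hv a a
  have hle := hQ.sub_le_maxDiff hv a b
  have hlt : a = i → v a - v b < maxDiff Q a b := fun ha =>
    hQ.sub_lt_maxDiff hv hab (ha ▸ h b)
  simp only [Pi.add_apply, unit]
  split_ifs <;> omega

lemma IsTriRegion.sub_unit_mem (hQ : IsTriRegion Q) (hv : v ∈ Q)
    (h : ∀ l, (l, i) ∉ touchedSides Q v) : v - unit i ∈ Q := by
  refine hQ.mem_iff.2 fun a b => ?_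
  rcases eq_or_ne a b with rfl | hab
  · simpa using hQ.sub_le_maxDiff hv a a
  have hle := hQ.sub_le_maxDiff hv a b
  have hlt : b = i → v a - v b < maxDiff Q a b := fun hb =>
    hQ.sub_lt_maxDiff hv hab (hb ▸ h a)
  simp only [Pi.sub_apply, unit]
  split_ifs <;> omega

lemma perimeter_pos (hQ : IsTriRegion Q) (hν : ∀ l, 0 ≤ ν l) (hij : i ≠ j) (hi : 0 < ν i)
    (hj : 0 < ν j) : 0 < perimeter Q ν := by
  obtain ⟨k, hik, hjk⟩ := exists_third hij
  have hwidth := hQ.one_le_maxDiff_add_maxDiff hij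
  have hsides : sideLength Q i k j + sideLength Q j k i = maxDiff Q i j + maxDiff Q j i := by
    unfold sideLength
    ring
  have nonneg := fun s => sideWeight_nonneg hQ hν s
  have hle_j : sideLength Q i k j ≤ sideWeight Q ν (i, k) := by
    rw [sideWeight_eq hik hij hjk.symm]
    exact le_mul_of_one_le_left (hQ.sideLength_nonneg _ _ _) hj
  have hle_i : sideLength Q j k i ≤ sideWeight Q ν (j, k) := by
    rw [sideWeight_eq hjk hij.symm hik.symm]
    exact le_mul_of_one_le_left (hQ.sideLength_nonneg _ _ _) hi
  rw [perimeter_eq hij hik hjk]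
  linarith [nonneg (i, j), nonneg (j, i), nonneg (k, i), nonneg (k, j)]

lemma sideLength_le_one (hQ : IsTriRegion Q) (hF : ∀ v ∈ Q, inflation Q ν v = 0)
    (hij : i ≠ j) (hik : i ≠ k) (hjk : j ≠ k) (hk : ν k ≠ 0) : sideLength Q i j k ≤ 1 := by
  by_contra! hlong
  have hmem := hQ.sideStart_add_mem hij hik hjk zero_le_one hlong.le
  have htouched : touchedSides Q (sideStart Q i j k + (1 : ℤ) • unit k) = {(i, j)} := by
    have := hQ.one_le_maxDiff_add_maxDiff hij
    have := hQ.maxDiff_le_add i k j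
    have := hQ.maxDiff_le_add k j i
    refine Finset.Subset.antisymm ?_ (Finset.singleton_subset_iff.2 (mem_touchedSides.2 ⟨hij, ?_⟩))
    · refine (touchedSides_subset (r := (i, j)) (s := (i, j)) (t := (i, j)) ?_).trans (by simp)
      simp only [forall_iff hij hik hjk, Pi.add_apply, Pi.smul_apply, smul_eq_mul, sideStart_fst,
        sideStart_snd Q hij, sideStart_thd Q hik hjk, unit_self, unit_of_ne hik, unit_of_ne hjk]
      unfold sideLength at hlong
      simp [hij, hik, hjk, hij.symm, hik.symm, hjk.symm]
      omega
    · simp [sideStart_fst, sideStart_snd Q hij, unit_of_ne hik, unit_of_ne hjk]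
  have := hF _ hmem
  rw [inflation_of_touchedSides_eq_singleton htouched, sideWeight_eq hij hik hjk] at this
  simp [hk] at this
  omega

end InflationZero

/-- The value at `v` of the linear functional with coefficients `P`; it descends to the lattice
when the coefficients add up to zero. -/
def pairing (P : Fin 3 → ℝ) (v : TriLattice) : ℝ := ∑ l, P l * v l

section Pairing

variable {P : Fin 3 → ℝ}

lemma pairing_add (P : Fin 3 → ℝ) (v w : TriLattice) :
    pairing P (v + w) = pairing P v + pairing P w := by
  simp [pairing, mul_add, Finset.sum_add_distrib]

lemma pairing_sub (P : Fin 3 → ℝ) (v w : TriLattice) :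
    pairing P (v - w) = pairing P v - pairing P w := by
  simp [pairing, mul_sub, Finset.sum_sub_distrib]

lemma pairing_unit (P : Fin 3 → ℝ) (i : Fin 3) : pairing P (unit i) = P i := by
  simp [pairing, unit]

lemma pairing_diag (hP : ∑ l, P l = 0) (n : ℤ) : pairing P (diag n) = 0 := by
  simp [pairing, diag, ← Finset.sum_mul, hP]

end Pairing

/-- The tile of `f` with gradient `P`: the points of `V` at which the function `f` and the affine
function of gradient `P` which supports it from above agree. -/
def tile (V : Set TriLattice) (f : TriLattice → ℝ) (P : Fin 3 → ℝ) : Set TriLattice :=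
  {v | v ∈ V ∧ ∀ w ∈ V, f w - pairing P w ≤ f v - pairing P v}

/-- `P` is the gradient of `f` on some little triangle of `V`. -/
structure IsTileGradient (V : Set TriLattice) (f : TriLattice → ℝ) (P : Fin 3 → ℝ) : Prop where
  sum_eq_zero : ∑ l, P l = 0
  exists_triangle : ∃ u i j, IsTriangle (tile V f P) u i j

/-- The gradient of `f` on the triangle with vertices `u`, `u + unit i` and
`u + unit i + unit j`. -/
def triangleGradient (f : TriLattice → ℝ) (u : TriLattice) (i j : Fin 3) : Fin 3 → ℝ := fun l =>
  if l = i then f (u + unit i) - f u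
  else if l = j then f (u + unit i + unit j) - f (u + unit i)
  else f u - f (u + unit i + unit j)

section Tile

variable {V : Set TriLattice} {f : TriLattice → ℝ} {P P' : Fin 3 → ℝ} {u v x y : TriLattice}
  {i j k : Fin 3}

lemma RhombusConcave.sub_pairing (hf : RhombusConcave V f) (P : Fin 3 → ℝ) :
    RhombusConcave V fun v => f v - pairing P v := by
  intro p i j hij h₀ hi hj htop
  have := hf p i j hij h₀ hi hj htop
  simp only [pairing_add]
  linarith

lemma DiagInvariant.sub_pairing (hf : DiagInvariant f) (hP : ∑ l, P l = 0) :
    DiagInvariant fun v => f v - pairing P v := fun p n => by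
  simp only [pairing_add, pairing_diag hP, hf p n, add_zero]

lemma sub_pairing_eq_of_mem_tile (hx : x ∈ tile V f P) (hy : y ∈ tile V f P) :
    f x - pairing P x = f y - pairing P y :=
  le_antisymm (hy.2 x hx.1) (hx.2 y hy.1)

lemma mem_tile_of_sub_pairing_eq (hx : x ∈ tile V f P) (hy : y ∈ V)
    (h : f x - pairing P x = f y - pairing P y) : y ∈ tile V f P :=
  ⟨hy, fun v hv => h ▸ hx.2 v hv⟩

lemma sub_eq_of_mem_tile (hx : v ∈ tile V f P) (hy : v + unit i ∈ tile V f P) :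
    f (v + unit i) - f v = P i := by
  have := sub_pairing_eq_of_mem_tile hx hy
  rw [pairing_add, pairing_unit] at this
  linarith

theorem IsTileGradient.isTriRegion (h : IsTileGradient V f P) (hV : IsTriRegion V)
    (hf : RhombusConcave V f) (hinv : DiagInvariant f) : IsTriRegion (tile V f P) where
  add_diag_mem p n hp :=
    mem_tile_of_sub_pairing_eq hp (hV.add_diag_mem _ _ hp.1)
      (hinv.sub_pairing h.sum_eq_zero p n).symm
  inf_mem p q hp hq := by
    refine mem_tile_of_sub_pairing_eq hp (hV.inf_mem _ _ hp.1 hq.1) (le_antisymm ?_ (hp.2 _ ?_))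
    · have := (hf.sub_pairing P).supermodular hV hp.1 hq.1
      linarith [hq.2 _ (hV.sup_mem _ _ hp.1 hq.1)]
    · exact hV.inf_mem _ _ hp.1 hq.1
  sup_mem p q hp hq := by
    refine mem_tile_of_sub_pairing_eq hp (hV.sup_mem _ _ hp.1 hq.1) (le_antisymm ?_ (hp.2 _ ?_))
    · have := (hf.sub_pairing P).supermodular hV hp.1 hq.1
      linarith [hq.2 _ (hV.inf_mem _ _ hp.1 hq.1)]
    · exact hV.sup_mem _ _ hp.1 hq.1
  exists_triangle := h.exists_triangle
  finite_slice := hV.finite_slice.subset fun _ hp => ⟨hp.1.1, hp.2⟩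

lemma sum_triangleGradient (f : TriLattice → ℝ) (u : TriLattice) (hij : i ≠ j) :
    ∑ l, triangleGradient f u i j l = 0 := by
  obtain ⟨k, hik, hjk⟩ := exists_third hij
  simp [sum_eq hij hik hjk, triangleGradient, hij.symm, hik.symm, hjk.symm]

theorem IsTriangle.tile_triangleGradient (h : IsTriangle V u i j) (hV : IsTriRegion V)
    (hf : RhombusConcave V f) (hinv : DiagInvariant f) :
    IsTriangle (tile V f (triangleGradient f u i j)) u i j := by
  set P := triangleGradient f u i j with hPdef
  have hi : P i = f (u + unit i) - f u := by simp [hPdef, triangleGradient]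
  have hj : P j = f (u + unit i + unit j) - f (u + unit i) := by
    simp [hPdef, triangleGradient, h.ne.symm]
  have hmid : f (u + unit i) - pairing P (u + unit i) = f u - pairing P u := by
    rw [pairing_add, pairing_unit, hi]
    ring
  have htop : f (u + unit i + unit j) - pairing P (u + unit i + unit j) = f u - pairing P u := by
    rw [pairing_add, pairing_add, pairing_unit, pairing_unit, hi, hj]
    ring
  have hu : u ∈ tile V f P := ⟨h.base_mem, fun q hq => (hf.sub_pairing P).le_of_flat_triangle hV
    (hinv.sub_pairing (sum_triangleGradient f u h.ne)) h hmid htop hq⟩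
  exact ⟨h.ne, hu, mem_tile_of_sub_pairing_eq hu h.mid_mem hmid.symm,
    mem_tile_of_sub_pairing_eq hu h.top_mem htop.symm⟩

lemma IsTriangle.isTileGradient (h : IsTriangle V u i j) (hV : IsTriRegion V)
    (hf : RhombusConcave V f) (hinv : DiagInvariant f) :
    IsTileGradient V f (triangleGradient f u i j) :=
  ⟨sum_triangleGradient f u h.ne, u, i, j, h.tile_triangleGradient hV hf hinv⟩

lemma IsTriangle.eq_triangleGradient (h : IsTriangle (tile V f P) u i j) (hP : ∑ l, P l = 0) :
    P = triangleGradient f u i j := by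
  obtain ⟨k, hik, hjk⟩ := exists_third h.ne
  have hi := sub_eq_of_mem_tile h.base_mem h.mid_mem
  have hj := sub_eq_of_mem_tile h.mid_mem h.top_mem
  rw [sum_eq h.ne hik hjk] at hP
  funext l
  rcases eq_or_eq_or_eq h.ne hik hjk l with rfl | rfl | rfl
  · simp [triangleGradient, hi]
  · simp [triangleGradient, h.ne.symm, hj]
  · simp [triangleGradient, hik.symm, hjk.symm]
    linarith

lemma le_of_add_unit_mem_tile (hv : v ∈ tile V f P) (hv' : v ∈ tile V f P')
    (hi : v + unit i ∈ tile V f P) : P i ≤ P' i := by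
  have := sub_eq_of_mem_tile hv hi
  have := hv'.2 _ hi.1
  rw [pairing_add, pairing_unit] at this
  linarith

lemma le_of_sub_unit_mem_tile (hv : v ∈ tile V f P) (hv' : v ∈ tile V f P')
    (hi : v - unit i ∈ tile V f P) : P' i ≤ P i := by
  have h := sub_pairing_eq_of_mem_tile hv hi
  have h' := hv'.2 _ hi.1
  rw [pairing_sub, pairing_unit] at h h'
  linarith

end Tile

section AdjacentTiles

variable {V : Set TriLattice} {f : TriLattice → ℝ} {P P' : Fin 3 → ℝ} {v x : TriLattice}
  {i j k : Fin 3}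

lemma eq_of_touchedSides_eq_empty (hQ : IsTriRegion (tile V f P)) (hv : v ∈ tile V f P)
    (hv' : v ∈ tile V f P') (h : touchedSides (tile V f P) v = ∅) : P = P' :=
  funext fun l => le_antisymm
    (le_of_add_unit_mem_tile hv hv' (hQ.add_unit_mem hv (by simp [h])))
    (le_of_sub_unit_mem_tile hv hv' (hQ.sub_unit_mem hv (by simp [h])))

lemma eq_and_lt_of_touchedSides_eq_singleton (hQ : IsTriRegion (tile V f P))
    (hP : ∑ l, P l = 0) (hP' : ∑ l, P' l = 0) (hne : P ≠ P')
    (hij : i ≠ j) (hik : i ≠ k) (hjk : j ≠ k) (hv : v ∈ tile V f P) (hv' : v ∈ tile V f P')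
    (h : touchedSides (tile V f P) v = {(i, j)}) : P k = P' k ∧ P' i < P i := by
  have hk : P k = P' k := le_antisymm
    (le_of_add_unit_mem_tile hv hv' (hQ.add_unit_mem hv (by simp [h, hik.symm])))
    (le_of_sub_unit_mem_tile hv hv' (hQ.sub_unit_mem hv (by simp [h, hjk.symm])))
  refine ⟨hk, lt_of_le_of_ne
    (le_of_sub_unit_mem_tile hv hv' (hQ.sub_unit_mem hv (by simp [h, hij]))) fun hi => hne ?_⟩
  rw [sum_eq hij hik hjk] at hP hP'
  funext l
  exact (forall_iff (p := fun l => P l = P' l) hij hik hjk).2 ⟨hi.symm, by linarith, hk⟩ l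

lemma pairing_sub_pairing_eq (hP : ∑ l, P l = 0) (hP' : ∑ l, P' l = 0) (hij : i ≠ j)
    (hik : i ≠ k) (hjk : j ≠ k) (hk : P k = P' k) (x : TriLattice) :
    pairing P x - pairing P' x = (P i - P' i) * (x i - x j) := by
  rw [sum_eq hij hik hjk] at hP hP'
  simp only [pairing, sum_eq hij hik hjk]
  linear_combination (hP - hP') * (x j : ℝ) + hk * ((x k : ℝ) - x j)

variable (hP : ∑ l, P l = 0) (hP' : ∑ l, P' l = 0) (hij : i ≠ j) (hik : i ≠ k) (hjk : j ≠ k)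
  (hv : v ∈ tile V f P) (hv' : v ∈ tile V f P') (hk : P k = P' k)

include hP hP' hij hik hjk hv hv' hk

lemma mem_tile_of_sub_eq (hx : x ∈ tile V f P) (hxv : x i - x j = v i - v j) :
    x ∈ tile V f P' := by
  refine mem_tile_of_sub_pairing_eq hv' hx.1 ?_
  have hfx := sub_pairing_eq_of_mem_tile hx hv
  have hx' := pairing_sub_pairing_eq hP hP' hij hik hjk hk x
  have hv' := pairing_sub_pairing_eq hP hP' hij hik hjk hk v
  have hcast : (x i : ℝ) - x j = v i - v j := by exact_mod_cast hxv
  rw [hcast] at hx'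
  linarith

lemma sub_le_sub_of_mem_tile (hi : P' i < P i) (hx : x ∈ tile V f P') :
    v i - v j ≤ x i - x j := by
  have hfx := sub_pairing_eq_of_mem_tile hx hv'
  have hle := hv.2 x hx.1
  have hx' := pairing_sub_pairing_eq hP hP' hij hik hjk hk x
  have hv' := pairing_sub_pairing_eq hP hP' hij hik hjk hk v
  have hmul : (P i - P' i) * ((v i : ℝ) - v j) ≤ (P i - P' i) * (x i - x j) := by linarith
  exact_mod_cast le_of_mul_le_mul_left hmul (sub_pos.2 hi)

omit hk

variable (hQ : IsTriRegion (tile V f P)) (hQ' : IsTriRegion (tile V f P')) (hne : P ≠ P')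
  (h : touchedSides (tile V f P) v = {(i, j)})

include hQ hQ' hne h

lemma touchedSides_eq_of_adjacent : touchedSides (tile V f P') v = {(j, i)} := by
  obtain ⟨hk, hi⟩ :=
    eq_and_lt_of_touchedSides_eq_singleton hQ hP hP' hne hij hik hjk hv hv' h
  have hmax : v j - v i = maxDiff (tile V f P') j i := by
    obtain ⟨x, hx, hxmax⟩ := hQ'.exists_sub_eq_maxDiff j i
    refine le_antisymm (hQ'.sub_le_maxDiff hv' j i) (hxmax ▸ ?_)
    have := sub_le_sub_of_mem_tile hP hP' hij hik hjk hv hv' hk hi hx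
    omega
  have hup := mem_tile_of_sub_eq hP hP' hij hik hjk hv hv' hk
    (hQ.add_unit_mem hv (i := k) (by simp [h, hik.symm])) (by simp [unit, hik, hjk])
  have hdown := mem_tile_of_sub_eq hP hP' hij hik hjk hv hv' hk
    (hQ.sub_unit_mem hv (i := k) (by simp [h, hjk.symm])) (by simp [unit, hik, hjk])
  rw [hQ'.mem_iff_of_ne hij hik hjk] at hup hdown
  simp only [Pi.add_apply, Pi.sub_apply, unit_self, unit_of_ne hik, unit_of_ne hjk] at hup hdown
  have hwidth := hQ'.one_le_maxDiff_add_maxDiff hij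
  refine Finset.Subset.antisymm ?_
    (Finset.singleton_subset_iff.2 (mem_touchedSides.2 ⟨hij.symm, hmax⟩))
  refine (touchedSides_subset (r := (j, i)) (s := (j, i)) (t := (j, i)) ?_).trans (by simp)
  simp only [forall_iff hij hik hjk]
  simp [hij, hik, hjk, hij.symm, hik.symm, hjk.symm]
  omega

lemma sideLength_le_of_adjacent :
    sideLength (tile V f P) i j k ≤ sideLength (tile V f P') j i k := by
  have hk := (eq_and_lt_of_touchedSides_eq_singleton hQ hP hP' hne hij hik hjk hv hv' h).1
  have htouch := (mem_touchedSides.1 (h ▸ Finset.mem_singleton_self _ :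
    (i, j) ∈ touchedSides (tile V f P) v)).2
  have htouch' := (mem_touchedSides.1
    (touchedSides_eq_of_adjacent hP hP' hij hik hjk hv hv' hQ hQ' hne h ▸
      Finset.mem_singleton_self _ : (j, i) ∈ touchedSides (tile V f P') v)).2
  have side_mem : ∀ t : ℤ, 0 ≤ t → t ≤ sideLength (tile V f P) i j k →
      sideStart (tile V f P) i j k + t • unit k ∈ tile V f P' := fun t ht ht' =>
    mem_tile_of_sub_eq hP hP' hij hik hjk hv hv' hk (hQ.sideStart_add_mem hij hik hjk ht ht')
      (by simp [sideStart_fst, sideStart_snd _ hij, unit_of_ne hik, unit_of_ne hjk, htouch])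
  have hstart := hQ'.sub_le_maxDiff (side_mem 0 le_rfl (hQ.sideLength_nonneg _ _ _)) j k
  have hend := hQ'.sub_le_maxDiff (side_mem _ (hQ.sideLength_nonneg _ _ _) le_rfl) k i
  simp only [Pi.add_apply, Pi.smul_apply, smul_eq_mul, sideStart_fst, sideStart_snd _ hij,
    sideStart_thd _ hik hjk, unit_self, unit_of_ne hik, unit_of_ne hjk] at hstart hend
  rw [sideLength] at hend ⊢
  rw [sideLength]
  omega

lemma sideLength_eq_of_adjacent :
    sideLength (tile V f P) i j k = sideLength (tile V f P') j i k :=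
  le_antisymm (sideLength_le_of_adjacent hP hP' hij hik hjk hv hv' hQ hQ' hne h)
    (sideLength_le_of_adjacent hP' hP hij.symm hjk hik hv' hv hQ' hQ hne.symm
      (touchedSides_eq_of_adjacent hP hP' hij hik hjk hv hv' hQ hQ' hne h))

end AdjacentTiles

/-- The indicator of the directions in which the gradient `P` is not integral: the weights which the
inflation of a tile of gradient `P` assigns to the directions of its sides. -/
def fracWeight (P : Fin 3 → ℝ) (l : Fin 3) : ℤ := if ∃ z : ℤ, P l = z then 0 else 1

section FracWeight

variable {P P' : Fin 3 → ℝ} {i j k : Fin 3}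

lemma fracWeight_eq_zero_or_one (P : Fin 3 → ℝ) (l : Fin 3) :
    fracWeight P l = 0 ∨ fracWeight P l = 1 := by
  unfold fracWeight
  split_ifs <;> simp

lemma fracWeight_nonneg (P : Fin 3 → ℝ) (l : Fin 3) : 0 ≤ fracWeight P l := by
  rcases fracWeight_eq_zero_or_one P l with h | h <;> simp [h]

lemma fracWeight_eq_zero_iff {l : Fin 3} : fracWeight P l = 0 ↔ ∃ z : ℤ, P l = z := by
  simp [fracWeight]

lemma fracWeight_eq_zero_of_eq_zero (hP : ∑ l, P l = 0) (hij : i ≠ j) (hik : i ≠ k)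
    (hjk : j ≠ k) (hi : fracWeight P i = 0) (hj : fracWeight P j = 0) : fracWeight P k = 0 := by
  rw [fracWeight_eq_zero_iff] at *
  obtain ⟨a, ha⟩ := hi
  obtain ⟨b, hb⟩ := hj
  rw [sum_eq hij hik hjk] at hP
  exact ⟨-a - b, by push_cast; linarith⟩

lemma exists_ne_fracWeight_ne_zero (hP : ∑ l, P l = 0) (hi : fracWeight P i ≠ 0) :
    ∃ j, i ≠ j ∧ fracWeight P j ≠ 0 := by
  by_contra! h
  obtain ⟨j, hij⟩ := exists_ne i
  obtain ⟨k, hik, hjk⟩ := exists_third hij.symm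
  exact hi (fracWeight_eq_zero_of_eq_zero hP hjk hij hik.symm (h j hij.symm) (h k hik))

lemma sum_fracWeight_ne_one (hP : ∑ l, P l = 0) : ∑ l, fracWeight P l ≠ 1 := by
  intro hsum
  obtain ⟨i, -, hi⟩ : ∃ i ∈ Finset.univ, fracWeight P i ≠ 0 :=
    Finset.exists_ne_zero_of_sum_ne_zero (hsum ▸ one_ne_zero)
  obtain ⟨j, hij, hj⟩ := exists_ne_fracWeight_ne_zero hP hi
  obtain ⟨k, hik, hjk⟩ := exists_third hij
  rw [sum_eq hij hik hjk, (fracWeight_eq_zero_or_one P i).resolve_left hi,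
    (fracWeight_eq_zero_or_one P j).resolve_left hj] at hsum
  linarith [fracWeight_nonneg P k]

variable {V : Set TriLattice} {f : TriLattice → ℝ} {v : TriLattice}

lemma inflation_eq_of_adjacent (hP : ∑ l, P l = 0) (hP' : ∑ l, P' l = 0) (hij : i ≠ j)
    (hv : v ∈ tile V f P) (hv' : v ∈ tile V f P') (hQ : IsTriRegion (tile V f P))
    (hQ' : IsTriRegion (tile V f P')) (hne : P ≠ P')
    (h : touchedSides (tile V f P) v = {(i, j)}) :
    inflation (tile V f P) (fracWeight P) v = inflation (tile V f P') (fracWeight P') v := by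
  obtain ⟨k, hik, hjk⟩ := exists_third hij
  have hk := (eq_and_lt_of_touchedSides_eq_singleton hQ hP hP' hne hij hik hjk hv hv' h).1
  rw [inflation_of_touchedSides_eq_singleton h, inflation_of_touchedSides_eq_singleton
    (touchedSides_eq_of_adjacent hP hP' hij hik hjk hv hv' hQ hQ' hne h),
    sideWeight_eq hij hik hjk, sideWeight_eq hij.symm hjk hik,
    sideLength_eq_of_adjacent hP hP' hij hik hjk hv hv' hQ hQ' hne h, fracWeight, fracWeight, hk]

theorem inflation_eq_of_mem_tile (hP : ∑ l, P l = 0) (hP' : ∑ l, P' l = 0)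
    (hQ : IsTriRegion (tile V f P)) (hQ' : IsTriRegion (tile V f P'))
    (hv : v ∈ tile V f P) (hv' : v ∈ tile V f P') :
    inflation (tile V f P) (fracWeight P) v = inflation (tile V f P') (fracWeight P') v := by
  rcases eq_or_ne P P' with rfl | hne
  · rfl
  rcases touchedSides_cases (tile V f P) v with h | ⟨i, j, hij, h⟩ | h
  · exact absurd (eq_of_touchedSides_eq_empty hQ hv hv' h) hne
  · exact inflation_eq_of_adjacent hP hP' hij hv hv' hQ hQ' hne h
  rcases touchedSides_cases (tile V f P') v with h' | ⟨i, j, hij, h'⟩ | h'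
  · exact absurd (eq_of_touchedSides_eq_empty hQ' hv' hv h') hne.symm
  · exact (inflation_eq_of_adjacent hP' hP hij hv' hv hQ' hQ hne.symm h').symm
  · rw [inflation_of_touchedSides_nontrivial h, inflation_of_touchedSides_nontrivial h']

lemma touchedSides_ne_empty {Q : Set TriLattice} (hQ : IsTriRegion Q) (hP : ∑ l, P l = 0)
    (hi : fracWeight P i ≠ 0) (hF : inflation Q (fracWeight P) v = 0) :
    touchedSides Q v ≠ ∅ := by
  intro h
  obtain ⟨j, hij, hj⟩ := exists_ne_fracWeight_ne_zero hP hi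
  have pos := fun {l} (hl : fracWeight P l ≠ 0) =>
    lt_of_le_of_ne (fracWeight_nonneg P l) hl.symm
  rw [inflation_of_touchedSides_eq_empty h] at hF
  exact (perimeter_pos hQ (fracWeight_nonneg P) hij (pos hi) (pos hj)).ne' hF

end FracWeight

/-- A cocirculation on `V`, in the redundant coordinates of `TriLattice`: `c u i` is the value on
the edge from `u` to `u + unit i`, and the values on each little triangle of `V` add up to zero. -/
structure IsLatticeCocirculation (V : Set TriLattice) (c : TriLattice → Fin 3 → ℝ) : Prop where
  add_diag : ∀ u n i, c (u + diag n) i = c u i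
  sum_eq_zero : ∀ u i j k, i ≠ j → i ≠ k → j ≠ k → u ∈ V → u + unit i ∈ V →
    u + unit i + unit j ∈ V → c u i + c (u + unit i) j + c (u + unit i + unit j) k = 0

/-- `a` is the sum of the values of `c` along some path in `V` from the given point to `q`. -/
inductive IsPathSum (V : Set TriLattice) (c : TriLattice → Fin 3 → ℝ) (q : TriLattice) :
    TriLattice → ℝ → Prop
  | refl : IsPathSum V c q q 0
  | cons {p : TriLattice} {i : Fin 3} {a : ℝ} (hp : p ∈ V)
      (h : IsPathSum V c q (p + unit i) a) : IsPathSum V c q p (c p i + a)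

section PathSum

variable {V : Set TriLattice} {c : TriLattice → Fin 3 → ℝ} {p q : TriLattice} {a b : ℝ}

lemma lt_add_unit (p : TriLattice) (i : Fin 3) : p < p + unit i := by
  refine lt_add_of_pos_right p (Pi.lt_def.2 ⟨fun l => ?_, i, by simp [unit_self]⟩)
  simp only [Pi.zero_apply, unit]
  split_ifs <;> simp

lemma IsPathSum.le (h : IsPathSum V c q p a) : p ≤ q := by
  induction h with
  | refl => exact le_rfl
  | cons _ _ ih => exact (lt_add_unit _ _).le.trans ih

lemma IsPathSum.mem (hq : q ∈ V) (h : IsPathSum V c q p a) : p ∈ V := by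
  cases h with
  | refl => exact hq
  | cons hp h => exact hp

lemma exists_isPathSum (hV : IsTriRegion V) (c : TriLattice → Fin 3 → ℝ) (hq : q ∈ V) (hp : p ∈ V)
    (hpq : p ≤ q) : ∃ a, IsPathSum V c q p a :=
  hV.upward_induction hq (p := fun p => ∃ a, IsPathSum V c q p a) ⟨0, .refl⟩
    (fun _ m hr _ _ _ ⟨a, ha⟩ => ⟨c _ m + a, .cons hr ha⟩) hp hpq

lemma IsLatticeCocirculation.add_comm_unit (hc : IsLatticeCocirculation V c) (hV : IsTriRegion V)
    {i j : Fin 3}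
    (hij : i ≠ j) (hp : p ∈ V) (hi : p + unit i ∈ V) (hj : p + unit j ∈ V) :
    c p i + c (p + unit i) j = c p j + c (p + unit j) i := by
  obtain ⟨k, hik, hjk⟩ := exists_third hij
  have hji : p + unit j + unit i = p + unit i + unit j := add_right_comm _ _ _
  have htop := hV.add_unit_add_unit_mem hij hi hj
  have h₁ := hc.sum_eq_zero p i j k hij hik hjk hp hi htop
  have h₂ := hc.sum_eq_zero p j i k hij.symm hjk hik hp hj (hji ▸ htop)
  rw [hji] at h₂
  linarith

theorem IsLatticeCocirculation.isPathSum_unique (hc : IsLatticeCocirculation V c)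
    (hV : IsTriRegion V)
    (hq : q ∈ V) (ha : IsPathSum V c q p a) (hb : IsPathSum V c q p b) : a = b := by
  induction hn : (∑ l, (q l - p l)).toNat using Nat.strong_induction_on generalizing p a b with
  | _ n ih =>
    have ih_step : ∀ {i a b}, IsPathSum V c q (p + unit i) a → IsPathSum V c q (p + unit i) b →
        a = b := fun {i a b} ha hb => by
      have hsum : ∑ l, (q l - (p + unit i) l) < ∑ l, (q l - p l) :=
        Finset.sum_lt_sum (fun l _ => sub_le_sub_left ((lt_add_unit p i).le l) _)
          ⟨i, Finset.mem_univ i, by simp [unit_self]⟩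
      have hnonneg : 0 ≤ ∑ l, (q l - (p + unit i) l) :=
        Finset.sum_nonneg fun l _ => sub_nonneg.2 (ha.le l)
      exact ih _ (by omega) ha hb rfl
    cases ha with
    | refl =>
      cases hb with
      | refl => rfl
      | cons _ hb => exact absurd hb.le (lt_add_unit _ _).not_ge
    | @cons _ i a hp ha =>
      cases hb with
      | refl => exact absurd ha.le (lt_add_unit _ _).not_ge
      | @cons _ j b _ hb =>
        rcases eq_or_ne i j with rfl | hij
        · rw [ih_step ha hb]
        have hi := ha.mem hq
        have hj := hb.mem hq
        have hji : p + unit j + unit i = p + unit i + unit j := add_right_comm _ _ _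
        have hle : p + unit i + unit j ≤ q := add_unit_le ha.le <|
          (lt_of_lt_of_le (by simp [unit_self, unit_of_ne hij.symm]) (hb.le j))
        obtain ⟨d, hd⟩ := exists_isPathSum hV c hq (hV.add_unit_add_unit_mem hij hi hj) hle
        rw [ih_step ha (.cons hi hd), ih_step hb (.cons hj (hji.symm ▸ hd)), ← add_assoc,
          ← add_assoc, hc.add_comm_unit hV hij hp hi hj]

lemma IsLatticeCocirculation.isPathSum_of_add_diag (hc : IsLatticeCocirculation V c)
    (hV : IsTriRegion V)
    (hp : p ∈ V) (n : ℕ) (h : IsPathSum V c q (p + diag n) a) : IsPathSum V c q p a := by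
  induction n generalizing p with
  | zero => simpa [diag_zero] using h
  | succ n ih =>
    rw [Nat.cast_succ, add_comm (n : ℤ), diag_add, ← add_assoc] at h
    have h₁ := ih (hV.add_diag_mem p 1 hp) h
    obtain ⟨i, j, ht⟩ := hV.exists_isTriangle hp
    obtain ⟨k, hik, hjk⟩ := exists_third ht.ne
    have hclosed : p + diag 1 = p + unit i + unit j + unit k := by
      rw [← unit_add_unit_add_unit ht.ne hik hjk]
      abel
    rw [hclosed] at h₁
    have hpath := IsPathSum.cons hp (.cons ht.mid_mem (.cons ht.top_mem h₁))
    rwa [← add_assoc, ← add_assoc, hc.sum_eq_zero p i j k ht.ne hik hjk hp ht.mid_mem ht.top_mem,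
      zero_add] at hpath

lemma IsLatticeCocirculation.isPathSum_add_diag_unique (hc : IsLatticeCocirculation V c)
    (hV : IsTriRegion V)
    (hq : q ∈ V) (hp : p ∈ V) {n m : ℤ} (ha : IsPathSum V c q (p + diag n) a)
    (hb : IsPathSum V c q (p + diag m) b) : a = b := by
  wlog hnm : n ≤ m generalizing n m a b
  · exact (this hb ha (le_of_not_ge hnm)).symm
  have hm : p + diag m = p + diag n + diag ((m - n).toNat : ℤ) := by
    rw [Int.toNat_of_nonneg (sub_nonneg.2 hnm), add_assoc, ← diag_add, add_sub_cancel]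
  rw [hm] at hb
  exact hc.isPathSum_unique hV hq ha
    (hc.isPathSum_of_add_diag hV (hV.add_diag_mem p n hp) _ hb)

theorem IsLatticeCocirculation.exists_potential (hc : IsLatticeCocirculation V c)
    (hV : IsTriRegion V) :
    ∃ T, DiagInvariant T ∧ ∀ u i, u ∈ V → u + unit i ∈ V → T (u + unit i) - T u = c u i := by
  obtain ⟨q, hq⟩ := hV.nonempty
  let reaches p a := ∃ n, IsPathSum V c q (p + diag n) a
  have spec : ∀ {p a}, p ∈ V → reaches p a → Classical.epsilon (reaches p) = a := by
    intro p a hp h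
    obtain ⟨n, ha⟩ := h
    obtain ⟨m, hm⟩ := Classical.epsilon_spec (⟨a, n, ha⟩ : ∃ a, reaches p a)
    exact hc.isPathSum_add_diag_unique hV hq hp hm ha
  refine ⟨fun p => -Classical.epsilon (reaches p), fun p n => ?_, fun u i hu hui => ?_⟩
  · have : reaches (p + diag n) = reaches p := by
      funext a
      simp only [reaches, add_assoc, ← diag_add, eq_iff_iff]
      exact ⟨fun ⟨m, h⟩ => ⟨n + m, h⟩, fun ⟨m, h⟩ => ⟨m - n, by rwa [add_sub_cancel]⟩⟩
    simp only [this]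
  · obtain ⟨n, hn⟩ := exists_add_diag_le (u + unit i) q
    obtain ⟨a, ha⟩ := exists_isPathSum hV c hq (hV.add_diag_mem _ n hui) hn
    have hstep := IsPathSum.cons (hV.add_diag_mem u n hu) (add_right_comm u _ _ ▸ ha)
    simp only [spec hui ⟨n, ha⟩, spec hu ⟨n, hstep⟩, hc.add_diag]
    ring

end PathSum

end TriLattice

section Circulation

variable {α β δ : Type*} {s : Finset α} {edge : α → β} {sign : α → Bool} {node : α → δ}

lemma two_mul_card_image_le (h : ∀ y ∈ s, ∃ y' ∈ s, y' ≠ y ∧ node y' = node y) :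
    2 * (s.image node).card ≤ s.card := by
  refine Finset.mul_card_image_le_card_of_maps_to (fun y => Finset.mem_image_of_mem node) _ ?_
  intro n hn
  obtain ⟨y, hy, rfl⟩ := Finset.mem_image.1 hn
  obtain ⟨y', hy', hne, hnode⟩ := h y hy
  exact Finset.one_lt_card.2 ⟨y, by simp [hy], y', by simp [hy', hnode], hne.symm⟩

lemma image_edge_sign_subset : s.image (fun y => (edge y, sign y)) ⊆ s.image edge ×ˢ Finset.univ :=
  Finset.image_subset_iff.2 fun y hy => by simpa using ⟨y, hy, rfl⟩

lemma card_le_two_mul_card_image (hinj : Set.InjOn (fun y => (edge y, sign y)) s) :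
    s.card ≤ 2 * (s.image edge).card := by
  rw [← Finset.card_image_of_injOn hinj, mul_comm]
  simpa using Finset.card_le_card (image_edge_sign_subset (s := s) (edge := edge) (sign := sign))

lemma sum_sign_mul_eq_zero (hinj : Set.InjOn (fun y => (edge y, sign y)) s)
    (hcard : s.card = 2 * (s.image edge).card) (T : β → ℝ) :
    ∑ y ∈ s, (if sign y then 1 else -1) * T (edge y) = 0 := by
  have himage : s.image (fun y => (edge y, sign y)) = s.image edge ×ˢ Finset.univ :=
    Finset.eq_of_subset_of_card_le image_edge_sign_subset <| by
      rw [Finset.card_image_of_injOn hinj, hcard, mul_comm]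
      simp
  rw [← Finset.sum_image (f := fun z : β × Bool => (if z.2 then 1 else -1) * T z.1) hinj, himage,
    Finset.sum_product]
  simp

/-- The net outflow at each node of the function `T` on the edges of a graph with darts `s`. -/
def outflow (s : Finset α) (edge : α → β) (sign : α → Bool) (node : α → δ) :
    (s.image edge → ℝ) →ₗ[ℝ] (s.image node → ℝ) :=
  LinearMap.pi fun n => ∑ y ∈ Finset.univ.filter fun y : s => node y = n,
    (if sign y then 1 else -1 : ℝ) •
      LinearMap.proj ⟨edge y, Finset.mem_image_of_mem _ y.2⟩

lemma outflow_apply (T : β → ℝ) (n : s.image node) :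
    outflow s edge sign node (fun e => T e) n =
      ∑ y ∈ s with node y = n, (if sign y then 1 else -1) * T (edge y) := by
  simp only [outflow, LinearMap.pi_apply, LinearMap.sum_apply, LinearMap.smul_apply,
    LinearMap.proj_apply, smul_eq_mul]
  rw [Finset.sum_filter, Finset.sum_filter, ← Finset.sum_coe_sort s]

lemma not_injective_outflow (hs : s.Nonempty) (hinj : Set.InjOn (fun y => (edge y, sign y)) s)
    (h : ∀ y ∈ s, ∃ y' ∈ s, y' ≠ y ∧ node y' = node y) :
    ¬ Function.Injective (outflow s edge sign node) := by
  intro hA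
  have hle := LinearMap.finrank_le_finrank_of_injective hA
  have hnodes := two_mul_card_image_le h
  have hedges := card_le_two_mul_card_image hinj
  simp only [Module.finrank_fintype_fun_eq_card, Fintype.card_coe] at hle
  have hcard : (s.image edge).card = (s.image node).card := by omega
  obtain ⟨T, hT⟩ := (LinearMap.injective_iff_surjective_of_finrank_eq_finrank
    (by simp [hcard])).1 hA fun _ => 1
  obtain ⟨T, rfl⟩ : ∃ T' : β → ℝ, (fun e : s.image edge => T' e) = T :=
    ⟨fun e => if h : e ∈ s.image edge then T ⟨e, h⟩ else 0, by simp⟩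
  have hzero := sum_sign_mul_eq_zero hinj (by omega) T
  rw [← Finset.sum_fiberwise_of_maps_to (fun y => Finset.mem_image_of_mem node),
    ← Finset.sum_coe_sort] at hzero
  simp only [← outflow_apply, hT] at hzero
  simp [hs.ne_empty] at hzero

/-- An edge with a missing dart leads to a further vertex where conservation is not required; since
every node has degree at least two, there are too few conditions to force the flow to vanish. -/
theorem exists_circulation (hs : s.Nonempty) (hinj : Set.InjOn (fun y => (edge y, sign y)) s)
    (h : ∀ y ∈ s, ∃ y' ∈ s, y' ≠ y ∧ node y' = node y) :
    ∃ T : β → ℝ, (∃ y ∈ s, T (edge y) ≠ 0) ∧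
      ∀ n, ∑ y ∈ s with node y = n, (if sign y then 1 else -1) * T (edge y) = 0 := by
  have hker := not_injective_outflow hs hinj h
  rw [← LinearMap.ker_eq_bot, Submodule.eq_bot_iff] at hker
  push Not at hker
  obtain ⟨T, hT, hT0⟩ := hker
  obtain ⟨T, rfl⟩ : ∃ T' : β → ℝ, (fun e : s.image edge => T' e) = T :=
    ⟨fun e => if h : e ∈ s.image edge then T ⟨e, h⟩ else 0, by simp⟩
  refine ⟨T, ?_, fun n => ?_⟩
  · contrapose! hT0
    funext ⟨e, he⟩
    obtain ⟨y, hy, rfl⟩ := Finset.mem_image.1 he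
    exact hT0 y hy
  · by_cases hn : n ∈ s.image node
    · rw [← outflow_apply T ⟨n, hn⟩, LinearMap.mem_ker.1 hT, Pi.zero_apply]
    · rw [Finset.filter_eq_empty_iff.2 fun y hy hyn => hn (Finset.mem_image.2 ⟨y, hy, hyn⟩),
        Finset.sum_empty]

end Circulation

namespace TriLattice

/-- The edge from `u` to `u + unit k` borders on at most one little triangle of `V`. -/
structure IsBoundaryEdge (V : Set TriLattice) (u : TriLattice) (k : Fin 3) : Prop where
  base_mem : u ∈ V
  end_mem : u + unit k ∈ V
  exists_notMem : ∃ i, i ≠ k ∧ u + unit k + unit i ∉ V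

/-- The edge from `u` to `u + unit k` borders on two little triangles of `V`, on the union of which
`f` is affine. -/
def IsFlatEdge (V : Set TriLattice) (f : TriLattice → ℝ) (u : TriLattice) (k : Fin 3) : Prop :=
  ∀ i j, i ≠ j → i ≠ k → j ≠ k → u + unit k + unit i ∈ V ∧ u + unit k + unit j ∈ V ∧
    f u + f (u + unit k) = f (u + unit k + unit i) + f (u + unit k + unit j)

/-- The directions `D` in which `f` can be moved a little so that it stays concave and no integral
increment of `f` changes on an edge which bounds a tile or lies in a triangle with two integral
increments. -/
structure IsFeasibleDirection (V : Set TriLattice) (f D : TriLattice → ℝ) : Prop where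
  diagInvariant : DiagInvariant D
  add_le_add : ∀ p i j, i ≠ j → p ∈ V → p + unit i ∈ V → p + unit j ∈ V → p + unit i + unit j ∈ V →
    f (p + unit i) + f (p + unit j) = f p + f (p + unit i + unit j) →
    D (p + unit i) + D (p + unit j) ≤ D p + D (p + unit i + unit j)
  eq_of_integral_edge : ∀ u k, u ∈ V → u + unit k ∈ V → (∃ z : ℤ, f (u + unit k) - f u = z) →
    ¬ IsFlatEdge V f u k → D (u + unit k) = D u
  eq_of_integral_triangle : ∀ u i j, IsTriangle V u i j → (∃ z : ℤ, f (u + unit i) - f u = z) →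
    (∃ z : ℤ, f (u + unit i + unit j) - f (u + unit i) = z) →
    D (u + unit i) = D u ∧ D (u + unit i + unit j) = D u

/-- `g` has the same increments as `g₀` on the boundary edges and on the edges of the little
triangles where the increments of `g₀` are integral. -/
structure KeepsIntegral (V : Set TriLattice) (g₀ g : TriLattice → ℝ) : Prop where
  boundary : ∀ u k, IsBoundaryEdge V u k → (∃ z : ℤ, g₀ (u + unit k) - g₀ u = z) →
    g (u + unit k) - g u = g₀ (u + unit k) - g₀ u
  triangle : ∀ u i j, IsTriangle V u i j → (∃ z : ℤ, g₀ (u + unit i) - g₀ u = z) →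
    (∃ z : ℤ, g₀ (u + unit i + unit j) - g₀ (u + unit i) = z) →
    g (u + unit i) - g u = g₀ (u + unit i) - g₀ u ∧
    g (u + unit i + unit j) - g (u + unit i) = g₀ (u + unit i + unit j) - g₀ (u + unit i)

/-- The compact polytope of functions over which a strictly convex functional will be maximised.
The bounds on the increments make it compact; being integral and so much weaker in the interior,
they do not exclude any feasible direction. -/
structure IsCandidate (V : Set TriLattice) (g₀ : TriLattice → ℝ) (v₀ : TriLattice) (M : ℤ)
    (g : TriLattice → ℝ) : Prop where
  diagInvariant : DiagInvariant g
  eq_zero_of_notMem : ∀ v, v ∉ V → g v = 0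
  base_eq_zero : g v₀ = 0
  rhombusConcave : RhombusConcave V g
  keepsIntegral : KeepsIntegral V g₀ g
  abs_boundary_le : ∀ u k, IsBoundaryEdge V u k → |g (u + unit k) - g u| ≤ M
  sub_le : ∀ u k, u ∈ V → u + unit k ∈ V → g (u + unit k) - g u ≤ 2 * M + 1

section Candidates

variable {V : Set TriLattice} {f g g₀ D : TriLattice → ℝ} {u v v₀ : TriLattice} {M : ℤ}
  {i j k : Fin 3}

lemma IsBoundaryEdge.not_isFlatEdge (h : IsBoundaryEdge V u k) : ¬ IsFlatEdge V f u k := by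
  obtain ⟨i, hik, hi⟩ := h.exists_notMem
  intro hflat
  obtain ⟨j, hij, hkj⟩ := exists_third hik
  exact hi (hflat i j hij hik hkj.symm).1

lemma isClosed_isCandidate (V : Set TriLattice) (g₀ : TriLattice → ℝ) (v₀ : TriLattice) (M : ℤ) :
    IsClosed {g | IsCandidate V g₀ v₀ M g} := by
  refine isClosed_of_closure_subset fun g hg => ?_
  have eq_of {φ ψ : (TriLattice → ℝ) → ℝ} (hφ : Continuous φ) (hψ : Continuous ψ)
      (h : ∀ g, IsCandidate V g₀ v₀ M g → φ g = ψ g) : φ g = ψ g :=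
    closure_minimal h (isClosed_eq hφ hψ) hg
  have le_of {φ ψ : (TriLattice → ℝ) → ℝ} (hφ : Continuous φ) (hψ : Continuous ψ)
      (h : ∀ g, IsCandidate V g₀ v₀ M g → φ g ≤ ψ g) : φ g ≤ ψ g :=
    closure_minimal h (isClosed_le hφ hψ) hg
  exact
    { diagInvariant p n := eq_of (by fun_prop) (by fun_prop) fun g h => h.diagInvariant p n
      eq_zero_of_notMem v hv :=
        eq_of (by fun_prop) (by fun_prop) fun g h => h.eq_zero_of_notMem v hv
      base_eq_zero := eq_of (by fun_prop) (by fun_prop) fun g h => h.base_eq_zero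
      rhombusConcave p i j hij h₀ hi hj htop :=
        le_of (by fun_prop) (by fun_prop) fun g h => h.rhombusConcave p i j hij h₀ hi hj htop
      keepsIntegral :=
        { boundary u k hu hz :=
            eq_of (by fun_prop) (by fun_prop) fun g h => h.keepsIntegral.boundary u k hu hz
          triangle u i j hu hi hj :=
            ⟨eq_of (by fun_prop) (by fun_prop) fun g h =>
              (h.keepsIntegral.triangle u i j hu hi hj).1,
            eq_of (by fun_prop) (by fun_prop) fun g h =>
              (h.keepsIntegral.triangle u i j hu hi hj).2⟩ }
      abs_boundary_le u k hu :=
        le_of (by fun_prop) (by fun_prop) fun g h => h.abs_boundary_le u k hu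
      sub_le u k hu hk := le_of (by fun_prop) (by fun_prop) fun g h => h.sub_le u k hu hk }

lemma IsTriangle.triangleGradient_le {B : ℝ} (h : IsTriangle V u i j) (hV : IsTriRegion V)
    (hinv : DiagInvariant g) (hB : ∀ u k, u ∈ V → u + unit k ∈ V → g (u + unit k) - g u ≤ B)
    (l : Fin 3) : triangleGradient g u i j l ≤ B := by
  obtain ⟨k, hik, hjk⟩ := exists_third h.ne
  have hclose : u + unit i + unit j + unit k = u + diag 1 := by
    rw [← unit_add_unit_add_unit h.ne hik hjk]
    abel
  unfold triangleGradient
  split_ifs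
  · exact hB u i h.base_mem h.mid_mem
  · exact hB _ j h.mid_mem h.top_mem
  · have := hB _ k h.top_mem (hclose ▸ hV.add_diag_mem _ _ h.base_mem)
    rwa [hclose, hinv] at this

lemma pairing_le {P : Fin 3 → ℝ} {B : ℝ} (hP : ∑ l, P l = 0) (h : ∀ l, P l ≤ B)
    (v : TriLattice) : pairing P v ≤ ∑ l, 2 * B * |(v l : ℝ)| := by
  refine Finset.sum_le_sum fun l _ => (le_abs_self _).trans ?_
  rw [abs_mul]
  refine mul_le_mul_of_nonneg_right (abs_le.2 ?_) (abs_nonneg _)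
  rw [Fin.sum_univ_three] at hP
  have h₀ := h 0
  have h₁ := h 1
  have h₂ := h 2
  fin_cases l <;> constructor <;> simp <;> linarith

lemma sub_le_of_increments_le {B : ℝ} (hV : IsTriRegion V) (hg : RhombusConcave V g)
    (hinv : DiagInvariant g) (hB : ∀ u k, u ∈ V → u + unit k ∈ V → g (u + unit k) - g u ≤ B)
    (hu : u ∈ V) (hv : v ∈ V) : g v - g u ≤ ∑ l, 2 * B * |((v - u) l : ℝ)| := by
  obtain ⟨i, j, h⟩ := hV.exists_isTriangle hu
  have hsupport := (h.tile_triangleGradient hV hg hinv).base_mem.2 v hv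
  have := pairing_le (sum_triangleGradient g u h.ne) (h.triangleGradient_le hV hinv hB) (v - u)
  rw [pairing_sub] at this
  simp only [Pi.sub_apply] at this ⊢
  linarith

lemma exists_forall_isCandidate_abs_le (hV : IsTriRegion V) (hv₀ : v₀ ∈ V) (g₀ : TriLattice → ℝ)
    (M : ℤ) : ∃ C : TriLattice → ℝ, ∀ g, IsCandidate V g₀ v₀ M g → ∀ v, |g v| ≤ C v := by
  refine ⟨fun v => abs (∑ l, 2 * (2 * M + 1 : ℝ) * |((v - v₀) l : ℝ)|), fun g hg v => ?_⟩
  by_cases hv : v ∈ V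
  · have hle : ∀ {x y}, x ∈ V → y ∈ V → _ :=
      sub_le_of_increments_le hV hg.rhombusConcave hg.diagInvariant hg.sub_le
    have h₁ := hle hv₀ hv
    have h₂ := hle hv hv₀
    simp only [hg.base_eq_zero, Pi.sub_apply, Int.cast_sub, abs_sub_comm (v₀ _ : ℝ)] at h₁ h₂ ⊢
    exact (abs_le'.2 ⟨by linarith, by linarith⟩).trans (le_abs_self _)
  · rw [hg.eq_zero_of_notMem v hv, abs_zero]
    exact abs_nonneg _

lemma isCompact_isCandidate (hV : IsTriRegion V) (hv₀ : v₀ ∈ V) (g₀ : TriLattice → ℝ) (M : ℤ) :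
    IsCompact {g | IsCandidate V g₀ v₀ M g} := by
  obtain ⟨C, hC⟩ := exists_forall_isCandidate_abs_le hV hv₀ g₀ M
  exact IsCompact.of_isClosed_subset
    (isCompact_univ_pi fun v => isCompact_Icc (a := -C v) (b := C v))
    (isClosed_isCandidate V g₀ v₀ M) fun g hg v _ => abs_le.1 (hC g hg v)

lemma IsTriRegion.add_diag_mem_iff (hV : IsTriRegion V) {n : ℤ} : u + diag n ∈ V ↔ u ∈ V := by
  refine ⟨fun h => ?_, hV.add_diag_mem _ _⟩
  simpa [add_assoc, ← diag_add, diag_zero] using hV.add_diag_mem _ (-n) h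

lemma IsBoundaryEdge.of_add_diag {n : ℤ} (h : IsBoundaryEdge V (u + diag n) k)
    (hV : IsTriRegion V) : IsBoundaryEdge V u k := by
  obtain ⟨hbase, hend, hout⟩ := h
  simp only [add_right_comm _ (diag n), hV.add_diag_mem_iff] at hbase hend hout
  exact ⟨hbase, hend, hout⟩

lemma IsTriRegion.sub_diag_mem_slice (hV : IsTriRegion V) (hu : u ∈ V) :
    u - diag (u 2) ∈ hV.finite_slice.toFinset := by
  refine hV.finite_slice.mem_toFinset.2 ⟨?_, by simp [diag_apply]⟩
  rwa [← hV.add_diag_mem_iff (n := u 2), sub_add_cancel]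

lemma IsTriRegion.forall_mem_of_slice (hV : IsTriRegion V) {p : TriLattice → Prop}
    (hadd : ∀ u n, p u → p (u + diag n)) (h : ∀ u ∈ hV.finite_slice.toFinset, p u)
    (hu : u ∈ V) : p u := by
  simpa using hadd _ (u 2) (h _ (hV.sub_diag_mem_slice hu))

lemma IsTriRegion.eventually_forall_mem (hV : IsTriRegion V) {α : Type*} {l : Filter α}
    {p : α → TriLattice → Prop} (hadd : ∀ a u n, p a u → p a (u + diag n))
    (h : ∀ u ∈ V, ∀ᶠ a in l, p a u) : ∀ᶠ a in l, ∀ u ∈ V, p a u := by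
  have hslice : ∀ᶠ a in l, ∀ u ∈ hV.finite_slice.toFinset, p a u :=
    (Filter.eventually_all_finset _).2 fun u hu => h u (hV.finite_slice.mem_toFinset.1 hu).1
  filter_upwards [hslice] with a ha u hu
  exact hV.forall_mem_of_slice (hadd a) ha hu

lemma eventually_add_mul_nonneg {a b : ℝ} (ha : 0 ≤ a) (hb : a = 0 → 0 ≤ b) :
    ∀ᶠ ε in nhdsWithin (0 : ℝ) (Set.Ioi 0), 0 ≤ a + ε * b := by
  rcases ha.eq_or_lt with rfl | ha
  · filter_upwards [self_mem_nhdsWithin] with ε hε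
    simpa using mul_nonneg (le_of_lt hε) (hb rfl)
  · have hcont : Filter.Tendsto (fun ε : ℝ => a + ε * b) (nhds 0) (nhds (a + 0 * b)) :=
      Continuous.tendsto (by fun_prop) 0
    have hpos := hcont.eventually (lt_mem_nhds (by simpa using ha))
    filter_upwards [hpos.filter_mono nhdsWithin_le_nhds] with ε hε using hε.le

lemma DiagInvariant.add_smul (hf : DiagInvariant f) (hD : DiagInvariant D) (ε : ℝ) :
    DiagInvariant (f + ε • D) := fun p n => by
  simp only [Pi.add_apply, Pi.smul_apply, hf p n, hD p n]

lemma KeepsIntegral.add_smul (h : KeepsIntegral V g₀ g) (hD : IsFeasibleDirection V g D) (ε : ℝ) :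
    KeepsIntegral V g₀ (g + ε • D) where
  boundary u k hu hz := by
    have hg := h.boundary u k hu hz
    have := hD.eq_of_integral_edge u k hu.base_mem hu.end_mem (hg ▸ hz) hu.not_isFlatEdge
    simp only [Pi.add_apply, Pi.smul_apply, this]
    linarith
  triangle u i j hu hi hj := by
    obtain ⟨hgi, hgj⟩ := h.triangle u i j hu hi hj
    obtain ⟨hDi, hDj⟩ := hD.eq_of_integral_triangle u i j hu (hgi ▸ hi) (hgj ▸ hj)
    simp only [Pi.add_apply, Pi.smul_apply, hDi, hDj]
    constructor <;> linarith

lemma IsFeasibleDirection.eventually_rhombusConcave (hD : IsFeasibleDirection V f D)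
    (hV : IsTriRegion V) (hf : RhombusConcave V f) (hinv : DiagInvariant f) :
    ∀ᶠ ε in nhdsWithin (0 : ℝ) (Set.Ioi 0), RhombusConcave V (f + ε • D) := by
  have key : ∀ᶠ ε in nhdsWithin (0 : ℝ) (Set.Ioi 0), ∀ u ∈ V, ∀ i j, i ≠ j → u + unit i ∈ V →
      u + unit j ∈ V → u + unit i + unit j ∈ V →
      0 ≤ f u + f (u + unit i + unit j) - f (u + unit i) - f (u + unit j) +
        ε * (D u + D (u + unit i + unit j) - D (u + unit i) - D (u + unit j)) := by
    refine hV.eventually_forall_mem (fun ε u n h => ?_) fun u hu => ?_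
    · simpa only [add_right_comm _ (diag n), hV.add_diag_mem_iff, hinv _ n,
        hD.diagInvariant _ n] using h
    · simp only [Filter.eventually_all]
      intro i j hij hi hj htop
      refine eventually_add_mul_nonneg (by linarith [hf u i j hij hu hi hj htop]) fun h => ?_
      linarith [hD.add_le_add u i j hij hu hi hj htop (by linarith)]
  filter_upwards [key] with ε hε u i j hij hu hi hj htop
  have := hε u hu i j hij hi hj htop
  simp only [Pi.add_apply, Pi.smul_apply, smul_eq_mul]
  linarith

lemma IsCandidate.eventually_abs_boundary_le (hg : IsCandidate V g₀ v₀ M g) (hV : IsTriRegion V)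
    (hD : IsFeasibleDirection V g D) : ∀ᶠ ε in nhdsWithin (0 : ℝ) (Set.Ioi 0),
      ∀ u k, IsBoundaryEdge V u k → |(g + ε • D) (u + unit k) - (g + ε • D) u| ≤ M := by
  have key : ∀ᶠ ε in nhdsWithin (0 : ℝ) (Set.Ioi 0), ∀ u ∈ V, ∀ k, IsBoundaryEdge V u k →
      |(g + ε • D) (u + unit k) - (g + ε • D) u| ≤ M := by
    refine hV.eventually_forall_mem (fun ε u n h k hk => ?_) fun u _ => ?_
    · simpa only [add_right_comm _ (diag n), (hg.diagInvariant.add_smul hD.diagInvariant ε) _ n]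
        using h k (hk.of_add_diag hV)
    · simp only [Filter.eventually_all]
      intro k hk
      obtain ⟨hlow, hhigh⟩ := abs_le.1 (hg.abs_boundary_le u k hk)
      have hconst : ∀ z : ℤ, g (u + unit k) - g u = z → D (u + unit k) = D u := fun z hz =>
        hD.eq_of_integral_edge u k hk.base_mem hk.end_mem ⟨z, hz⟩ hk.not_isFlatEdge
      filter_upwards [eventually_add_mul_nonneg (a := M - (g (u + unit k) - g u))
          (b := D u - D (u + unit k)) (by linarith) fun h => by
            rw [hconst M (by linarith), sub_self],
        eventually_add_mul_nonneg (a := M + (g (u + unit k) - g u))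
          (b := D (u + unit k) - D u) (by linarith) fun h => by
            rw [hconst (-M) (by push_cast; linarith), sub_self]] with ε h₁ h₂
      simp only [Pi.add_apply, Pi.smul_apply, smul_eq_mul]
      exact abs_le.2 ⟨by linarith, by linarith⟩
  filter_upwards [key] with ε hε u k hk using hε u hk.base_mem k hk

end Candidates

/-- No nonzero feasible direction which vanishes at `v₀` is nonnegative or reversible.  A maximiser
of a strictly convex functional which is increasing in each value has this property. -/
def IsRigid (V : Set TriLattice) (v₀ : TriLattice) (g : TriLattice → ℝ) : Prop :=
  ∀ D, IsFeasibleDirection V g D → (∀ v, v ∉ V → D v = 0) → D v₀ = 0 →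
    ((∀ v, 0 ≤ D v) ∨ IsFeasibleDirection V g (-D)) → D = 0

section Maximum

variable {V : Set TriLattice} {g g₀ D : TriLattice → ℝ} {u v v₀ : TriLattice} {M : ℤ}
  {i j k : Fin 3}

lemma IsCandidate.increment_le_of_isFlatEdge (hg : IsCandidate V g₀ v₀ M g) (hV : IsTriRegion V)
    (hu : u ∈ V) (hout : ∀ j, j ≠ i → u + unit j ∉ V) (hflat : IsFlatEdge V g u i) :
    g (u + unit i) - g u ≤ 2 * M := by
  obtain ⟨j, hij⟩ := exists_ne i
  obtain ⟨k, hjk, hik⟩ := exists_third hij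
  obtain ⟨hj, hk, heq⟩ := hflat j k hjk hij hik.symm
  have hreturn : ∀ {j k}, i ≠ j → i ≠ k → j ≠ k → u + unit i + unit j ∈ V →
      |g u - g (u + unit i + unit j)| ≤ M := fun {j k} hij hik hjk hj => by
    have hclose : u + unit i + unit j + unit k = u + diag 1 := by
      rw [← unit_add_unit_add_unit hij hik hjk]
      abel
    have := hg.abs_boundary_le _ k ⟨hj, hclose ▸ hV.add_diag_mem _ _ hu, j, hjk, by
      rw [hclose, add_right_comm, hV.add_diag_mem_iff]
      exact hout j hij.symm⟩
    rwa [hclose, hg.diagInvariant] at this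
  have h₁ := neg_le_of_abs_le (hreturn hij.symm hik hjk hj)
  have h₂ := neg_le_of_abs_le (hreturn hik hij.symm hjk.symm hk)
  linarith

/-- Equality in the bound on an increment propagates along flat rhombi, up to an edge where the
increment cannot change. -/
lemma IsCandidate.le_of_increment_eq (hg : IsCandidate V g₀ v₀ M g) (hV : IsTriRegion V)
    (hD : IsFeasibleDirection V g D) (hu : u ∈ V) (hi : u + unit i ∈ V)
    (heq : g (u + unit i) - g u = 2 * M + 1) : D (u + unit i) ≤ D u := by
  induction hn : (∑ l, (maxDiff V l i - (u l - u i))).toNat using Nat.strong_induction_on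
    generalizing u with
  | _ n ih =>
  by_cases hout : ∀ j, j ≠ i → u + unit j ∉ V
  · have hz : ∃ z : ℤ, g (u + unit i) - g u = z := ⟨2 * M + 1, by rw [heq]; push_cast; rfl⟩
    refine (hD.eq_of_integral_edge u i hu hi hz fun h => ?_).le
    linarith [hg.increment_le_of_isFlatEdge hV hu hout h]
  · push Not at hout
    obtain ⟨j, hji, hj⟩ := hout
    obtain ⟨k, hjk, hik⟩ := exists_third hji
    have htop := hV.add_unit_add_unit_mem hji.symm hi hj
    have hcomm : u + unit j + unit i = u + unit i + unit j := add_right_comm _ _ _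
    have hrhombus := hg.rhombusConcave u i j hji.symm hu hi hj htop
    have hbound := hg.sub_le (u + unit j) i hj (hcomm ▸ htop)
    rw [hcomm] at hbound
    have hdecr : ∑ l, (maxDiff V l i - ((u + unit j) l - (u + unit j) i)) <
        ∑ l, (maxDiff V l i - (u l - u i)) := by
      simp only [sum_eq hji hjk hik, Pi.add_apply, unit_self, unit_of_ne hji.symm,
        unit_of_ne hjk.symm]
      omega
    have hnonneg : 0 ≤ ∑ l, (maxDiff V l i - ((u + unit j) l - (u + unit j) i)) :=
      Finset.sum_nonneg fun l _ => sub_nonneg.2 (hV.sub_le_maxDiff hj l i)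
    have hstep := ih _ (by omega) hj (hcomm ▸ htop) (by rw [hcomm]; linarith) rfl
    rw [hcomm] at hstep
    linarith [hD.add_le_add u i j hji.symm hu hi hj htop (by linarith)]

lemma IsCandidate.eventually_sub_le (hg : IsCandidate V g₀ v₀ M g) (hV : IsTriRegion V)
    (hD : IsFeasibleDirection V g D) : ∀ᶠ ε in nhdsWithin (0 : ℝ) (Set.Ioi 0), ∀ u k, u ∈ V →
      u + unit k ∈ V → (g + ε • D) (u + unit k) - (g + ε • D) u ≤ 2 * M + 1 := by
  have key : ∀ᶠ ε in nhdsWithin (0 : ℝ) (Set.Ioi 0), ∀ u ∈ V, ∀ k, u + unit k ∈ V →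
      (g + ε • D) (u + unit k) - (g + ε • D) u ≤ 2 * M + 1 := by
    refine hV.eventually_forall_mem (fun ε u n h => ?_) fun u hu => ?_
    · simpa only [add_right_comm _ (diag n), hV.add_diag_mem_iff,
        (hg.diagInvariant.add_smul hD.diagInvariant ε) _ n] using h
    · simp only [Filter.eventually_all]
      intro k hk
      filter_upwards [eventually_add_mul_nonneg (a := 2 * M + 1 - (g (u + unit k) - g u))
        (b := D u - D (u + unit k)) (by linarith [hg.sub_le u k hu hk]) fun h => by
          linarith [hg.le_of_increment_eq hV hD hu hk (by linarith)]] with ε hε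
      simp only [Pi.add_apply, Pi.smul_apply, smul_eq_mul]
      linarith
  filter_upwards [key] with ε hε u k hu hk using hε u hu k hk

theorem IsCandidate.eventually_add_smul (hg : IsCandidate V g₀ v₀ M g) (hV : IsTriRegion V)
    (hD : IsFeasibleDirection V g D) (hoff : ∀ v, v ∉ V → D v = 0) (hv₀ : D v₀ = 0) :
    ∀ᶠ ε in nhdsWithin (0 : ℝ) (Set.Ioi 0), IsCandidate V g₀ v₀ M (g + ε • D) := by
  filter_upwards [hD.eventually_rhombusConcave hV hg.rhombusConcave hg.diagInvariant,
    hg.eventually_abs_boundary_le hV hD, hg.eventually_sub_le hV hD] with ε hconcave habs hle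
  exact
    { diagInvariant := hg.diagInvariant.add_smul hD.diagInvariant ε
      eq_zero_of_notMem v hv := by simp [hg.eq_zero_of_notMem v hv, hoff v hv]
      base_eq_zero := by simp [hg.base_eq_zero, hv₀]
      rhombusConcave := hconcave
      keepsIntegral := hg.keepsIntegral.add_smul hD ε
      abs_boundary_le := habs
      sub_le := hle }

lemma exists_isCandidate (hV : IsTriRegion V) (hg₀ : RhombusConcave V g₀)
    (hinv : DiagInvariant g₀) (hv₀ : v₀ ∈ V) : ∃ M g, IsCandidate V g₀ v₀ M g := by
  set S := hV.finite_slice.toFinset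
  set B : ℝ := ∑ u ∈ S, ∑ k, |g₀ (u + unit k) - g₀ u|
  have hB : ∀ u ∈ V, ∀ k, |g₀ (u + unit k) - g₀ u| ≤ ⌈B⌉ := fun u hu =>
    hV.forall_mem_of_slice (p := fun u => ∀ k, |g₀ (u + unit k) - g₀ u| ≤ ⌈B⌉)
      (fun u n h => by simpa only [add_right_comm _ (diag n), hinv _ n] using h)
      (fun u hu k => ((Finset.single_le_sum (f := fun k => |g₀ (u + unit k) - g₀ u|)
        (fun _ _ => abs_nonneg _) (Finset.mem_univ k)).trans (Finset.single_le_sum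
          (f := fun u => ∑ k, |g₀ (u + unit k) - g₀ u|)
          (fun _ _ => Finset.sum_nonneg fun _ _ => abs_nonneg _) hu)).trans (Int.le_ceil B)) hu
  have hzero : 0 ≤ (⌈B⌉ : ℝ) := (abs_nonneg _).trans (hB v₀ hv₀ 0)
  refine ⟨⌈B⌉, fun v => if v ∈ V then g₀ v - g₀ v₀ else 0, ?_⟩
  exact
    { diagInvariant p n := by simp only [hV.add_diag_mem_iff, hinv p n]
      eq_zero_of_notMem v hv := if_neg hv
      base_eq_zero := by simp
      rhombusConcave p i j hij h₀ hi hj htop := by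
        simp only [h₀, hi, hj, htop, if_true]
        linarith [hg₀ p i j hij h₀ hi hj htop]
      keepsIntegral :=
        { boundary u k hu _ := by simp [hu.base_mem, hu.end_mem]
          triangle u i j hu _ _ := by simp [hu.base_mem, hu.mid_mem, hu.top_mem] }
      abs_boundary_le u k hu := by simpa [hu.base_mem, hu.end_mem] using hB u hu.base_mem k
      sub_le u k hu hk := by
        have := (abs_le.1 (hB u hu k)).2
        simp only [hu, hk, if_true]
        linarith }

lemma sum_sq_lt_sum_add_sq {ι : Type*} {S : Finset ι} {a d : ι → ℝ} (hd : ∃ v ∈ S, d v ≠ 0)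
    (h : 0 ≤ ∑ v ∈ S, a v * d v) : ∑ v ∈ S, a v ^ 2 < ∑ v ∈ S, (a v + d v) ^ 2 := by
  obtain ⟨w, hw, hne⟩ := hd
  have hpos : 0 < ∑ v ∈ S, d v ^ 2 :=
    Finset.sum_pos' (fun _ _ => sq_nonneg _) ⟨w, hw, by positivity⟩
  have hexpand : ∑ v ∈ S, (a v + d v) ^ 2 =
      ∑ v ∈ S, a v ^ 2 + 2 * ∑ v ∈ S, a v * d v + ∑ v ∈ S, d v ^ 2 := by
    simp only [Finset.mul_sum, ← Finset.sum_add_distrib]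
    exact Finset.sum_congr rfl fun v _ => by ring
  linarith

/-- The maximum of `∑ v, (g v + C v) ^ 2`, where `C` is so large that all the bases are nonnegative,
is not attained at `g` if it increases in the direction `D` or is stationary along `± D`. -/
theorem exists_isRigid (hV : IsTriRegion V) (hg₀ : RhombusConcave V g₀)
    (hinv : DiagInvariant g₀) (hv₀ : v₀ ∈ V) :
    ∃ g, RhombusConcave V g ∧ DiagInvariant g ∧ KeepsIntegral V g₀ g ∧ IsRigid V v₀ g := by
  obtain ⟨M, hM⟩ := exists_isCandidate hV hg₀ hinv hv₀
  obtain ⟨C, hC⟩ := exists_forall_isCandidate_abs_le hV hv₀ g₀ M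
  set S := hV.finite_slice.toFinset
  obtain ⟨g, hg, hmax⟩ := (isCompact_isCandidate hV hv₀ g₀ M).exists_isMaxOn hM
    (f := fun g => ∑ v ∈ S, (g v + C v) ^ 2) (by fun_prop)
  refine ⟨g, hg.rhombusConcave, hg.diagInvariant, hg.keepsIntegral, fun D hD hoff hzero hcase => ?_⟩
  have vanishes : ∀ D, IsFeasibleDirection V g D → (∀ v, v ∉ V → D v = 0) → D v₀ = 0 →
      0 ≤ ∑ v ∈ S, (g v + C v) * D v → D = 0 := fun D hD hoff hzero hsum => by
    have hslice : ∀ v ∈ S, D v = 0 := by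
      by_contra! hne
      obtain ⟨ε, hε, hpos⟩ :=
        ((hg.eventually_add_smul hV hD hoff hzero).and self_mem_nhdsWithin).exists
      have hpos : 0 < ε := hpos
      have := sum_sq_lt_sum_add_sq (a := fun v => g v + C v) (d := ε • D)
        (hne.imp fun v hv => ⟨hv.1, mul_ne_zero hpos.ne' hv.2⟩) (by
          simpa [Finset.mul_sum, mul_left_comm] using mul_nonneg hpos.le hsum)
      refine this.not_ge ((hmax hε).trans_eq' ?_)
      simp [add_right_comm]
    funext v
    by_cases hv : v ∈ V
    · exact hV.forall_mem_of_slice (fun u n h => (hD.diagInvariant u n).trans h) hslice hv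
    · exact hoff v hv
  rcases hcase with hnonneg | hneg
  · exact vanishes D hD hoff hzero <| Finset.sum_nonneg fun v _ =>
      mul_nonneg (by linarith [(abs_le.1 (hC g hg v)).1]) (hnonneg v)
  · rcases le_total 0 (∑ v ∈ S, (g v + C v) * D v) with hsum | hsum
    · exact vanishes D hD hoff hzero hsum
    · exact neg_eq_zero.1 (vanishes (-D) hneg (fun v hv => by simp [hoff v hv]) (by simp [hzero])
        (by simpa using hsum))

/-- The point with coordinates `-maxDiff V 0 l` lies on all the sides `(0, l)`. -/
lemma IsTriRegion.exists_corner (hV : IsTriRegion V) :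
    ∃ v ∈ V, ∀ k, ¬ (v + unit k ∈ V ∧ v - unit k ∈ V) := by
  have hself := hV.maxDiff_self 0
  refine ⟨fun l => -maxDiff V 0 l, hV.mem_iff.2 fun i j => ?_, fun k ⟨hadd, hsub⟩ => ?_⟩
  · linarith [hV.maxDiff_le_add 0 j i]
  · rcases eq_or_ne k 0 with rfl | hk
    · have := hV.sub_le_maxDiff hadd 0 1
      simp [unit_self, unit_of_ne, hself] at this
    · have := hV.sub_le_maxDiff hsub 0 k
      simp [unit_self, unit_of_ne hk.symm, hself] at this

end Maximum

/-- The function on `V` obtained by gluing the inflations of the tiles of `g`, weighted by the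
fractionality of their gradients. -/
def globalInflation (V : Set TriLattice) (g : TriLattice → ℝ) (v : TriLattice) : ℝ :=
  if h : ∃ P, IsTileGradient V g P ∧ v ∈ tile V g P then
    inflation (tile V g h.choose) (fracWeight h.choose) v
  else 0

section GlobalInflation

variable {V Q : Set TriLattice} {g : TriLattice → ℝ} {P : Fin 3 → ℝ} {u v v₀ : TriLattice}
  {i j k : Fin 3}

lemma inflation_add_diag (Q : Set TriLattice) (ν : Fin 3 → ℤ) (v : TriLattice) (n : ℤ) :
    inflation Q ν (v + diag n) = inflation Q ν v := by
  have h : touchedSides Q (v + diag n) = touchedSides Q v := by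
    ext ⟨i, j⟩
    simp only [mem_touchedSides, Pi.add_apply, diag_apply, add_sub_add_right_eq_sub]
  simp only [inflation, h]

lemma globalInflation_of_notMem (hv : v ∉ V) : globalInflation V g v = 0 :=
  dif_neg fun ⟨_, _, h⟩ => hv h.1

lemma isFlatEdge_of_mem_tile (hP : ∑ l, P l = 0) (hij : i ≠ j) (hik : i ≠ k) (hjk : j ≠ k)
    (h₀ : u ∈ tile V g P) (hk : u + unit k ∈ tile V g P) (hi : u + unit k + unit i ∈ tile V g P)
    (hj : u + unit k + unit j ∈ tile V g P) : IsFlatEdge V g u k := by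
  have heq : g u + g (u + unit k) = g (u + unit k + unit i) + g (u + unit k + unit j) := by
    rw [sum_eq hij hik hjk] at hP
    linarith [sub_eq_of_mem_tile h₀ hk, sub_eq_of_mem_tile hk hi, sub_eq_of_mem_tile hk hj]
  intro a b hab hak hbk
  rcases (by omega : a = i ∧ b = j ∨ a = j ∧ b = i) with ⟨rfl, rfl⟩ | ⟨rfl, rfl⟩
  · exact ⟨hi.1, hj.1, heq⟩
  · exact ⟨hj.1, hi.1, by rw [heq, add_comm]⟩

lemma IsTriRegion.sub_eq_maxDiff_of_notMem (hQ : IsTriRegion Q) (hij : i ≠ j) (hik : i ≠ k)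
    (hjk : j ≠ k) (h₀ : u ∈ Q) (hk : u + unit k ∈ Q) (hout : u + unit k + unit i ∉ Q) :
    u i - u j = maxDiff Q i j := by
  rw [hQ.mem_iff_of_ne hij hik hjk] at h₀ hk hout
  simp only [Pi.add_apply, unit_self, unit_of_ne hij.symm, unit_of_ne hik,
    unit_of_ne hik.symm, unit_of_ne hjk] at h₀ hk hout
  omega

variable (hV : IsTriRegion V) (hg : RhombusConcave V g) (hinv : DiagInvariant g)
include hV hg hinv

lemma exists_mem_tile (hv : v ∈ V) : ∃ P, IsTileGradient V g P ∧ v ∈ tile V g P := by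
  obtain ⟨i, j, h⟩ := hV.exists_isTriangle hv
  exact ⟨_, h.isTileGradient hV hg hinv, (h.tile_triangleGradient hV hg hinv).base_mem⟩

lemma globalInflation_of_mem_tile (hP : IsTileGradient V g P) (hv : v ∈ tile V g P) :
    globalInflation V g v = inflation (tile V g P) (fracWeight P) v := by
  have h : ∃ P, IsTileGradient V g P ∧ v ∈ tile V g P := ⟨P, hP, hv⟩
  obtain ⟨hP', hv'⟩ := h.choose_spec
  rw [globalInflation, dif_pos h, inflation_eq_of_mem_tile hP'.sum_eq_zero hP.sum_eq_zero
    (hP'.isTriRegion hV hg hinv) (hP.isTriRegion hV hg hinv) hv' hv]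

lemma diagInvariant_globalInflation : DiagInvariant (globalInflation V g) := fun p n => by
  by_cases hp : p ∈ V
  · obtain ⟨P, hP, hpP⟩ := exists_mem_tile hV hg hinv hp
    rw [globalInflation_of_mem_tile hV hg hinv hP hpP, globalInflation_of_mem_tile hV hg hinv hP
      ((hP.isTriRegion hV hg hinv).add_diag_mem _ n hpP), inflation_add_diag]
  · rw [globalInflation_of_notMem hp, globalInflation_of_notMem (hV.add_diag_mem_iff.not.2 hp)]

lemma exists_isBoundaryEdge_tile (hu : u ∈ V) (hk : u + unit k ∈ V)
    (hflat : ¬ IsFlatEdge V g u k) :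
    ∃ P, IsTileGradient V g P ∧ IsBoundaryEdge (tile V g P) u k := by
  obtain ⟨j, h⟩ := hV.exists_isTriangle_of_edge hu hk
  obtain ⟨i, hki, hji⟩ := exists_third h.ne
  have hP := h.isTileGradient hV hg hinv
  obtain ⟨hkj, h₀, h₁, h₂⟩ := h.tile_triangleGradient hV hg hinv
  exact ⟨_, hP, h₀, h₁, i, hki.symm, fun h₃ => hflat (isFlatEdge_of_mem_tile hP.sum_eq_zero
    hji.symm hki.symm hkj.symm h₀ h₁ h₃ h₂)⟩

lemma globalInflation_eq_of_integral_edge (hu : u ∈ V) (hk : u + unit k ∈ V)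
    (hz : ∃ z : ℤ, g (u + unit k) - g u = z) (hflat : ¬ IsFlatEdge V g u k) :
    globalInflation V g (u + unit k) = globalInflation V g u := by
  obtain ⟨P, hP, h₀, h₁, i, hik, hout⟩ := exists_isBoundaryEdge_tile hV hg hinv hu hk hflat
  obtain ⟨j, hij, hkj⟩ := exists_third hik
  have hside := (hP.isTriRegion hV hg hinv).sub_eq_maxDiff_of_notMem hij hik hkj.symm h₀ h₁ hout
  have hweight : fracWeight P k = 0 :=
    fracWeight_eq_zero_iff.2 (by rwa [← sub_eq_of_mem_tile h₀ h₁])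
  have hzero : ∀ {v}, v ∈ tile V g P → v i - v j = u i - u j → globalInflation V g v = 0 :=
    fun {v} hv hvu => by
      rw [globalInflation_of_mem_tile hV hg hinv hP hv, inflation_eq_zero_of_touches hij hik
        hkj.symm (hvu.trans hside) hweight, Int.cast_zero]
  rw [hzero h₀ rfl, hzero h₁ (by simp [unit_of_ne hik, unit_of_ne hkj.symm])]

lemma globalInflation_eq_of_integral_triangle (h : IsTriangle V u i j)
    (hi : ∃ z : ℤ, g (u + unit i) - g u = z)
    (hj : ∃ z : ℤ, g (u + unit i + unit j) - g (u + unit i) = z) :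
    globalInflation V g (u + unit i) = globalInflation V g u ∧
      globalInflation V g (u + unit i + unit j) = globalInflation V g u := by
  obtain ⟨k, hik, hjk⟩ := exists_third h.ne
  have hP := h.isTileGradient hV hg hinv
  obtain ⟨hij, h₀, h₁, h₂⟩ := h.tile_triangleGradient hV hg hinv
  rw [sub_eq_of_mem_tile h₀ h₁, ← fracWeight_eq_zero_iff] at hi
  rw [sub_eq_of_mem_tile h₁ h₂, ← fracWeight_eq_zero_iff] at hj
  have hweight : ∀ l, fracWeight (triangleGradient g u i j) l = 0 := (forall_iff hij hik hjk).2
    ⟨hi, hj, fracWeight_eq_zero_of_eq_zero hP.sum_eq_zero hij hik hjk hi hj⟩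
  have hzero : ∀ {v}, v ∈ tile V g (triangleGradient g u i j) → globalInflation V g v = 0 :=
    fun hv => by
      rw [globalInflation_of_mem_tile hV hg hinv hP hv, inflation_eq_zero_of_forall hweight,
        Int.cast_zero]
  rw [hzero h₀, hzero h₁, hzero h₂]
  exact ⟨rfl, rfl⟩

lemma IsTriangle.add_unit_mem_tile (h : IsTriangle V u i j) (hj : u + unit j ∈ V)
    (heq : g (u + unit i) + g (u + unit j) = g u + g (u + unit i + unit j)) :
    u + unit j ∈ tile V g (triangleGradient g u i j) := by
  obtain ⟨-, h₀, h₁, h₂⟩ := h.tile_triangleGradient hV hg hinv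
  refine mem_tile_of_sub_pairing_eq h₀ hj ?_
  rw [pairing_add, pairing_unit, ← sub_eq_of_mem_tile h₁ h₂]
  linarith

theorem isFeasibleDirection_globalInflation :
    IsFeasibleDirection V g (globalInflation V g) where
  diagInvariant := diagInvariant_globalInflation hV hg hinv
  add_le_add p i j hij h₀ hi hj htop heq := by
    have h : IsTriangle V p i j := ⟨hij, h₀, hi, htop⟩
    have hP := h.isTileGradient hV hg hinv
    obtain ⟨-, h₀, h₁, h₂⟩ := h.tile_triangleGradient hV hg hinv
    have h₃ := h.add_unit_mem_tile hV hg hinv hj heq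
    simp only [globalInflation_of_mem_tile hV hg hinv hP, h₀, h₁, h₂, h₃]
    exact (hP.isTriRegion hV hg hinv).rhombusConcave_inflation (fracWeight_eq_zero_or_one _)
      (sum_fracWeight_ne_one hP.sum_eq_zero) p i j hij h₀ h₁ h₃ h₂
  eq_of_integral_edge _ _ := globalInflation_eq_of_integral_edge hV hg hinv
  eq_of_integral_triangle _ _ _ := globalInflation_eq_of_integral_triangle hV hg hinv

lemma globalInflation_nonneg (v : TriLattice) : 0 ≤ globalInflation V g v := by
  by_cases hv : v ∈ V
  · obtain ⟨P, hP, hvP⟩ := exists_mem_tile hV hg hinv hv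
    rw [globalInflation_of_mem_tile hV hg hinv hP hvP]
    exact_mod_cast inflation_nonneg (hP.isTriRegion hV hg hinv) (fracWeight_nonneg P) v
  · rw [globalInflation_of_notMem hv]

lemma globalInflation_eq_zero_of_corner (hv : v ∈ V)
    (hcorner : ∀ k, ¬ (v + unit k ∈ V ∧ v - unit k ∈ V)) : globalInflation V g v = 0 := by
  obtain ⟨P, hP, hvP⟩ := exists_mem_tile hV hg hinv hv
  have hQ := hP.isTriRegion hV hg hinv
  have htouched : ∀ k, (∃ l, (k, l) ∈ touchedSides (tile V g P) v) ∨
      ∃ l, (l, k) ∈ touchedSides (tile V g P) v := fun k => by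
    by_contra! h
    exact hcorner k ⟨(hQ.add_unit_mem hvP h.1).1, (hQ.sub_unit_mem hvP h.2).1⟩
  rw [globalInflation_of_mem_tile hV hg hinv hP hvP]
  rcases touchedSides_cases (tile V g P) v with h | ⟨i, j, hij, h⟩ | h
  · simp [h] at htouched
  · obtain ⟨k, hik, hjk⟩ := exists_third hij
    have := htouched k
    simp [h, hik.symm, hjk.symm] at this
  · rw [inflation_of_touchedSides_nontrivial h, Int.cast_zero]

theorem IsRigid.inflation_eq_zero (hrigid : IsRigid V v₀ g) (hv₀ : v₀ ∈ V)
    (hcorner : ∀ k, ¬ (v₀ + unit k ∈ V ∧ v₀ - unit k ∈ V)) (hP : IsTileGradient V g P)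
    (hv : v ∈ tile V g P) : inflation (tile V g P) (fracWeight P) v = 0 := by
  have hzero := hrigid _ (isFeasibleDirection_globalInflation hV hg hinv)
    (fun _ => globalInflation_of_notMem)
    (globalInflation_eq_zero_of_corner hV hg hinv hv₀ hcorner)
    (Or.inl (globalInflation_nonneg hV hg hinv))
  have := globalInflation_of_mem_tile hV hg hinv hP hv
  rw [hzero, Pi.zero_apply] at this
  exact_mod_cast this.symm

end GlobalInflation

/-- The two directions other than `k`, indexed by a Boolean. The pair
`(flank k b, flank k !b)` encodes one of the two orientations of a side parallel to `unit k`. -/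
def flank (k : Fin 3) (b : Bool) : Fin 3 := if b then k + 2 else k + 1

lemma flank_ne (k : Fin 3) (b : Bool) : flank k b ≠ k := by
  cases b <;> fin_cases k <;> simp [flank]

lemma flank_ne_flank_not (k : Fin 3) (b : Bool) : flank k b ≠ flank k (!b) := by
  cases b <;> fin_cases k <;> simp [flank]

lemma exists_flank_eq {i j k : Fin 3} (hij : i ≠ j) (hik : i ≠ k) (hjk : j ≠ k) :
    ∃ b, i = flank k b ∧ j = flank k (!b) := by
  fin_cases i <;> fin_cases j <;> fin_cases k <;> simp [flank] at hij hik hjk ⊢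

/-- The length of the side of a region parallel to `unit k` with orientation `b`. -/
def flankLength (Q : Set TriLattice) (k : Fin 3) (b : Bool) : ℤ :=
  sideLength Q (flank k b) (flank k !b) k

/-- The starting point of the side of a region parallel to `unit k` with orientation `b`. -/
def flankStart (Q : Set TriLattice) (k : Fin 3) (b : Bool) : TriLattice :=
  sideStart Q (flank k b) (flank k !b) k

/-- The excess of the sides of a region of orientation `true` over the parallel ones of orientation
`false`; it is the same in all three directions. -/
def excess (Q : Set TriLattice) : ℤ :=
  maxDiff Q 0 1 + maxDiff Q 1 2 + maxDiff Q 2 0 - (maxDiff Q 1 0 + maxDiff Q 0 2 + maxDiff Q 2 1)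

lemma flankLength_sub_flankLength (Q : Set TriLattice) (k : Fin 3) :
    flankLength Q k true - flankLength Q k false = excess Q := by
  fin_cases k <;> simp [flankLength, sideLength, flank, excess] <;> ring

/-- The representative of a lattice point modulo `diag` whose last coordinate vanishes. -/
def normalize (u : TriLattice) : TriLattice := u - diag (u 2)

lemma normalize_add_diag (u : TriLattice) (n : ℤ) : normalize (u + diag n) = normalize u := by
  funext l
  simp [normalize, diag_apply]

section FlankLength

variable {Q : Set TriLattice} {k k' : Fin 3} {b : Bool} {u : TriLattice}

namespace IsTriRegion

lemma flankLength_nonneg (hQ : IsTriRegion Q) (k : Fin 3) (b : Bool) : 0 ≤ flankLength Q k b :=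
  hQ.sideLength_nonneg _ _ _

lemma one_le_flankLength_add_flankLength (hQ : IsTriRegion Q) (hk : k ≠ k') (b : Bool) :
    1 ≤ flankLength Q k b + flankLength Q k' (!b) := by
  have := hQ.one_le_maxDiff_add_maxDiff (show (0 : Fin 3) ≠ 1 by decide)
  have := hQ.one_le_maxDiff_add_maxDiff (show (0 : Fin 3) ≠ 2 by decide)
  have := hQ.one_le_maxDiff_add_maxDiff (show (1 : Fin 3) ≠ 2 by decide)
  cases b <;> fin_cases k <;> fin_cases k' <;>
    simp [flankLength, sideLength, flank] at hk ⊢ <;> omega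

lemma flankStart_mem (hQ : IsTriRegion Q) (k : Fin 3) (b : Bool) : flankStart Q k b ∈ Q :=
  hQ.sideStart_mem (flank_ne_flank_not k b) (flank_ne k b) (flank_ne k !b)

lemma flankStart_add_unit_mem (hQ : IsTriRegion Q) (h : 0 < flankLength Q k b) :
    flankStart Q k b + unit k ∈ Q := by
  simpa [flankStart] using hQ.sideStart_add_mem (flank_ne_flank_not k b) (flank_ne k b)
    (flank_ne k !b) zero_le_one h

lemma flankStart_add_unit_add_unit_mem (hQ : IsTriRegion Q) (k : Fin 3) (b : Bool) :
    flankStart Q k b + unit k + unit (flank k !b) ∈ Q := by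
  have hij := flank_ne_flank_not k b
  have hik := flank_ne k b
  have hjk := flank_ne k !b
  rw [hQ.mem_iff_of_ne hij hik hjk]
  have := hQ.one_le_maxDiff_add_maxDiff hij
  have := hQ.one_le_maxDiff_add_maxDiff hik
  have := hQ.maxDiff_le_add (flank k b) (flank k !b) k
  have := hQ.maxDiff_le_add (flank k b) k (flank k !b)
  simp only [flankStart, Pi.add_apply, unit_self, unit_of_ne hij, unit_of_ne hik, unit_of_ne hjk,
    unit_of_ne hjk.symm, sideStart_fst, sideStart_snd Q hij, sideStart_thd Q hik hjk]
  omega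

lemma isTriangle_flankStart (hQ : IsTriRegion Q) (h : 0 < flankLength Q k b) :
    IsTriangle Q (flankStart Q k b) k (flank k !b) :=
  ⟨(flank_ne k !b).symm, hQ.flankStart_mem k b, hQ.flankStart_add_unit_mem h,
    hQ.flankStart_add_unit_add_unit_mem k b⟩

/-- A boundary edge lies on one of the two parallel sides, and if that side has length at most one
then it is the whole side. -/
lemma exists_flank_of_isBoundaryEdge (hQ : IsTriRegion Q) (h : IsBoundaryEdge Q u k) :
    ∃ b, 0 < flankLength Q k b ∧
      (flankLength Q k b ≤ 1 → normalize (flankStart Q k b) = normalize u) := by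
  obtain ⟨i, hik, hout⟩ := h.exists_notMem
  obtain ⟨j, hij, hkj⟩ := exists_third hik
  obtain ⟨b, rfl, rfl⟩ := exists_flank_eq hij hik hkj.symm
  have hside := hQ.sub_eq_maxDiff_of_notMem hij hik hkj.symm h.base_mem h.end_mem hout
  have hstart := hQ.sub_le_maxDiff h.base_mem (flank k b) k
  have hend := hQ.sub_le_maxDiff h.end_mem k (flank k !b)
  simp only [Pi.add_apply, unit_self, unit_of_ne hkj.symm] at hend
  refine ⟨b, by unfold flankLength sideLength; omega, fun hle => ?_⟩
  unfold flankLength sideLength at hle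
  have hu : u = flankStart Q k b + diag (u (flank k !b)) := by
    refine (ext_iff hij hik hkj.symm).2 ⟨?_, ?_, ?_⟩ <;>
      simp only [flankStart, Pi.add_apply, diag_apply, sideStart_fst, sideStart_snd Q hij,
        sideStart_thd Q hik hkj.symm] <;> omega
  rw [hu, normalize_add_diag]

/-- The point at unit distance inside one vertex of a region all of whose sides have positive
length. -/
lemma exists_touchedSides_eq_empty (hQ : IsTriRegion Q) (h : ∀ k b, flankLength Q k b ≠ 0) :
    ∃ v ∈ Q, touchedSides Q v = ∅ := by
  have hpos := fun k b => (hQ.flankLength_nonneg k b).lt_of_ne (h k b).symm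
  simp only [Fin.forall_fin_succ, Bool.forall_bool, flankLength, sideLength, flank] at hpos
  refine ⟨sideStart Q 0 1 2 - unit 0, ?_, ?_⟩
  · rw [hQ.mem_iff_of_ne (i := 0) (j := 1) (k := 2) (by simp) (by simp) (by simp)]
    simp [sideStart, unit] at hpos ⊢
    omega
  · refine Finset.eq_empty_of_forall_notMem fun ⟨i, j⟩ hmem => ?_
    obtain ⟨hij, heq⟩ := mem_touchedSides.1 hmem
    fin_cases i <;> fin_cases j <;> simp [sideStart, unit] at hpos hij heq <;> omega

end IsTriRegion

lemma exists_flankLength_eq_zero {P : Fin 3 → ℝ} (hQ : IsTriRegion Q) (hP : ∑ l, P l = 0)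
    (hF : ∀ v ∈ Q, inflation Q (fracWeight P) v = 0) (hk : fracWeight P k ≠ 0) :
    ∃ l b, flankLength Q l b = 0 := by
  by_contra! h
  obtain ⟨v, hv, hvt⟩ := hQ.exists_touchedSides_eq_empty h
  exact touchedSides_ne_empty hQ hP hk (hF v hv) hvt

lemma flankLength_le_one {ν : Fin 3 → ℤ} (hQ : IsTriRegion Q)
    (hF : ∀ v ∈ Q, inflation Q ν v = 0) (hk : ν k ≠ 0) (b : Bool) : flankLength Q k b ≤ 1 :=
  sideLength_le_one hQ hF (flank_ne_flank_not k b) (flank_ne k b) (flank_ne k !b) hk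

lemma exists_orientation {ν : Fin 3 → ℤ} (hQ : IsTriRegion Q)
    (hF : ∀ v ∈ Q, inflation Q ν v = 0) (hexcess : excess Q ≠ 0) :
    ∃ b, ∀ k, ν k ≠ 0 → 0 < flankLength Q k b ∧ flankLength Q k (!b) = 0 := by
  rcases hexcess.lt_or_gt with hneg | hpos
  · refine ⟨false, fun k hk => ?_⟩
    have := flankLength_sub_flankLength Q k
    have := flankLength_le_one hQ hF hk false
    have := hQ.flankLength_nonneg k true
    rw [Bool.not_false]
    omega
  · refine ⟨true, fun k hk => ?_⟩
    have := flankLength_sub_flankLength Q k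
    have := flankLength_le_one hQ hF hk true
    have := hQ.flankLength_nonneg k false
    rw [Bool.not_true]
    omega

end FlankLength

/-- All tiles of `g` have vanishing inflation, where fractional increments are inflated. -/
def IsDeflated (V : Set TriLattice) (g : TriLattice → ℝ) : Prop :=
  ∀ P, IsTileGradient V g P → ∀ v ∈ tile V g P, inflation (tile V g P) (fracWeight P) v = 0

/-- The first edge of a side of a tile, as a starting point modulo `diag` and a direction. -/
def sideEdge (V : Set TriLattice) (g : TriLattice → ℝ) (P : Fin 3 → ℝ) (k : Fin 3) (b : Bool) :
    TriLattice × Fin 3 :=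
  (normalize (flankStart (tile V g P) k b), k)

/-- The value of a flow `T` on edges at a side of a tile, where integral sides carry no flow. -/
def sideFlow (V : Set TriLattice) (g : TriLattice → ℝ) (T : TriLattice × Fin 3 → ℝ)
    (P : Fin 3 → ℝ) (b : Bool) (k : Fin 3) : ℝ :=
  if fracWeight P k = 0 then 0 else T (sideEdge V g P k b)

/-- Conservation of a flow at a tile: flow passes straight through tiles of zero excess, and splits
with total zero among the three fractional sides of the dominant orientation of the other tiles. -/
structure IsConserved (V : Set TriLattice) (g : TriLattice → ℝ) (T : TriLattice × Fin 3 → ℝ)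
    (P : Fin 3 → ℝ) : Prop where
  sum_eq_zero (b : Bool) : excess (tile V g P) ≠ 0 →
    (∀ k, fracWeight P k ≠ 0 → 0 < flankLength (tile V g P) k b) →
    ∑ k, sideFlow V g T P b k = 0
  eq_of_excess_eq_zero (k : Fin 3) : excess (tile V g P) = 0 →
    0 < flankLength (tile V g P) k true → sideFlow V g T P true k = sideFlow V g T P false k

/-- The increments `θ` of an affine function on a tile which agrees with a flow on its sides. -/
structure IsFlowGradient (V : Set TriLattice) (g : TriLattice → ℝ) (T : TriLattice × Fin 3 → ℝ)
    (P θ : Fin 3 → ℝ) : Prop where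
  sum_eq_zero : ∑ k, θ k = 0
  eq_sideFlow (k : Fin 3) (b : Bool) :
    0 < flankLength (tile V g P) k b → θ k = sideFlow V g T P b k
  eq_zero : (∀ k, fracWeight P k = 0) → θ = 0

/-- A dart is a fractional side of positive length of a tile. -/
structure IsDart (V : Set TriLattice) (g : TriLattice → ℝ) (P : Fin 3 → ℝ) (k : Fin 3) (b : Bool) :
    Prop where
  isTileGradient : IsTileGradient V g P
  fracWeight_ne_zero : fracWeight P k ≠ 0
  flankLength_pos : 0 < flankLength (tile V g P) k b

section Dart

variable {V : Set TriLattice} {g : TriLattice → ℝ} {T : TriLattice × Fin 3 → ℝ} {P P' : Fin 3 → ℝ}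
  {k k' : Fin 3} {b b' : Bool}

lemma sideFlow_eq_zero (h : fracWeight P k = 0) : sideFlow V g T P b k = 0 := if_pos h

lemma sideFlow_eq (h : fracWeight P k ≠ 0) : sideFlow V g T P b k = T (sideEdge V g P k b) :=
  if_neg h

variable (hV : IsTriRegion V) (hg : RhombusConcave V g) (hinv : DiagInvariant g)
include hV hg hinv

lemma IsTileGradient.exists_isFlowGradient_of_excess_ne_zero (hP : IsTileGradient V g P)
    (hF : IsDeflated V g) (hexcess : excess (tile V g P) ≠ 0) (hT : IsConserved V g T P) :
    ∃ θ, IsFlowGradient V g T P θ := by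
  obtain ⟨b, hb⟩ := exists_orientation (hP.isTriRegion hV hg hinv) (hF P hP) hexcess
  refine ⟨sideFlow V g T P b, hT.sum_eq_zero b hexcess fun k hk => (hb k hk).1,
    fun k b' hb' => ?_, fun h => funext fun k => sideFlow_eq_zero (h k)⟩
  by_cases hk : fracWeight P k = 0
  · rw [sideFlow_eq_zero hk, sideFlow_eq_zero hk]
  · rcases Bool.eq_or_eq_not b' b with rfl | rfl
    · rfl
    · exact absurd (hb k hk).2 hb'.ne'

/-- Both sides of some direction degenerate to vertices, so the increment in that direction is free
to balance the other two. -/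
lemma IsTileGradient.exists_isFlowGradient_of_excess_eq_zero (hP : IsTileGradient V g P)
    (hF : IsDeflated V g) (hexcess : excess (tile V g P) = 0) (hk : fracWeight P k ≠ 0)
    (hT : IsConserved V g T P) : ∃ θ, IsFlowGradient V g T P θ := by
  obtain ⟨l, c, hl⟩ :=
    exists_flankLength_eq_zero (hP.isTriRegion hV hg hinv) hP.sum_eq_zero (hF P hP) hk
  have hdiff := flankLength_sub_flankLength (tile V g P)
  have hl : ∀ b, flankLength (tile V g P) l b = 0 := by
    have := hdiff l
    cases c <;> exact Bool.forall_bool.2 (by omega)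
  set flow := sideFlow V g T P true
  refine ⟨fun m => if m = l then flow l - ∑ m, flow m else flow m, ?_, fun m b hb => ?_,
    fun h => absurd (h k) hk⟩
  · have h := Finset.sum_update_of_mem (Finset.mem_univ l) flow (flow l - ∑ m, flow m)
    have h' := Finset.add_sum_erase Finset.univ flow (Finset.mem_univ l)
    rw [← Finset.erase_eq] at h
    simp only [Function.update_apply] at h
    linarith
  · have hml : m ≠ l := fun h => hb.ne' (h ▸ hl b)
    rw [if_neg hml]
    cases b with
    | true => rfl
    | false => exact hT.eq_of_excess_eq_zero m hexcess (by have := hdiff m; omega)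

theorem IsTileGradient.exists_isFlowGradient (hP : IsTileGradient V g P) (hF : IsDeflated V g)
    (hT : IsConserved V g T P) : ∃ θ, IsFlowGradient V g T P θ := by
  by_cases hfrac : ∀ k, fracWeight P k = 0
  · exact ⟨0, by simp, fun k b _ => (sideFlow_eq_zero (hfrac k)).symm, fun _ => rfl⟩
  push Not at hfrac
  obtain ⟨k, hk⟩ := hfrac
  by_cases hexcess : excess (tile V g P) = 0
  · exact hP.exists_isFlowGradient_of_excess_eq_zero hV hg hinv hF hexcess hk hT
  · exact hP.exists_isFlowGradient_of_excess_ne_zero hV hg hinv hF hexcess hT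

lemma IsTileGradient.eq_triangleGradient_normalize (hP : IsTileGradient V g P) {u : TriLattice}
    {i j : Fin 3} (h : IsTriangle (tile V g P) u i j) :
    P = triangleGradient g (normalize u) i j := by
  have hQ := hP.isTriRegion hV hg hinv
  have hmem : ∀ {v}, v ∈ tile V g P → v - diag (u 2) ∈ tile V g P := fun hv => by
    rwa [← hQ.add_diag_mem_iff (n := u 2), sub_add_cancel]
  refine IsTriangle.eq_triangleGradient ⟨h.ne, hmem h.base_mem, ?_, ?_⟩ hP.sum_eq_zero
  · rw [normalize, sub_add_eq_add_sub]
    exact hmem h.mid_mem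
  · rw [normalize, sub_add_eq_add_sub, sub_add_eq_add_sub]
    exact hmem h.top_mem

lemma finite_setOf_isTileGradient : {P | IsTileGradient V g P}.Finite := by
  refine ((hV.finite_slice.toFinset ×ˢ (Finset.univ : Finset (Fin 3 × Fin 3))).finite_toSet.image
    fun x => triangleGradient g x.1 x.2.1 x.2.2).subset fun P hP => ?_
  obtain ⟨u, i, j, h⟩ := hP.exists_triangle
  refine ⟨(normalize u, i, j), ?_, (hP.eq_triangleGradient_normalize hV hg hinv h).symm⟩
  exact Finset.mem_product.2 ⟨hV.sub_diag_mem_slice h.base_mem.1, Finset.mem_univ _⟩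

lemma IsDart.eq_of_sideEdge_eq (h : IsDart V g P k b) (h' : IsDart V g P' k' b)
    (heq : sideEdge V g P k b = sideEdge V g P' k' b) : P = P' ∧ k = k' := by
  obtain ⟨hstart, rfl⟩ := Prod.ext_iff.1 heq
  have key : ∀ {P}, IsDart V g P k b →
      P = triangleGradient g (normalize (flankStart (tile V g P) k b)) k (flank k !b) := fun h =>
    h.isTileGradient.eq_triangleGradient_normalize hV hg hinv
      ((h.isTileGradient.isTriRegion hV hg hinv).isTriangle_flankStart h.flankLength_pos)
  refine ⟨?_, rfl⟩
  rw [key h, key h']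
  exact congrArg (fun u => triangleGradient g u k _) hstart

end Dart

/-- The vertex of the flow network at which a dart ends. A tile of zero excess contributes one
vertex for each direction, and every other tile a single vertex. -/
def dartNode (V : Set TriLattice) (g : TriLattice → ℝ) (P : Fin 3 → ℝ) (k : Fin 3) :
    (Fin 3 → ℝ) × Option (Fin 3) :=
  (P, if excess (tile V g P) = 0 then some k else none)

section DartNetwork

variable {V : Set TriLattice} {g : TriLattice → ℝ} {T : TriLattice × Fin 3 → ℝ} {P P' : Fin 3 → ℝ}
  {k k' : Fin 3} {b b' : Bool}

lemma dartNode_of_excess_eq_zero (h : excess (tile V g P) = 0) :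
    dartNode V g P k = (P, some k) := by
  rw [dartNode, if_pos h]

lemma dartNode_of_excess_ne_zero (h : excess (tile V g P) ≠ 0) :
    dartNode V g P k = (P, none) := by
  rw [dartNode, if_neg h]

lemma IsDart.not (h : IsDart V g P k b) (hexcess : excess (tile V g P) = 0) :
    IsDart V g P k !b := by
  refine ⟨h.isTileGradient, h.fracWeight_ne_zero, ?_⟩
  have hpos := h.flankLength_pos
  have hdiff := flankLength_sub_flankLength (tile V g P) k
  cases b <;> simp only [Bool.not_true, Bool.not_false] <;> omega

variable (hV : IsTriRegion V) (hg : RhombusConcave V g) (hinv : DiagInvariant g)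
include hV hg hinv

lemma finite_setOf_isDart :
    {y : (Fin 3 → ℝ) × Fin 3 × Bool | IsDart V g y.1 y.2.1 y.2.2}.Finite :=
  ((finite_setOf_isTileGradient hV hg hinv).prod Set.finite_univ).subset
    fun _ h => ⟨h.isTileGradient, Set.mem_univ _⟩

variable (hF : IsDeflated V g)
include hF

lemma IsDart.exists_orientation (h : IsDart V g P k b) (hexcess : excess (tile V g P) ≠ 0) :
    ∀ k', fracWeight P k' ≠ 0 → 0 < flankLength (tile V g P) k' b ∧
      flankLength (tile V g P) k' (!b) = 0 := by
  obtain ⟨c, hc⟩ := TriLattice.exists_orientation (h.isTileGradient.isTriRegion hV hg hinv)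
    (hF P h.isTileGradient) hexcess
  rcases Bool.eq_or_eq_not b c with rfl | rfl
  · exact hc
  · exact absurd (hc k h.fracWeight_ne_zero).2 h.flankLength_pos.ne'

lemma IsDart.orientation_eq (h : IsDart V g P k b) (h' : IsDart V g P k' b')
    (hexcess : excess (tile V g P) ≠ 0) : b' = b := by
  refine (Bool.eq_or_eq_not b' b).resolve_right ?_
  rintro rfl
  exact h'.flankLength_pos.ne'
    (h.exists_orientation hV hg hinv hF hexcess k' h'.fracWeight_ne_zero).2

lemma IsDart.exists_ne_dartNode_eq (h : IsDart V g P k b) :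
    ∃ k' b', IsDart V g P k' b' ∧ (k', b') ≠ (k, b) ∧ dartNode V g P k' = dartNode V g P k := by
  by_cases hexcess : excess (tile V g P) = 0
  · exact ⟨k, !b, h.not hexcess, by simp, rfl⟩
  · obtain ⟨k', hk', hfrac⟩ :=
      exists_ne_fracWeight_ne_zero h.isTileGradient.sum_eq_zero h.fracWeight_ne_zero
    refine ⟨k', b, ⟨h.isTileGradient, hfrac,
      (h.exists_orientation hV hg hinv hF hexcess k' hfrac).1⟩, by simp [hk'.symm], ?_⟩
    rw [dartNode_of_excess_ne_zero hexcess, dartNode_of_excess_ne_zero hexcess]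

section Conservation

variable {s : Finset ((Fin 3 → ℝ) × Fin 3 × Bool)}
  (hs : ∀ P k b, (P, k, b) ∈ s ↔ IsDart V g P k b)
include hs

omit hF in
lemma injOn_sideEdge :
    Set.InjOn (fun y : (Fin 3 → ℝ) × Fin 3 × Bool => (sideEdge V g y.1 y.2.1 y.2.2, y.2.2)) s := by
  rintro ⟨P, k, b⟩ hy ⟨P', k', b'⟩ hy' heq
  obtain ⟨hedge, rfl : b = b'⟩ := Prod.ext_iff.1 heq
  obtain ⟨rfl, rfl⟩ :=
    ((hs P k b).1 hy).eq_of_sideEdge_eq hV hg hinv ((hs P' k' b).1 hy') hedge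
  rfl

lemma exists_mem_ne_dartNode_eq : ∀ y ∈ s,
    ∃ y' ∈ s, y' ≠ y ∧ dartNode V g y'.1 y'.2.1 = dartNode V g y.1 y.2.1 := by
  rintro ⟨P, k, b⟩ hy
  obtain ⟨k', b', hdart, hne, hnode⟩ := ((hs P k b).1 hy).exists_ne_dartNode_eq hV hg hinv hF
  exact ⟨(P, k', b'), (hs _ _ _).2 hdart, by simpa using hne, hnode⟩

lemma filter_dartNode_of_excess_ne_zero (hP : IsTileGradient V g P)
    (hexcess : excess (tile V g P) ≠ 0)
    (hb : ∀ k, fracWeight P k ≠ 0 → 0 < flankLength (tile V g P) k b) :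
    {y ∈ s | dartNode V g y.1 y.2.1 = (P, none)} =
      ({k | fracWeight P k ≠ 0} : Finset (Fin 3)).image (fun k => (P, k, b)) := by
  ext ⟨P', k', b'⟩
  simp only [Finset.mem_filter, Finset.mem_image, Finset.mem_univ, true_and, hs]
  constructor
  · rintro ⟨hy, hn⟩
    obtain rfl : P' = P := congrArg Prod.fst hn
    have hy' : IsDart V g P' k' b := ⟨hP, hy.fracWeight_ne_zero, hb k' hy.fracWeight_ne_zero⟩
    exact ⟨k', hy.fracWeight_ne_zero, by rw [hy'.orientation_eq hV hg hinv hF hy hexcess]⟩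
  · rintro ⟨k, hk, heq⟩
    obtain ⟨rfl, rfl, rfl⟩ : P = P' ∧ k = k' ∧ b = b' := by simpa using heq
    exact ⟨⟨hP, hk, hb k hk⟩, dartNode_of_excess_ne_zero hexcess⟩

omit hV hg hinv hF in
lemma filter_dartNode_of_excess_eq_zero (hexcess : excess (tile V g P) = 0)
    (hdart : IsDart V g P k true) :
    {y ∈ s | dartNode V g y.1 y.2.1 = (P, some k)} = {(P, k, true), (P, k, false)} := by
  ext ⟨P', k', b'⟩
  simp only [Finset.mem_filter, Finset.mem_insert, Finset.mem_singleton, hs]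
  constructor
  · rintro ⟨-, hn⟩
    obtain rfl : P' = P := congrArg Prod.fst hn
    obtain rfl : k' = k := by simpa [dartNode_of_excess_eq_zero hexcess] using hn
    cases b' <;> simp
  · rintro (heq | heq) <;> obtain ⟨rfl, rfl, rfl⟩ : P' = P ∧ k' = k ∧ _ := by simpa using heq
    · exact ⟨hdart, dartNode_of_excess_eq_zero hexcess⟩
    · exact ⟨hdart.not hexcess, dartNode_of_excess_eq_zero hexcess⟩

lemma isConserved_of_sum_eq_zero
    (hT : ∀ n, ∑ y ∈ s with dartNode V g y.1 y.2.1 = n,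
      (if y.2.2 then 1 else -1) * T (sideEdge V g y.1 y.2.1 y.2.2) = 0)
    (hP : IsTileGradient V g P) : IsConserved V g T P where
  sum_eq_zero b hexcess hb := by
    have hsum := hT (P, none)
    rw [filter_dartNode_of_excess_ne_zero hV hg hinv hF hs hP hexcess hb,
      Finset.sum_image fun _ _ _ _ h => congrArg (fun y => y.2.1) h] at hsum
    have hsum : (if b then 1 else -1) * ∑ k with fracWeight P k ≠ 0, T (sideEdge V g P k b) = 0 :=
      (Finset.mul_sum ..).trans hsum
    simp only [sideFlow, ← ite_not (fracWeight P _ = 0)]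
    rw [← Finset.sum_filter]
    exact (mul_eq_zero.1 hsum).resolve_left (by split_ifs <;> norm_num)
  eq_of_excess_eq_zero k hexcess hpos := by
    by_cases hk : fracWeight P k = 0
    · rw [sideFlow_eq_zero hk, sideFlow_eq_zero hk]
    have hsum := hT (P, some k)
    rw [filter_dartNode_of_excess_eq_zero hs hexcess ⟨hP, hk, hpos⟩,
      Finset.sum_pair (by simp)] at hsum
    rw [sideFlow_eq hk, sideFlow_eq hk]
    simpa [add_neg_eq_zero] using hsum

end Conservation

theorem IsDart.exists_isConserved (h : IsDart V g P k b) :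
    ∃ T, (∃ P k b, IsDart V g P k b ∧ T (sideEdge V g P k b) ≠ 0) ∧
      ∀ P, IsTileGradient V g P → IsConserved V g T P := by
  set s := (finite_setOf_isDart hV hg hinv).toFinset
  have hs : ∀ P k b, (P, k, b) ∈ s ↔ IsDart V g P k b := fun P k b => by simp [s]
  obtain ⟨T, ⟨⟨P, k, b⟩, hy, hTy⟩, hT⟩ := exists_circulation ⟨(P, k, b), (hs P k b).2 h⟩
    (injOn_sideEdge hV hg hinv hs) (exists_mem_ne_dartNode_eq hV hg hinv hF hs)
  refine ⟨T, ⟨P, k, b, (hs P k b).1 hy, hTy⟩, fun P hP =>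
    isConserved_of_sum_eq_zero hV hg hinv hF hs (fun n => ?_) hP⟩
  convert hT n

end DartNetwork

/-- The edge function whose value on the edges of each tile is given by the increments chosen for
that tile. -/
def gluedIncrement (V : Set TriLattice) (g : TriLattice → ℝ) (θ : (Fin 3 → ℝ) → Fin 3 → ℝ)
    (u : TriLattice) (k : Fin 3) : ℝ :=
  if h : ∃ P, IsTileGradient V g P ∧ u ∈ tile V g P ∧ u + unit k ∈ tile V g P then
    θ h.choose k
  else 0

/-- A function which is affine on each tile, with prescribed increments. -/
structure IsTilePotential (V : Set TriLattice) (g : TriLattice → ℝ)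
    (θ : (Fin 3 → ℝ) → Fin 3 → ℝ) (S : TriLattice → ℝ) : Prop where
  diagInvariant : DiagInvariant S
  sub_eq : ∀ {P u k}, IsTileGradient V g P → u ∈ tile V g P → u + unit k ∈ tile V g P →
    S (u + unit k) - S u = θ P k

section TilePotential

variable {V : Set TriLattice} {g : TriLattice → ℝ} {T : TriLattice × Fin 3 → ℝ} {P P' : Fin 3 → ℝ}
  {θ : (Fin 3 → ℝ) → Fin 3 → ℝ} {S : TriLattice → ℝ} {u v₀ : TriLattice} {k : Fin 3} {b : Bool}

variable (hV : IsTriRegion V) (hg : RhombusConcave V g) (hinv : DiagInvariant g)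
include hV hg hinv

lemma IsFlowGradient.eq_of_isBoundaryEdge {φ : Fin 3 → ℝ} (h : IsFlowGradient V g T P φ)
    (hF : IsDeflated V g) (hP : IsTileGradient V g P)
    (hedge : IsBoundaryEdge (tile V g P) u k) :
    φ k = if fracWeight P k = 0 then 0 else T (normalize u, k) := by
  have hQ := hP.isTriRegion hV hg hinv
  obtain ⟨b, hpos, hstart⟩ := hQ.exists_flank_of_isBoundaryEdge hedge
  rw [h.eq_sideFlow k b hpos, sideFlow, sideEdge]
  by_cases hk : fracWeight P k = 0
  · rw [if_pos hk, if_pos hk]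
  · rw [hstart (flankLength_le_one hQ (hF P hP) hk b)]

lemma isBoundaryEdge_tile_of_ne (hP : IsTileGradient V g P) (hP' : IsTileGradient V g P')
    (hne : P ≠ P') (h₀ : u ∈ tile V g P) (h₁ : u + unit k ∈ tile V g P)
    (h₀' : u ∈ tile V g P') (h₁' : u + unit k ∈ tile V g P') :
    IsBoundaryEdge (tile V g P) u k := by
  obtain ⟨j, h'⟩ := (hP'.isTriRegion hV hg hinv).exists_isTriangle_of_edge h₀' h₁'
  refine ⟨h₀, h₁, j, h'.ne.symm, fun h₂ => hne ?_⟩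
  rw [h'.eq_triangleGradient hP'.sum_eq_zero]
  exact IsTriangle.eq_triangleGradient ⟨h'.ne, h₀, h₁, h₂⟩ hP.sum_eq_zero

section FlowGradient

variable (hF : IsDeflated V g)
  (hθ : ∀ P, IsTileGradient V g P → IsFlowGradient V g T P (θ P))
include hF hθ

lemma flowGradient_eq_of_common_edge (hP : IsTileGradient V g P) (hP' : IsTileGradient V g P')
    (h₀ : u ∈ tile V g P) (h₁ : u + unit k ∈ tile V g P)
    (h₀' : u ∈ tile V g P') (h₁' : u + unit k ∈ tile V g P') : θ P k = θ P' k := by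
  by_cases hne : P = P'
  · rw [hne]
  have hk : P k = P' k := by rw [← sub_eq_of_mem_tile h₀ h₁, ← sub_eq_of_mem_tile h₀' h₁']
  have hfrac : fracWeight P k = fracWeight P' k := by simp only [fracWeight, hk]
  rw [(hθ P hP).eq_of_isBoundaryEdge hV hg hinv hF hP
      (isBoundaryEdge_tile_of_ne hV hg hinv hP hP' hne h₀ h₁ h₀' h₁'),
    (hθ P' hP').eq_of_isBoundaryEdge hV hg hinv hF hP'
      (isBoundaryEdge_tile_of_ne hV hg hinv hP' hP (Ne.symm hne) h₀' h₁' h₀ h₁), hfrac]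

lemma gluedIncrement_eq (hP : IsTileGradient V g P) (h₀ : u ∈ tile V g P)
    (h₁ : u + unit k ∈ tile V g P) : gluedIncrement V g θ u k = θ P k := by
  have h : ∃ P, IsTileGradient V g P ∧ u ∈ tile V g P ∧ u + unit k ∈ tile V g P := ⟨P, hP, h₀, h₁⟩
  obtain ⟨hP', h₀', h₁'⟩ := h.choose_spec
  rw [gluedIncrement, dif_pos h]
  exact flowGradient_eq_of_common_edge hV hg hinv hF hθ hP' hP h₀' h₁' h₀ h₁

omit hF hθ in
lemma gluedIncrement_add_diag (u : TriLattice) (n : ℤ) (k : Fin 3) :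
    gluedIncrement V g θ (u + diag n) k = gluedIncrement V g θ u k := by
  have h : ∀ P, (IsTileGradient V g P ∧ u + diag n ∈ tile V g P ∧
      u + diag n + unit k ∈ tile V g P) ↔
        IsTileGradient V g P ∧ u ∈ tile V g P ∧ u + unit k ∈ tile V g P := fun P =>
    and_congr_right fun hP => by
      have hQ := hP.isTriRegion hV hg hinv
      rw [add_right_comm, hQ.add_diag_mem_iff, hQ.add_diag_mem_iff]
  simp only [gluedIncrement, h]

lemma isLatticeCocirculation_gluedIncrement : IsLatticeCocirculation V (gluedIncrement V g θ) where
  add_diag := gluedIncrement_add_diag hV hg hinv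
  sum_eq_zero u i j k hij hik hjk h₀ h₁ h₂ := by
    have h : IsTriangle V u i j := ⟨hij, h₀, h₁, h₂⟩
    have hP := h.isTileGradient hV hg hinv
    obtain ⟨-, h₀, h₁, h₂⟩ := h.tile_triangleGradient hV hg hinv
    have h₃ : u + unit i + unit j + unit k ∈ tile V g (triangleGradient g u i j) := by
      rw [add_assoc, add_assoc, ← add_assoc (unit i), unit_add_unit_add_unit hij hik hjk]
      exact (hP.isTriRegion hV hg hinv).add_diag_mem _ _ h₀
    rw [gluedIncrement_eq hV hg hinv hF hθ hP h₀ h₁, gluedIncrement_eq hV hg hinv hF hθ hP h₁ h₂,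
      gluedIncrement_eq hV hg hinv hF hθ hP h₂ h₃, ← sum_eq hij hik hjk]
    exact (hθ _ hP).sum_eq_zero

lemma exists_isTilePotential : ∃ S, IsTilePotential V g θ S := by
  obtain ⟨S, hinvS, hS⟩ :=
    (isLatticeCocirculation_gluedIncrement hV hg hinv hF hθ).exists_potential hV
  exact ⟨S, hinvS, fun hP h₀ h₁ => by
    rw [hS _ _ h₀.1 h₁.1, gluedIncrement_eq hV hg hinv hF hθ hP h₀ h₁]⟩

lemma IsTilePotential.eq_of_integral_edge (hS : IsTilePotential V g θ S) (hu : u ∈ V)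
    (hk : u + unit k ∈ V) (hz : ∃ z : ℤ, g (u + unit k) - g u = z)
    (hflat : ¬ IsFlatEdge V g u k) : S (u + unit k) = S u := by
  obtain ⟨P, hP, hedge⟩ := exists_isBoundaryEdge_tile hV hg hinv hu hk hflat
  rw [sub_eq_of_mem_tile hedge.base_mem hedge.end_mem, ← fracWeight_eq_zero_iff] at hz
  rw [← sub_eq_zero, hS.sub_eq hP hedge.base_mem hedge.end_mem,
    (hθ P hP).eq_of_isBoundaryEdge hV hg hinv hF hP hedge, if_pos hz]

omit hF in
lemma IsTilePotential.eq_of_integral_triangle (hS : IsTilePotential V g θ S) {i j : Fin 3}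
    (h : IsTriangle V u i j) (hi : ∃ z : ℤ, g (u + unit i) - g u = z)
    (hj : ∃ z : ℤ, g (u + unit i + unit j) - g (u + unit i) = z) :
    S (u + unit i) = S u ∧ S (u + unit i + unit j) = S u := by
  obtain ⟨k, hik, hjk⟩ := exists_third h.ne
  have hP := h.isTileGradient hV hg hinv
  obtain ⟨hij, h₀, h₁, h₂⟩ := h.tile_triangleGradient hV hg hinv
  rw [sub_eq_of_mem_tile h₀ h₁, ← fracWeight_eq_zero_iff] at hi
  rw [sub_eq_of_mem_tile h₁ h₂, ← fracWeight_eq_zero_iff] at hj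
  have hzero := (hθ _ hP).eq_zero ((forall_iff hij hik hjk).2
    ⟨hi, hj, fracWeight_eq_zero_of_eq_zero hP.sum_eq_zero hij hik hjk hi hj⟩)
  have h₁ := hS.sub_eq hP h₀ h₁
  have h₂ := hS.sub_eq hP (u := u + unit i) ‹_› h₂
  rw [hzero, Pi.zero_apply, sub_eq_zero] at h₁ h₂
  exact ⟨h₁, h₂.trans h₁⟩

omit hF hθ in
lemma IsTilePotential.add_eq_add (hS : IsTilePotential V g θ S) {i j : Fin 3}
    (h : IsTriangle V u i j) (hj : u + unit j ∈ V)
    (heq : g (u + unit i) + g (u + unit j) = g u + g (u + unit i + unit j)) :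
    S (u + unit i) + S (u + unit j) = S u + S (u + unit i + unit j) := by
  have hP := h.isTileGradient hV hg hinv
  have h₃ := h.add_unit_mem_tile hV hg hinv hj heq
  obtain ⟨-, h₀, h₁, h₂⟩ := h.tile_triangleGradient hV hg hinv
  linarith [hS.sub_eq hP h₀ h₃, hS.sub_eq hP h₁ h₂]

/-- The scaling `s` covers the direction and its opposite at once. -/
lemma IsTilePotential.isFeasibleDirection (hS : IsTilePotential V g θ S) (v₀ : TriLattice)
    (s : ℝ) : IsFeasibleDirection V g (V.indicator fun v => s * (S v - S v₀)) where
  diagInvariant p n := by simp only [Set.indicator, hV.add_diag_mem_iff, hS.diagInvariant p n]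
  add_le_add p i j hij h₀ hi hj htop heq := by
    simp only [Set.indicator_of_mem, h₀, hi, hj, htop]
    have := hS.add_eq_add hV hg hinv ⟨hij, h₀, hi, htop⟩ hj heq
    exact (by linear_combination s * this : _ = _).le
  eq_of_integral_edge u k hu hk hz hflat := by
    rw [Set.indicator_of_mem hu, Set.indicator_of_mem hk,
      hS.eq_of_integral_edge hV hg hinv hF hθ hu hk hz hflat]
  eq_of_integral_triangle u i j h hi hj := by
    obtain ⟨h₁, h₂⟩ := hS.eq_of_integral_triangle hV hg hinv hθ h hi hj
    rw [Set.indicator_of_mem h.base_mem, Set.indicator_of_mem h.mid_mem,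
      Set.indicator_of_mem h.top_mem, h₁, h₂]
    exact ⟨rfl, rfl⟩

lemma IsRigid.isTilePotential_eq (hrigid : IsRigid V v₀ g) (hS : IsTilePotential V g θ S)
    (hu : u ∈ V) : S u = S v₀ := by
  have hD := hS.isFeasibleDirection hV hg hinv hF hθ v₀
  have hzero := hrigid _ (hD 1) (fun v hv => Set.indicator_of_notMem hv _)
    (by simp [Set.indicator]) (Or.inr ?_)
  · simpa [Set.indicator_of_mem hu, sub_eq_zero] using congrFun hzero u
  · convert hD (-1) using 1
    rw [← Set.indicator_neg']
    congr 1
    funext v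
    simp

end FlowGradient

theorem IsRigid.not_isDart (hrigid : IsRigid V v₀ g) (hF : IsDeflated V g) :
    ¬ IsDart V g P k b := by
  intro hdart
  obtain ⟨T, ⟨P, k, b, hdart, hT₀⟩, hT⟩ := hdart.exists_isConserved hV hg hinv hF
  have hgrad : ∀ P, ∃ φ, IsTileGradient V g P → IsFlowGradient V g T P φ := fun P => by
    by_cases hP : IsTileGradient V g P
    · obtain ⟨φ, hφ⟩ := hP.exists_isFlowGradient hV hg hinv hF (hT P hP)
      exact ⟨φ, fun _ => hφ⟩
    · exact ⟨0, fun h => absurd h hP⟩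
  choose θ hθ using hgrad
  obtain ⟨S, hS⟩ := exists_isTilePotential hV hg hinv hF hθ
  obtain ⟨hP, hk, hpos⟩ := hdart
  have hQ := hP.isTriRegion hV hg hinv
  have hedge := hQ.isTriangle_flankStart hpos
  apply hT₀
  rw [← sideFlow_eq (V := V) (g := g) (T := T) (b := b) hk, ← (hθ P hP).eq_sideFlow k b hpos,
    ← hS.sub_eq hP hedge.base_mem hedge.mid_mem,
    hrigid.isTilePotential_eq hV hg hinv hF hθ hS hedge.base_mem.1,
    hrigid.isTilePotential_eq hV hg hinv hF hθ hS hedge.mid_mem.1, sub_self]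

lemma IsRigid.fracWeight_eq_zero (hrigid : IsRigid V v₀ g) (hF : IsDeflated V g)
    (hP : IsTileGradient V g P) (k : Fin 3) : fracWeight P k = 0 := by
  by_contra hk
  obtain ⟨k', hkk', hk'⟩ := exists_ne_fracWeight_ne_zero hP.sum_eq_zero hk
  have h := (hP.isTriRegion hV hg hinv).one_le_flankLength_add_flankLength hkk' true
  have hno {k : Fin 3} (hk : fracWeight P k ≠ 0) (b : Bool) :
      ¬ 0 < flankLength (tile V g P) k b :=
    fun hpos => hrigid.not_isDart hV hg hinv hF ⟨hP, hk, hpos⟩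
  have := hno hk true
  have := hno hk' false
  rw [Bool.not_true] at h
  omega

end TilePotential

theorem exists_integral_keepsIntegral {V : Set TriLattice} {g₀ : TriLattice → ℝ}
    (hV : IsTriRegion V) (hg₀ : RhombusConcave V g₀) (hinv : DiagInvariant g₀) :
    ∃ g, RhombusConcave V g ∧ DiagInvariant g ∧ KeepsIntegral V g₀ g ∧
      ∀ u k, u ∈ V → u + unit k ∈ V → ∃ z : ℤ, g (u + unit k) - g u = z := by
  obtain ⟨v₀, hv₀, hcorner⟩ := hV.exists_corner
  obtain ⟨g, hg, hinv, hkeep, hrigid⟩ := exists_isRigid hV hg₀ hinv hv₀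
  refine ⟨g, hg, hinv, hkeep, fun u k hu hk => ?_⟩
  have hF : IsDeflated V g := fun P hP v hv =>
    hrigid.inflation_eq_zero hV hg hinv hv₀ hcorner hP hv
  obtain ⟨j, h⟩ := hV.exists_isTriangle_of_edge hu hk
  have hmem := h.tile_triangleGradient hV hg hinv
  rw [sub_eq_of_mem_tile hmem.base_mem hmem.mid_mem, ← fracWeight_eq_zero_iff]
  exact hrigid.fracWeight_eq_zero hV hg hinv hF (h.isTileGradient hV hg hinv) k

section Midpoint

variable {ι : Type*} [Finite ι] {s : Set (ι → ℤ)} {p q : ι → ℤ}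

theorem inf_mem_of_floor_midpoint_mem
    (hs : ∀ p ∈ s, ∀ q ∈ s, (fun l => (p l + q l) / 2) ∈ s) (hp : p ∈ s) (hq : q ∈ s) :
    p ⊓ q ∈ s := by
  have := Fintype.ofFinite ι
  suffices key : ∀ (N : ℕ) (p q : ι → ℤ), p ∈ s → q ∈ s → (∀ l, (p l - q l).natAbs ≤ N) →
      p ⊓ q ∈ s from
    key (Finset.univ.sup fun l => (p l - q l).natAbs) p q hp hq fun l =>
      Finset.le_sup (f := fun l => (p l - q l).natAbs) (Finset.mem_univ l)
  intro N
  induction N with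
  | zero =>
    intro p q hp _ h
    have hpq : p = q := funext fun l => by have := h l; omega
    rwa [← hpq, inf_idem]
  | succ N ih =>
    intro p q hp hq h
    have hmid := hs p hp q hq
    rcases N.eq_zero_or_pos with rfl | hN
    · convert hmid using 1
      funext l
      have := h l
      simp only [Pi.inf_apply]
      omega
    · have hp' := ih p _ hp hmid fun l => by have := h l; omega
      have hq' := ih q _ hq hmid fun l => by have := h l; omega
      convert ih _ _ hp' hq' fun l => by have := h l; simp only [Pi.inf_apply]; omega using 1
      funext l
      simp only [Pi.inf_apply]
      omega

theorem sup_mem_of_ceil_midpoint_mem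
    (hs : ∀ p ∈ s, ∀ q ∈ s, (fun l => (p l + q l + 1) / 2) ∈ s) (hp : p ∈ s) (hq : q ∈ s) :
    p ⊔ q ∈ s := by
  have hneg : -p ⊓ -q ∈ -s := by
    refine inf_mem_of_floor_midpoint_mem (fun p hp q hq => ?_) (by simpa) (by simpa)
    have hmid : (-fun l => (p l + q l) / 2) = fun l => ((-p) l + (-q) l + 1) / 2 := by
      funext l
      simp only [Pi.neg_apply]
      omega
    rw [Set.mem_neg, hmid]
    exact hs _ hp _ hq
  simpa [neg_inf] using hneg

end Midpoint

section Plane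

lemma xiv_injective : Function.Injective xiv := by
  have : Real.sqrt 3 / 2 ≠ -(Real.sqrt 3 / 2) := by
    have : (0 : ℝ) < Real.sqrt 3 := by positivity
    linarith
  intro i j h
  fin_cases i <;> fin_cases j <;> simp [xiv, Prod.ext_iff] at h ⊢ <;> grind

lemma sum_xiv : ∑ l, xiv l = 0 := by
  rw [Fin.sum_univ_three]
  ext <;> simp [xiv]
  norm_num

/-- The linear functional on the plane whose value at each `xiv l` is `P l`, provided the
coefficients `P` add up to zero. -/
def slopeFunctional (P : Fin 3 → ℝ) : Pt →ₗ[ℝ] ℝ :=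
  P 0 • LinearMap.fst ℝ ℝ ℝ + ((P 1 - P 2) / Real.sqrt 3) • LinearMap.snd ℝ ℝ ℝ

lemma slopeFunctional_xiv {P : Fin 3 → ℝ} (hP : ∑ l, P l = 0) (l : Fin 3) :
    slopeFunctional P (xiv l) = P l := by
  have : Real.sqrt 3 ≠ 0 := by positivity
  rw [Fin.sum_univ_three] at hP
  fin_cases l <;> simp [slopeFunctional, xiv] <;> field_simp <;> linarith

/-- The point of the plane with homogeneous real coordinates `x` relative to the origin `b`. -/
def realPoint (b : Pt) (x : Fin 3 → ℝ) : Pt := b + ∑ l, x l • xiv l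

/-- The point of the plane which the lattice point `p` stands for, relative to the origin `b`. -/
def latticePoint (b : Pt) (p : TriLattice) : Pt := realPoint b fun l => p l

variable {b : Pt} {P : Fin 3 → ℝ}

lemma slopeFunctional_realPoint (hP : ∑ l, P l = 0) (x : Fin 3 → ℝ) :
    slopeFunctional P (realPoint b x) = slopeFunctional P b + ∑ l, P l * x l := by
  simp [realPoint, slopeFunctional_xiv hP, mul_comm]

lemma slopeFunctional_latticePoint (hP : ∑ l, P l = 0) (p : TriLattice) :
    slopeFunctional P (latticePoint b p) = slopeFunctional P b + pairing P p :=
  slopeFunctional_realPoint hP _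

lemma exists_linearMap_realPoint_eq_sub (i j : Fin 3) :
    ∃ L : Pt →ₗ[ℝ] ℝ, ∀ b x, L (realPoint b x) = L b + (x i - x j) := by
  refine ⟨slopeFunctional (Pi.single i 1 - Pi.single j 1), fun b x => ?_⟩
  rw [slopeFunctional_realPoint (by simp)]
  simp [sub_mul, Pi.single_apply]

lemma latticePoint_add_unit (b : Pt) (p : TriLattice) (i : Fin 3) :
    latticePoint b (p + unit i) = latticePoint b p + xiv i := by
  simp [latticePoint, realPoint, unit, add_smul, Finset.sum_add_distrib, add_assoc]

lemma latticePoint_add_diag (b : Pt) (p : TriLattice) (n : ℤ) :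
    latticePoint b (p + diag n) = latticePoint b p := by
  simp [latticePoint, realPoint, diag, add_smul, Finset.sum_add_distrib, ← Finset.smul_sum,
    sum_xiv]

lemma eq_add_diag_of_latticePoint_eq {p q : TriLattice}
    (h : latticePoint b p = latticePoint b q) : q = p + diag (q 2 - p 2) := by
  funext l
  obtain ⟨L, hL⟩ := exists_linearMap_realPoint_eq_sub l 2
  have hsub := congrArg L h
  rw [latticePoint, latticePoint, hL, hL, add_right_inj] at hsub
  have : p l - p 2 = q l - q 2 := by exact_mod_cast hsub
  rw [Pi.add_apply, diag_apply]
  omega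

lemma latticePoint_add_unit_add_unit_add_unit (b : Pt) (p : TriLattice) {i j k : Fin 3}
    (hij : i ≠ j) (hik : i ≠ k) (hjk : j ≠ k) :
    latticePoint b (p + unit i + unit j + unit k) = latticePoint b p := by
  rw [add_assoc, add_assoc, ← add_assoc (unit i), unit_add_unit_add_unit hij hik hjk,
    latticePoint_add_diag]

end Plane

end TriLattice

/-- The direction of the second edge of a little triangle. -/
def GridTriangle.secondDir (T : GridTriangle) : Fin 3 := if T.up then 1 else 2

/-- The three corners of a little triangle. -/
def GridTriangle.vertices (T : GridTriangle) : Set Pt := {T.v0, T.v1, T.v2}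

namespace GridTriangle

variable {T : GridTriangle} {e e' : Ed}

lemma zero_ne_secondDir (T : GridTriangle) : 0 ≠ T.secondDir := by
  unfold secondDir
  split <;> decide

lemma v2_eq (T : GridTriangle) : T.v2 = T.v1 + xiv T.secondDir := by
  unfold v2 secondDir
  split <;> rfl

lemma vertices_subset_region (T : GridTriangle) : T.vertices ⊆ T.region := subset_convexHull _ _

lemma mem_edgeFinset : e ∈ T.edgeFinset ↔ e = T.e0 ∨ e = T.e1 ∨ e = T.e2 := by
  simp [edgeFinset]

end GridTriangle

namespace TriLattice

section GridTriangle

variable {b : Pt} {T : GridTriangle} {r p u : TriLattice} {x : Fin 3 → ℝ} {i j k : Fin 3}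

lemma exists_dirs (T : GridTriangle) : ∃ k, 0 ≠ k ∧ T.secondDir ≠ k :=
  exists_third T.zero_ne_secondDir

/-- Says that `p` arises from `x` by rounding; this holds if all coordinates are rounded down, or
if all are rounded up. -/
def IsRounding (p : TriLattice) (x : Fin 3 → ℝ) : Prop :=
  ∀ l m, (p l : ℝ) - p m < x l - x m + 1

section Aligned

variable (hr : T.base = latticePoint b r)
include hr

lemma v0_eq_latticePoint : T.v0 = latticePoint b r := hr

lemma v1_eq_latticePoint : T.v1 = latticePoint b (r + unit 0) := by
  rw [latticePoint_add_unit, ← hr, GridTriangle.v1]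

lemma v2_eq_latticePoint : T.v2 = latticePoint b (r + unit 0 + unit T.secondDir) := by
  rw [latticePoint_add_unit, ← v1_eq_latticePoint hr, T.v2_eq]

lemma e0_eq_latticePoint : T.e0 = (latticePoint b r, latticePoint b (r + unit 0)) :=
  Prod.ext (v0_eq_latticePoint hr) (v1_eq_latticePoint hr)

lemma e1_eq_latticePoint : T.e1 =
    (latticePoint b (r + unit 0), latticePoint b (r + unit 0 + unit T.secondDir)) :=
  Prod.ext (v1_eq_latticePoint hr) (v2_eq_latticePoint hr)

lemma vertices_eq : T.vertices = {latticePoint b r, latticePoint b (r + unit 0),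
    latticePoint b (r + unit 0 + unit T.secondDir)} := by
  rw [GridTriangle.vertices, v0_eq_latticePoint hr, v1_eq_latticePoint hr, v2_eq_latticePoint hr]

lemma sub_le_of_isRounding (hx : realPoint b x ∈ T.region) (hp : IsRounding p x) {l m : Fin 3}
    {c : ℤ} (h₀ : r l - r m ≤ c) (h₁ : r l + unit 0 l - (r m + unit 0 m) ≤ c)
    (h₂ : r l + unit 0 l + unit T.secondDir l - (r m + unit 0 m + unit T.secondDir m) ≤ c) :
    p l - p m ≤ c := by
  obtain ⟨L, hL⟩ := exists_linearMap_realPoint_eq_sub l m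
  have hregion : T.region ⊆ {z | L z ≤ L b + c} := by
    refine convexHull_min ?_ (convex_halfSpace_le L.isLinear _)
    change T.vertices ⊆ _
    rw [vertices_eq hr]
    rintro _ (rfl | rfl | rfl) <;> rw [Set.mem_ofPred_eq, latticePoint, hL] <;>
      exact add_le_add_right (by exact_mod_cast ‹_›) _
  have hx := hregion hx
  rw [Set.mem_ofPred_eq, hL, add_le_add_iff_left] at hx
  have : ((p l - p m : ℤ) : ℝ) < (c + 1 : ℤ) := by
    push_cast
    linarith [hp l m]
  exact Int.lt_add_one_iff.1 (by exact_mod_cast this)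

theorem mem_vertices_of_isRounding (hx : realPoint b x ∈ T.region) (hp : IsRounding p x) :
    latticePoint b p ∈ T.vertices := by
  obtain ⟨k, hk, hjk⟩ := exists_dirs T
  have hj := T.zero_ne_secondDir
  obtain ⟨e₁, e₂, e₃, e₄, e₅, e₆⟩ := unit_values hj hk hjk
  have hkj : p k - p T.secondDir ≤ r k - r T.secondDir := by
    apply sub_le_of_isRounding hr hx hp <;> omega
  have hj0 : p T.secondDir - p 0 ≤ r T.secondDir - r 0 := by
    apply sub_le_of_isRounding hr hx hp <;> omega
  have h0k : p 0 - p k ≤ r 0 - r k + 1 := by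
    apply sub_le_of_isRounding hr hx hp <;> omega
  have hcases : p = r + diag (p k - r k) ∨ p = r + unit 0 + diag (p k - r k) ∨
      p = r + unit 0 + unit T.secondDir + diag (p k - r k) := by
    simp only [ext_iff hj hk hjk, Pi.add_apply, diag_apply]
    omega
  rw [vertices_eq hr]
  rcases hcases with h | h | h <;> rw [h, latticePoint_add_diag] <;> simp

lemma exists_latticePoint_edge_eq {e : Ed} (he : e ∈ T.edgeFinset) :
    ∃ u k, latticePoint b u ∈ T.vertices ∧ latticePoint b (u + unit k) ∈ T.vertices ∧
      e = (latticePoint b u, latticePoint b (u + unit k)) := by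
  obtain ⟨k, hk, hjk⟩ := exists_dirs T
  have hclosed := latticePoint_add_unit_add_unit_add_unit b r T.zero_ne_secondDir hk hjk
  have h₀ := v0_eq_latticePoint hr
  have h₁ := v1_eq_latticePoint hr
  have h₂ := v2_eq_latticePoint hr
  rcases GridTriangle.mem_edgeFinset.1 he with rfl | rfl | rfl
  · exact ⟨r, 0, by simp [GridTriangle.vertices, ← h₀], by simp [GridTriangle.vertices, ← h₁],
      by rw [← h₀, ← h₁, GridTriangle.e0]⟩
  · exact ⟨r + unit 0, T.secondDir, by simp [GridTriangle.vertices, ← h₁],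
      by simp [GridTriangle.vertices, ← h₂], by rw [← h₁, ← h₂, GridTriangle.e1]⟩
  · exact ⟨r + unit 0 + unit T.secondDir, k, by simp [GridTriangle.vertices, ← h₂],
      by simp [GridTriangle.vertices, hclosed, ← h₀],
      by rw [hclosed, ← h₀, ← h₂, GridTriangle.e2]⟩

end Aligned

end GridTriangle

section EdgeDirections

variable {T : GridTriangle} {e e' : Ed} {v : Pt} {i k : Fin 3}

lemma xiv_add_xiv_ne_zero (i j : Fin 3) : xiv i + xiv j ≠ 0 := by
  have : Real.sqrt 3 ≠ 0 := by positivity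
  fin_cases i <;> fin_cases j <;> simp [xiv, Prod.ext_iff]

lemma xiv_ne_zero (i : Fin 3) : xiv i ≠ 0 := fun h => xiv_add_xiv_ne_zero i i (by simp [h])

lemma v0_eq_v2_add_xiv (hk : 0 ≠ k) (hjk : T.secondDir ≠ k) : T.v0 = T.v2 + xiv k := by
  have hsum := sum_eq T.zero_ne_secondDir hk hjk xiv
  rw [sum_xiv] at hsum
  rw [T.v2_eq, GridTriangle.v1, GridTriangle.v0, add_assoc, add_assoc, ← add_assoc (xiv 0),
    ← hsum, add_zero]

lemma mem_edgeFinset_of_mem_vertices (hv : v ∈ T.vertices) (hv' : v + xiv i ∈ T.vertices) :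
    (v, v + xiv i) ∈ T.edgeFinset := by
  obtain ⟨k, hk, hjk⟩ := exists_dirs T
  have h₁ : T.v1 = T.v0 + xiv 0 := rfl
  have h₂ := T.v2_eq
  have h₀ := v0_eq_v2_add_xiv hk hjk
  have hi := xiv_ne_zero i
  have hback : ∀ v m, v + xiv m + xiv i ≠ v := fun v m h =>
    xiv_add_xiv_ne_zero m i (by rwa [add_assoc, add_eq_left] at h)
  rw [GridTriangle.mem_edgeFinset, GridTriangle.e0, GridTriangle.e1, GridTriangle.e2]
  rcases hv with rfl | rfl | rfl <;> rcases hv' with h | h | h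
  · exact absurd (add_eq_left.1 h) hi
  · exact Or.inl (by rw [h])
  · exact absurd (by rwa [← h₀]) (hback T.v2 k)
  · exact absurd (by rwa [← h₁]) (hback T.v0 0)
  · exact absurd (add_eq_left.1 h) hi
  · exact Or.inr (Or.inl (by rw [h]))
  · exact Or.inr (Or.inr (by rw [h]))
  · exact absurd (by rwa [← h₂]) (hback T.v1 T.secondDir)
  · exact absurd (add_eq_left.1 h) hi

lemma eq_of_mem_edgeFinset (he : e ∈ T.edgeFinset) (he' : e' ∈ T.edgeFinset) (h : e.1 = e'.1) :
    e = e' := by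
  obtain ⟨k, hk, hjk⟩ := exists_dirs T
  have h₀₁ : T.v1 ≠ T.v0 := by simp [GridTriangle.v1, GridTriangle.v0, xiv_ne_zero]
  have h₁₂ : T.v2 ≠ T.v1 := by simp [T.v2_eq, xiv_ne_zero]
  have h₂₀ : T.v0 ≠ T.v2 := by simp [v0_eq_v2_add_xiv hk hjk, xiv_ne_zero]
  rw [GridTriangle.mem_edgeFinset] at he he'
  rcases he with rfl | rfl | rfl <;> rcases he' with rfl | rfl | rfl <;>
    simp_all [GridTriangle.e0, GridTriangle.e1, GridTriangle.e2]

end EdgeDirections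

/-- The lattice coordinates, relative to the origin `b`, of the vertices of a grid. -/
def gridVertices (G : ConvexGrid) (b : Pt) : Set TriLattice :=
  {p | ∃ T ∈ G.tris, latticePoint b p ∈ T.vertices}

/-- All little triangles have lattice points relative to the origin `b` as their corners. -/
def IsAligned (G : ConvexGrid) (b : Pt) : Prop := ∀ T ∈ G.tris, ∃ r, T.base = latticePoint b r

lemma exists_isAligned (G : ConvexGrid) : ∃ b, IsAligned G b := by
  obtain ⟨T₀, hT₀⟩ := G.nonempty
  refine ⟨T₀.base, fun T hT => ?_⟩
  obtain ⟨m, n, h⟩ := G.aligned T hT T₀ hT₀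
  refine ⟨![m, n, 0], ?_⟩
  rw [eq_add_of_sub_eq' h]
  simp [latticePoint, realPoint, Fin.sum_univ_three]

section Grid

variable {G : ConvexGrid} {b : Pt} {T : GridTriangle} {p q u : TriLattice} {x : Fin 3 → ℝ}
  {i j k : Fin 3}

lemma region_subset (hT : T ∈ G.tris) : T.region ⊆ G.region := Set.subset_biUnion_of_mem hT

lemma latticePoint_mem_region (hp : p ∈ gridVertices G b) : latticePoint b p ∈ G.region := by
  obtain ⟨T, hT, h⟩ := hp
  exact region_subset hT (T.vertices_subset_region h)

lemma isTriangle_gridVertices (hT : T ∈ G.tris) (hr : T.base = latticePoint b u) :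
    IsTriangle (gridVertices G b) u 0 T.secondDir := by
  have hverts := vertices_eq hr
  exact ⟨T.zero_ne_secondDir, ⟨T, hT, by simp [hverts]⟩, ⟨T, hT, by simp [hverts]⟩,
    ⟨T, hT, by simp [hverts]⟩⟩

variable (ha : IsAligned G b)
include ha

lemma exists_forall_isRounding (hx : realPoint b x ∈ G.region) :
    ∃ T ∈ G.tris, ∀ p, IsRounding p x → latticePoint b p ∈ T.vertices := by
  obtain ⟨T, hT, h⟩ := Set.mem_iUnion₂.1 hx
  obtain ⟨r, hr⟩ := ha T hT
  exact ⟨T, hT, fun p => mem_vertices_of_isRounding hr h⟩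

lemma mem_gridVertices_of_isRounding_midpoint {m : TriLattice} (hp : p ∈ gridVertices G b)
    (hq : q ∈ gridVertices G b) (hm : IsRounding m fun l => ((p l : ℝ) + q l) / 2) :
    m ∈ gridVertices G b := by
  have hmid : realPoint b (fun l => ((p l : ℝ) + q l) / 2) =
      (1 / 2 : ℝ) • latticePoint b p + (1 / 2 : ℝ) • latticePoint b q := by
    simp only [latticePoint, realPoint, Fin.sum_univ_three]
    module
  have hmem := G.convex (latticePoint_mem_region hp) (latticePoint_mem_region hq)
    one_half_pos.le one_half_pos.le (add_halves 1)
  rw [← hmid] at hmem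
  obtain ⟨T, hT, h⟩ := exists_forall_isRounding ha hmem
  exact ⟨T, hT, h m hm⟩

theorem isTriRegion_gridVertices : IsTriRegion (gridVertices G b) where
  add_diag_mem p n := fun ⟨T, hT, h⟩ => ⟨T, hT, by rwa [latticePoint_add_diag]⟩
  inf_mem _ _ := inf_mem_of_floor_midpoint_mem fun p hp q hq =>
    mem_gridVertices_of_isRounding_midpoint ha hp hq fun l m => by
      have : (p l + q l) / 2 * 2 - (p m + q m) / 2 * 2 < p l + q l - (p m + q m) + 2 := by omega
      have : ((p l + q l) / 2 : ℤ) * 2 - ((p m + q m) / 2 : ℤ) * 2 <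
        (p l : ℝ) + q l - (p m + q m) + 2 := by exact_mod_cast this
      linarith
  sup_mem _ _ := sup_mem_of_ceil_midpoint_mem fun p hp q hq =>
    mem_gridVertices_of_isRounding_midpoint ha hp hq fun l m => by
      have : (p l + q l + 1) / 2 * 2 - (p m + q m + 1) / 2 * 2 < p l + q l - (p m + q m) + 2 := by
        omega
      have : ((p l + q l + 1) / 2 : ℤ) * 2 - ((p m + q m + 1) / 2 : ℤ) * 2 <
        (p l : ℝ) + q l - (p m + q m) + 2 := by exact_mod_cast this
      linarith
  exists_triangle := by
    obtain ⟨T, hT⟩ := G.nonempty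
    obtain ⟨r, hr⟩ := ha T hT
    exact ⟨r, 0, T.secondDir, isTriangle_gridVertices hT hr⟩
  finite_slice := by
    have hfin : (⋃ T ∈ G.tris, T.vertices).Finite :=
      G.tris.finite_toSet.biUnion fun T _ => Set.toFinite {T.v0, T.v1, T.v2}
    refine Set.Finite.of_injOn (f := latticePoint b) ?_ ?_ hfin
    · rintro p ⟨⟨T, hT, h⟩, -⟩
      exact Set.mem_biUnion hT h
    · rintro p ⟨-, hp⟩ q ⟨-, hq⟩ h
      rw [eq_add_diag_of_latticePoint_eq h, hp, hq, sub_zero, diag_zero, add_zero]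

theorem IsTriangle.exists_gridTriangle (h : IsTriangle (gridVertices G b) u i j) :
    ∃ T ∈ G.tris, latticePoint b u ∈ T.vertices ∧ latticePoint b (u + unit i) ∈ T.vertices ∧
      latticePoint b (u + unit i + unit j) ∈ T.vertices := by
  let x : Fin 3 → ℝ := fun l => (u l : ℝ) + 2 / 3 * (unit i l : ℝ) + 1 / 3 * (unit j l : ℝ)
  have hx : realPoint b x = (2 / 3 : ℝ) • ((1 / 2 : ℝ) • latticePoint b u +
      (1 / 2 : ℝ) • latticePoint b (u + unit i)) +
      (1 / 3 : ℝ) • latticePoint b (u + unit i + unit j) := by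
    simp only [x, latticePoint, realPoint, Fin.sum_univ_three, Pi.add_apply, Int.cast_add]
    module
  have hmem : realPoint b x ∈ G.region := by
    rw [hx]
    exact G.convex (G.convex (latticePoint_mem_region h.base_mem)
      (latticePoint_mem_region h.mid_mem) one_half_pos.le one_half_pos.le (add_halves 1))
      (latticePoint_mem_region h.top_mem) (by norm_num) (by norm_num) (by norm_num)
  obtain ⟨T, hT, hround⟩ := exists_forall_isRounding ha hmem
  refine ⟨T, hT, hround _ ?_, hround _ ?_, hround _ ?_⟩
  all_goals
    intro l m
    have := h.ne
    simp only [x, Pi.add_apply, unit]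
    split_ifs <;> first | omega | (push_cast; linarith)

end Grid

section Grid

variable {G : ConvexGrid} {b : Pt} {T : GridTriangle} {f : TriLattice → ℝ} {g : Pt → ℝ}
  {u : TriLattice} {k : Fin 3} {e : Ed}

variable (ha : IsAligned G b)
include ha

lemma exists_gridVertices_edge_eq (he : e ∈ G.edges) : ∃ u k, u ∈ gridVertices G b ∧
    u + unit k ∈ gridVertices G b ∧ e = (latticePoint b u, latticePoint b (u + unit k)) := by
  obtain ⟨T, hT, he⟩ := Finset.mem_biUnion.1 he
  obtain ⟨r, hr⟩ := ha T hT
  obtain ⟨u, k, hu, hk, rfl⟩ := exists_latticePoint_edge_eq hr he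
  exact ⟨u, k, ⟨T, hT, hu⟩, ⟨T, hT, hk⟩, rfl⟩

lemma isBoundaryEdge_of_mem_boundary (hu : u ∈ gridVertices G b)
    (hk : u + unit k ∈ gridVertices G b)
    (he : (latticePoint b u, latticePoint b (u + unit k)) ∈ G.boundary) :
    IsBoundaryEdge (gridVertices G b) u k := by
  refine ⟨hu, hk, ?_⟩
  by_contra! hmem
  have exists_triangle : ∀ i, i ≠ k → ∃ T ∈ G.tris,
      (latticePoint b u, latticePoint b (u + unit k)) ∈ T.edgeFinset ∧
      (latticePoint b (u + unit k), latticePoint b (u + unit k) + xiv i) ∈ T.edgeFinset := by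
    intro i hik
    have htri : IsTriangle (gridVertices G b) u k i := ⟨hik.symm, hu, hk, hmem i hik⟩
    obtain ⟨T, hT, h₀, h₁, h₂⟩ := htri.exists_gridTriangle ha
    rw [latticePoint_add_unit] at h₁ h₂ ⊢
    rw [latticePoint_add_unit] at h₂
    exact ⟨T, hT, mem_edgeFinset_of_mem_vertices h₀ h₁, mem_edgeFinset_of_mem_vertices h₁ h₂⟩
  obtain ⟨i, hik⟩ : ∃ i, i ≠ k := exists_ne k
  obtain ⟨j, hij, hkj⟩ := exists_third hik
  obtain ⟨T, hT, hTe, hTi⟩ := exists_triangle i hik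
  obtain ⟨T', hT', hTe', hTj⟩ := exists_triangle j hkj.symm
  obtain rfl : T = T' := Finset.card_le_one.1 (Finset.mem_filter.1 he).2.le T
    (Finset.mem_filter.2 ⟨hT, hTe⟩) T' (Finset.mem_filter.2 ⟨hT', hTe'⟩)
  have := congrArg Prod.snd (eq_of_mem_edgeFinset hTi hTj rfl)
  exact hij (xiv_injective (add_left_cancel this))

theorem rhombusConcave_of_concaveOn (hg : ConcaveOn ℝ G.region g)
    (haff : ∀ T ∈ G.tris, AffineOn g T.region) :
    RhombusConcave (gridVertices G b) fun p => g (latticePoint b p) := by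
  intro p i j hij h₀ hi hj htop
  obtain ⟨T, hT, hp, -, hp'⟩ :=
    (⟨hij, h₀, hi, htop⟩ : IsTriangle (gridVertices G b) p i j).exists_gridTriangle ha
  obtain ⟨φ, hφ⟩ := haff T hT
  replace hp := T.vertices_subset_region hp
  replace hp' := T.vertices_subset_region hp'
  have hmid : (1 / 2 : ℝ) • latticePoint b (p + unit i) +
      (1 / 2 : ℝ) • latticePoint b (p + unit j) =
      (1 / 2 : ℝ) • latticePoint b p + (1 / 2 : ℝ) • latticePoint b (p + unit i + unit j) := by
    simp only [latticePoint_add_unit]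
    module
  have hmem : (1 / 2 : ℝ) • latticePoint b p +
      (1 / 2 : ℝ) • latticePoint b (p + unit i + unit j) ∈ T.region :=
    convex_convexHull ℝ _ hp hp' one_half_pos.le one_half_pos.le (add_halves 1)
  have hconc := hg.2 (latticePoint_mem_region hi) (latticePoint_mem_region hj) one_half_pos.le
    one_half_pos.le (add_halves 1)
  rw [hmid, hφ _ hmem, Convex.combo_affine_apply (add_halves 1), ← hφ _ hp, ← hφ _ hp'] at hconc
  simp only [smul_eq_mul] at hconc
  linarith

theorem exists_supporting_affineMap (hf : RhombusConcave (gridVertices G b) f)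
    (hinv : DiagInvariant f) (hT : T ∈ G.tris) : ∃ φ : Pt →ᵃ[ℝ] ℝ,
      ∀ v ∈ gridVertices G b, f v ≤ φ (latticePoint b v) ∧
        (latticePoint b v ∈ T.vertices → f v = φ (latticePoint b v)) := by
  have hV := isTriRegion_gridVertices ha
  obtain ⟨r, hr⟩ := ha T hT
  have hverts := vertices_eq hr
  have htri := isTriangle_gridVertices hT hr
  have htile := htri.tile_triangleGradient hV hf hinv
  have hsum := sum_triangleGradient f r T.zero_ne_secondDir
  set P := triangleGradient f r 0 T.secondDir
  let φ : Pt →ᵃ[ℝ] ℝ := (slopeFunctional P).toAffineMap +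
    AffineMap.const ℝ Pt (f r - pairing P r - slopeFunctional P b)
  have hφ : ∀ v, φ (latticePoint b v) = f r - pairing P r + pairing P v := by
    intro v
    change slopeFunctional P (latticePoint b v) + _ = _
    rw [slopeFunctional_latticePoint hsum, AffineMap.const_apply]
    ring
  have heq : ∀ w ∈ tile (gridVertices G b) f P, ∀ v, latticePoint b v = latticePoint b w →
      f v = φ (latticePoint b v) := by
    intro w hw v hvw
    rw [hvw, hφ, sub_pairing_eq_of_mem_tile htile.base_mem hw, sub_add_cancel,
      eq_add_diag_of_latticePoint_eq hvw, hinv]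
  refine ⟨φ, fun v hv => ⟨?_, fun hvT => ?_⟩⟩
  · rw [hφ]
    linarith [htile.base_mem.2 v hv]
  · rw [hverts] at hvT
    rcases hvT with h | h | h
    exacts [heq _ htile.base_mem v h, heq _ htile.mid_mem v h, heq _ htile.top_mem v h]

end Grid

end TriLattice

lemma concaveOn_finset_inf' {ι E : Type*} [AddCommMonoid E] [Module ℝ E] {s : Finset ι}
    {S : Set E} {φ : ι → E → ℝ} (hs : s.Nonempty) (hφ : ∀ i ∈ s, ConcaveOn ℝ S (φ i)) :
    ConcaveOn ℝ S (s.inf' hs φ) :=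
  Finset.inf'_induction hs φ (fun _ h _ h' => h.inf h') hφ

lemma concaveOn_affineMap {E : Type*} [AddCommGroup E] [Module ℝ E] {S : Set E}
    (hS : Convex ℝ S) (φ : E →ᵃ[ℝ] ℝ) : ConcaveOn ℝ S φ :=
  ⟨hS, fun _ _ _ _ _ _ _ _ hab => (Convex.combo_affine_apply hab).ge⟩

namespace TriLattice

section Extension

variable {G : ConvexGrid} {b : Pt} {f : TriLattice → ℝ}

variable (ha : IsAligned G b)
include ha

lemma exists_latticePoint_eq_of_mem_vertices {T : GridTriangle} (hT : T ∈ G.tris) {y : Pt}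
    (hy : y ∈ T.vertices) : ∃ v ∈ gridVertices G b, latticePoint b v = y := by
  obtain ⟨r, hr⟩ := ha T hT
  obtain ⟨v, rfl⟩ : ∃ v, latticePoint b v = y := by
    rw [vertices_eq hr] at hy
    rcases hy with rfl | rfl | rfl <;> exact ⟨_, rfl⟩
  exact ⟨v, ⟨T, hT, hy⟩, rfl⟩

theorem exists_concave_extension (hf : RhombusConcave (gridVertices G b) f)
    (hinv : DiagInvariant f) : ∃ g : Pt → ℝ, ConcaveOn ℝ G.region g ∧
      (∀ T ∈ G.tris, AffineOn g T.region) ∧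
      ∀ v ∈ gridVertices G b, g (latticePoint b v) = f v := by
  choose! φ hφ using fun T => exists_supporting_affineMap (T := T) ha hf hinv
  have heq : ∀ T ∈ G.tris, ∀ x ∈ T.region,
      G.tris.inf' G.nonempty (fun T => ⇑(φ T)) x = φ T x := by
    intro T hT x hx
    rw [Finset.inf'_apply]
    refine le_antisymm (Finset.inf'_le _ hT) (Finset.le_inf' _ _ fun T' hT' => ?_)
    have hconv : Convex ℝ {y | φ T y ≤ φ T' y} := by
      have := (convex_Ici (𝕜 := ℝ) (0 : ℝ)).affine_preimage (φ T' - φ T)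
      simpa [Set.preimage] using this
    refine convexHull_min (fun y hy => ?_) hconv hx
    obtain ⟨v, hv, rfl⟩ := exists_latticePoint_eq_of_mem_vertices ha hT hy
    rw [Set.mem_ofPred_eq, ← (hφ T hT v hv).2 hy]
    exact (hφ T' hT' v hv).1
  refine ⟨_, concaveOn_finset_inf' G.nonempty fun T _ => concaveOn_affineMap G.convex (φ T),
    fun T hT => ⟨φ T, heq T hT⟩, ?_⟩
  rintro v ⟨T, hT, h⟩
  rw [heq T hT _ (T.vertices_subset_region h), (hφ T hT v ⟨T, hT, h⟩).2 h]

end Extension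

end TriLattice

open TriLattice in
theorem ConvexGrid.exists_integer_concave {G : ConvexGrid} {g : Pt → ℝ}
    (hg : ConcaveOn ℝ G.region g) (haff : ∀ T ∈ G.tris, AffineOn g T.region) :
    ∃ g' : Pt → ℝ, ConcaveOn ℝ G.region g' ∧ (∀ T ∈ G.tris, AffineOn g' T.region) ∧
      (∀ e ∈ G.edges, ∃ z : ℤ, g' e.2 - g' e.1 = z) ∧
      (∀ e ∈ G.boundary, (∃ z : ℤ, g e.2 - g e.1 = z) → g' e.2 - g' e.1 = g e.2 - g e.1) ∧
      ∀ T ∈ G.tris, (∀ e ∈ T.edgeFinset, ∃ z : ℤ, g e.2 - g e.1 = z) →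
        ∀ e ∈ T.edgeFinset, g' e.2 - g' e.1 = g e.2 - g e.1 := by
  obtain ⟨b, ha⟩ := exists_isAligned G
  obtain ⟨f, hf, hinv, hkeep, hinteger⟩ := exists_integral_keepsIntegral
    (isTriRegion_gridVertices ha) (rhombusConcave_of_concaveOn ha hg haff)
    (fun p n => by simp only [latticePoint_add_diag])
  obtain ⟨g', hg', haff', heq⟩ := exists_concave_extension ha hf hinv
  refine ⟨g', hg', haff', fun e he => ?_, fun e he hz => ?_, fun T hT hz => ?_⟩
  · obtain ⟨u, k, hu, hk, rfl⟩ := exists_gridVertices_edge_eq ha he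
    rw [heq _ hu, heq _ hk]
    exact hinteger u k hu hk
  · obtain ⟨u, k, hu, hk, rfl⟩ := exists_gridVertices_edge_eq ha (Finset.mem_filter.1 he).1
    rw [heq _ hu, heq _ hk]
    exact hkeep.boundary u k (isBoundaryEdge_of_mem_boundary ha hu hk he) hz
  · obtain ⟨r, hr⟩ := ha T hT
    have htri := isTriangle_gridVertices hT hr
    have he₀ := e0_eq_latticePoint hr
    have he₁ := e1_eq_latticePoint hr
    have hz₀ := hz T.e0 (GridTriangle.mem_edgeFinset.2 (.inl rfl))
    have hz₁ := hz T.e1 (GridTriangle.mem_edgeFinset.2 (.inr (.inl rfl)))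
    rw [he₀] at hz₀
    rw [he₁] at hz₁
    obtain ⟨h₀, h₁⟩ := hkeep.triangle r 0 T.secondDir htri hz₀ hz₁
    rw [← heq _ htri.base_mem, ← heq _ htri.mid_mem] at h₀
    rw [← heq _ htri.mid_mem, ← heq _ htri.top_mem] at h₁
    intro e he
    rcases GridTriangle.mem_edgeFinset.1 he with rfl | rfl | rfl
    · rwa [he₀]
    · rwa [he₁]
    · rw [GridTriangle.e2, v0_eq_latticePoint hr, v2_eq_latticePoint hr]
      linarith

/-- Let F be the union of a set B' of boundary edges and the edge
sets of a set T of little triangles, and h₀ : F → ℤ.  If C(G,h₀) is nonempty then it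
contains an integer point. -/
theorem stmt2 (G : ConvexGrid) (B' : Finset Ed) (T : Finset GridTriangle)
    (hB' : B' ⊆ G.boundary) (hT : T ⊆ G.tris)
    (F : Finset Ed) (hF : F = B' ∪ T.biUnion GridTriangle.edgeFinset)
    (h₀ : Ed → ℤ)
    (hne : (CC G (↑F) fun e => (h₀ e : ℝ)).Nonempty) :
    ∃ h ∈ CC G (↑F) fun e => (h₀ e : ℝ), ∀ e ∈ G.edges, ∃ z : ℤ, h e = (z : ℝ) := by
  obtain ⟨h, ⟨-, g, hg, haff, hh⟩, hagree⟩ := hne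
  obtain ⟨g', hg', haff', hinteger, hboundary, htriangle⟩ := G.exists_integer_concave hg haff
  have hz : ∀ e ∈ G.edges, e ∈ F → g e.2 - g e.1 = h₀ e := fun e he heF =>
    (hh e he).symm.trans (hagree e heF)
  have hzT : ∀ S ∈ T, ∀ e ∈ S.edgeFinset, g e.2 - g e.1 = h₀ e := fun S hS e he =>
    hz e (Finset.mem_biUnion.2 ⟨S, hT hS, he⟩)
      (hF ▸ Finset.mem_union_right _ (Finset.mem_biUnion.2 ⟨S, hS, he⟩))
  refine ⟨fun e => g' e.2 - g' e.1, ⟨⟨fun S _ => ?_, g', hg', haff', fun _ _ => rfl⟩,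
    fun e he => ?_⟩, hinteger⟩
  · simp only [GridTriangle.e0, GridTriangle.e1, GridTriangle.e2]
    ring
  · have heF := he
    rw [Finset.mem_coe, hF, Finset.mem_union, Finset.mem_biUnion] at heF
    rcases heF with heB | ⟨S, hS, heS⟩
    · have heq := hz e (Finset.mem_filter.1 (hB' heB)).1 he
      exact (hboundary e (hB' heB) ⟨_, heq⟩).trans heq
    · exact (htriangle S (hT hS) (fun e he => ⟨_, hzT S hS e he⟩) e heS).trans (hzT S hS e heS)

end
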